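/- arXiv:2108.06814 — 2 statements merged into one kernel-verified Lean document; each statement's English description precedes it below -/
import Mathlib

section
/- For n ≥ 10, any orientation preserving C^1 action of an arbitrary finite index subgroup Γ of Aut(F_n) on the circle cannot be faithful; that is, every group homomorphism Γ → Diff^1_+(S^1) has nontrivial kernel. -/
noncomputable section

open MeasureTheory

/-- The circle `S¹ = ℝ/ℤ`. -/
abbrev 𝕊 : Type := AddCircle (1 : ℝ)

/-- `F : ℝ → ℝ` is a lift of the circle bijection `f` witnessing that `f` is an
orientation preserving homeomorphism of the circle: `F` is a strictly increasing
homeomorphism of `ℝ` (equivalently, continuous and strictly increasing) satisfying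
`F (x + 1) = F x + 1`, and projecting to `f`. -/
def IsOPLift (f : Equiv.Perm 𝕊) (F : ℝ → ℝ) : Prop :=
  Continuous F ∧ StrictMono F ∧ (∀ x : ℝ, F (x + 1) = F x + 1) ∧
    ∀ x : ℝ, f (x : 𝕊) = (F x : 𝕊)

/-- `f` is an orientation preserving homeomorphism of the circle. -/
def IsOPHomeo (f : Equiv.Perm 𝕊) : Prop := ∃ F : ℝ → ℝ, IsOPLift f F

/-- `F` is a lift witnessing that `f` is an orientation preserving `C¹` diffeomorphism
of the circle: an orientation preserving lift which is `C¹` with nowhere vanishing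
derivative. -/
def IsC1Lift (f : Equiv.Perm 𝕊) (F : ℝ → ℝ) : Prop :=
  IsOPLift f F ∧ ContDiff ℝ 1 F ∧ ∀ x : ℝ, deriv F x ≠ 0

/-- `f` is an orientation preserving `C¹` diffeomorphism of the circle, i.e. an element
of `Diff¹₊(S¹)`. -/
def IsC1Diffeo (f : Equiv.Perm 𝕊) : Prop := ∃ F : ℝ → ℝ, IsC1Lift f F

/-- The free group of rank `n`. -/
abbrev FreeGrp (n : ℕ) : Type := FreeGroup (Fin n)

/-- The automorphism group `Aut(Fₙ)`. -/
abbrev AutF (n : ℕ) : Type := MulAut (FreeGrp n)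

/-- The subgroup `IAₙ ≤ Aut(Fₙ)` of automorphisms acting trivially on the abelianization
`Fₙ^{ab} ≅ ℤⁿ`, i.e. the kernel of the natural map `Aut(Fₙ) → Aut(ℤⁿ)`. -/
def IA (n : ℕ) : Subgroup (AutF n) where
  carrier := {e | ∀ x : FreeGrp n, Abelianization.of (e x) = Abelianization.of x}
  one_mem' := fun _ => rfl
  mul_mem' := by
    intro a b ha hb x
    have h : (a * b) x = a (b x) := rfl
    rw [h, ha (b x), hb x]
  inv_mem' := by
    intro a ha x
    have h := ha (a⁻¹ x)
    have h' : a (a⁻¹ x) = x := a.apply_symm_apply x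
    rw [h'] at h
    exact h.symm

/-
Ten letters contain two disjoint families of five, whose transvections generate two commuting
subgroups of `Aut(Fₙ)`. If two groups of lifts to the line commute, one of them has a point fixed by
all its members that have a fixed point; on that group the translation number is additive, and the
elements of `Γ` where the resulting rotation number vanishes act on the line by `C¹` diffeomorphisms
fixing that point.

The twists `i ↦ i u` of the free group generated by the transvections of one letter are conjugations
in `Aut(Fₙ)`. Averaging over a finite quotient of the free group, this forces additive functions to
be torsion on the words `v u v⁻¹`. For the rotation number it shows that the kernel is large. In the
kernel it applies to the additive functions obtained by blowing up the action at the first point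
moved by such words, as in Thurston's stability theorem: these functions would have to vanish, which
blow-ups never do.
-/

namespace CircleAction

open Filter Topology Asymptotics

/-! ### Additive functions and twists of free groups -/

section AdditiveOn

variable {G A : Type*} [Group G] [AddCommGroup A] {H : Subgroup G} {Φ : G → A}

/-- `Φ` restricts to a homomorphism from `H` to the additive group `A`. It is a function on the
whole group so that it can be evaluated without membership proofs. -/
def IsAdditiveOn (H : Subgroup G) (Φ : G → A) : Prop :=
  ∀ g ∈ H, ∀ h ∈ H, Φ (g * h) = Φ g + Φ h

namespace IsAdditiveOn

theorem map_one (hΦ : IsAdditiveOn H Φ) : Φ 1 = 0 := by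
  simpa using hΦ 1 H.one_mem 1 H.one_mem

theorem map_inv (hΦ : IsAdditiveOn H Φ) {g : G} (hg : g ∈ H) : Φ g⁻¹ = -Φ g := by
  rw [eq_neg_iff_add_eq_zero, ← hΦ _ (H.inv_mem hg) _ hg, inv_mul_cancel, hΦ.map_one]

theorem map_conj (hΦ : IsAdditiveOn H Φ) {g h : G} (hg : g ∈ H) (hh : h ∈ H) :
    Φ (g * h * g⁻¹) = Φ h := by
  rw [hΦ _ (H.mul_mem hg hh) _ (H.inv_mem hg), hΦ _ hg _ hh, hΦ.map_inv hg]
  abel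

theorem map_zpow (hΦ : IsAdditiveOn H Φ) {g : G} (hg : g ∈ H) (n : ℤ) : Φ (g ^ n) = n • Φ g := by
  let φ : H →* Multiplicative A := .mk' (fun h => .ofAdd (Φ h)) fun a b => by
    rw [← ofAdd_add, ← hΦ a a.2 b b.2, Subgroup.coe_mul]
  exact congrArg Multiplicative.toAdd (_root_.map_zpow φ ⟨g, hg⟩ n)

theorem mono {H' : Subgroup G} (hΦ : IsAdditiveOn H Φ) (h : H' ≤ H) : IsAdditiveOn H' Φ :=
  fun a ha b hb => hΦ a (h ha) b (h hb)

theorem comp_hom {G' : Type*} [Group G'] (hΦ : IsAdditiveOn H Φ) (f : G' →* G) :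
    IsAdditiveOn (H.comap f) (fun g => Φ (f g)) := fun g hg h hh => by
  simp only [map_mul, hΦ _ hg _ hh]

theorem addMonoidHom_comp {B : Type*} [AddCommGroup B] (hΦ : IsAdditiveOn H Φ) (f : A →+ B) :
    IsAdditiveOn H (fun g => f (Φ g)) := fun g hg h hh => by
  simp only [hΦ _ hg _ hh, map_add]

/-- The kernel of the restriction of `Φ` to `H`. -/
def ker (hΦ : IsAdditiveOn H Φ) : Subgroup G where
  carrier := {g | g ∈ H ∧ Φ g = 0}
  one_mem' := ⟨H.one_mem, hΦ.map_one⟩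
  mul_mem' := fun ⟨ha, ha0⟩ ⟨hb, hb0⟩ =>
    ⟨H.mul_mem ha hb, by rw [hΦ _ ha _ hb, ha0, hb0, add_zero]⟩
  inv_mem' := fun ⟨ha, ha0⟩ => ⟨H.inv_mem ha, by rw [hΦ.map_inv ha, ha0, neg_zero]⟩

end IsAdditiveOn

end AdditiveOn

theorem eq_zero_of_eq_sub_comp_perm {X : Type*} [Finite X] (σ τ : Equiv.Perm X) {f g h : X → ℝ}
    (hf : ∀ x, h x = f x - f (σ x)) (hg : ∀ x, h x = g x - g (τ x)) (hfτ : ∀ x, f (τ x) = f x) :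
    h = 0 := by
  cases nonempty_fintype X
  have sum_mul : ∑ x, f x * h x = 0 := by
    have reindex : ∑ x, f x * g (τ x) = ∑ x, f x * g x := by
      rw [← Equiv.sum_comp τ fun x => f x * g x]
      simp only [hfτ]
    simp only [hg, mul_sub, Finset.sum_sub_distrib, reindex, sub_self]
  have sum_sq : ∑ x, h x ^ 2 = 0 := by
    have reindex : ∑ x, f (σ x) ^ 2 = ∑ x, f x ^ 2 := Equiv.sum_comp σ fun x => f x ^ 2
    have expand : ∀ x, h x ^ 2 = 2 * (f x * h x) - f x ^ 2 + f (σ x) ^ 2 := fun x => by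
      rw [hf]; ring
    simp only [expand, Finset.sum_add_distrib, Finset.sum_sub_distrib, ← Finset.mul_sum, sum_mul,
      reindex]
    ring
  funext x
  rw [Fintype.sum_eq_zero_iff_of_nonneg fun x => sq_nonneg (h x)] at sum_sq
  exact pow_eq_zero_iff two_ne_zero |>.1 (congrFun sum_sq x)

section FreeGroups

variable {α ι : Type*}

theorem freeGroup_induction_right_iff {P : FreeGroup ι → Prop} (one : P 1)
    (mul_of : ∀ z i, P z ↔ P (z * .of i)) (z : FreeGroup ι) : P z := by
  have hz : z ∈ Subgroup.closure (Set.range (FreeGroup.of : ι → FreeGroup ι)) := by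
    rw [FreeGroup.closure_range_of]; trivial
  induction hz using Subgroup.closure_induction_right with
  | one => exact one
  | mul_right x _ y hy ih =>
    obtain ⟨i, rfl⟩ := hy
    exact (mul_of x i).1 ih
  | mul_inv_cancel x _ y hy ih =>
    obtain ⟨i, rfl⟩ := hy
    exact (mul_of _ i).2 (by rwa [inv_mul_cancel_right])

/-- On the Cayley tree of the free group, `N i` is a potential whose increment along the edges
labelled `i` is `h` and along the other edges zero. -/
theorem eq_zero_of_forall_increment [DecidableEq ι] [Nontrivial ι] (K : Subgroup (FreeGroup ι))
    [K.FiniteIndex] {N : ι → FreeGroup ι → ℝ} {h : FreeGroup ι → ℝ}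
    (step : ∀ i k z, N i (z * .of k) = N i z + if k = i then h (z * .of k) else 0)
    (hK : ∀ i, ∀ κ ∈ K, ∀ z, N i (κ * z) = N i z) (z : FreeGroup ι) : h z = 0 := by
  obtain ⟨b, c, hbc⟩ := exists_pair_ne ι
  let M (i : ι) : FreeGroup ι ⧸ K → ℝ := Quotient.lift (fun g => N i g⁻¹) fun g g' hgg' => by
    have hmem : g'⁻¹ * g ∈ K := by
      simpa using K.inv_mem (QuotientGroup.leftRel_apply.1 hgg')
    simpa [mul_assoc] using (hK i _ hmem g⁻¹).symm
  have step_inv (i k) (g : FreeGroup ι) :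
      N i g⁻¹ = N i (FreeGroup.of k * g)⁻¹ + if k = i then h g⁻¹ else 0 := by
    simpa using step i k (FreeGroup.of k * g)⁻¹
  have diff (x : FreeGroup ι ⧸ K) :
      M c x - M c (FreeGroup.of c • x) = M b x - M b (FreeGroup.of b • x) := by
    induction x using QuotientGroup.induction_on with
    | H g =>
      have hb := step_inv b b g
      have hc := step_inv c c g
      simp only [if_true] at hb hc
      change N c g⁻¹ - N c (FreeGroup.of c * g)⁻¹ = N b g⁻¹ - N b (FreeGroup.of b * g)⁻¹
      linarith
  have invariant (x : FreeGroup ι ⧸ K) : M c (FreeGroup.of b • x) = M c x := by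
    induction x using QuotientGroup.induction_on with
    | H g =>
      change N c (FreeGroup.of b * g)⁻¹ = N c g⁻¹
      rw [step_inv c b g, if_neg hbc, add_zero]
  have key := eq_zero_of_eq_sub_comp_perm (MulAction.toPerm (FreeGroup.of c))
    (MulAction.toPerm (FreeGroup.of b)) (fun _ => rfl) diff invariant
  have hz := step_inv c c z⁻¹
  have := congrFun key (z⁻¹ : FreeGroup ι)
  simp only [if_true, inv_inv] at hz
  change N c z⁻¹⁻¹ - N c (FreeGroup.of c * z⁻¹)⁻¹ = 0 at this
  rw [inv_inv] at this
  linarith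

/-- The inclusion of the words in the letters `α` into the free group on `α ⊕ ι`. -/
def inlHom : FreeGroup α →* FreeGroup (α ⊕ ι) := FreeGroup.map Sum.inl

/-- The inclusion of the words in the letters `ι` into the free group on `α ⊕ ι`. -/
def inrHom : FreeGroup ι →* FreeGroup (α ⊕ ι) := FreeGroup.map Sum.inr

@[simp] theorem inlHom_of (a : α) : inlHom (ι := ι) (.of a) = .of (.inl a) := by simp [inlHom]

@[simp] theorem inrHom_of (i : ι) : inrHom (α := α) (.of i) = .of (.inr i) := by simp [inrHom]

/-- The hom `u ↦ v u v⁻¹`, where `u` is a word in the letters `α` and `v` in the letters `ι`. -/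
def conjInl (v : FreeGroup ι) : FreeGroup α →* FreeGroup (α ⊕ ι) :=
  (MulAut.conj (inrHom v)).toMonoidHom.comp inlHom

theorem conjInl_apply (v : FreeGroup ι) (u : FreeGroup α) :
    conjInl v u = inrHom v * inlHom u * (inrHom v)⁻¹ := rfl

@[simp] theorem conjInl_one (u : FreeGroup α) : conjInl (1 : FreeGroup ι) u = inlHom u := by
  simp [conjInl_apply]

theorem conjInl_mul (κ v : FreeGroup ι) (u : FreeGroup α) :
    conjInl (κ * v) u = inrHom κ * conjInl v u * (inrHom κ)⁻¹ := by
  simp only [conjInl_apply, map_mul]; group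

variable [DecidableEq ι]

/-- The endomorphism `i ↦ i u` of the free group on `α ⊕ ι`, for `i : ι` and `u` a word in the
letters `α`; it fixes all the letters other than `i`. -/
def twist (i : ι) (u : FreeGroup α) : FreeGroup (α ⊕ ι) →* FreeGroup (α ⊕ ι) :=
  FreeGroup.lift <| Sum.elim (fun a => .of (.inl a))
    fun k => .of (.inr k) * if k = i then inlHom u else 1

@[simp] theorem twist_inlHom (i : ι) (u u' : FreeGroup α) :
    twist i u (inlHom u') = inlHom u' := by
  have : (twist i u).comp inlHom = inlHom := by ext; simp [twist]
  exact DFunLike.congr_fun this u'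

/-- The word measuring how far the twist `i ↦ i u` moves the word `z` in the letters `ι`. -/
def twistDefect (i : ι) (u : FreeGroup α) (z : FreeGroup ι) : FreeGroup (α ⊕ ι) :=
  twist i u (inrHom z) * (inrHom z)⁻¹

theorem twist_inrHom (i : ι) (u : FreeGroup α) (z : FreeGroup ι) :
    twist i u (inrHom z) = twistDefect i u z * inrHom z := by simp [twistDefect]

@[simp] theorem twistDefect_one (i : ι) (u : FreeGroup α) : twistDefect i u 1 = 1 := by
  simp [twistDefect]

theorem twistDefect_mul (i : ι) (u : FreeGroup α) (κ z : FreeGroup ι) :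
    twistDefect i u (κ * z) =
      twistDefect i u κ * (inrHom κ * twistDefect i u z * (inrHom κ)⁻¹) := by
  simp only [twistDefect, map_mul]; group

theorem twistDefect_of (i k : ι) (u : FreeGroup α) :
    twistDefect i u (.of k) = if k = i then conjInl (.of k) u else 1 := by
  by_cases hk : k = i <;> simp [twistDefect, twist, conjInl_apply, hk]

theorem twistDefect_mul_of (i k : ι) (u : FreeGroup α) (z : FreeGroup ι) :
    twistDefect i u (z * .of k) =
      twistDefect i u z * if k = i then conjInl (z * .of k) u else 1 := by
  rw [twistDefect_mul, twistDefect_of]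
  split_ifs with hk
  · rw [conjInl_mul]
  · group

theorem twist_conjInl (i : ι) (u u' : FreeGroup α) (v : FreeGroup ι) :
    twist i u (conjInl v u') =
      twistDefect i u v * conjInl v u' * (twistDefect i u v)⁻¹ := by
  simp only [conjInl_apply, map_mul, map_inv, twist_inlHom, twist_inrHom]; group

theorem twistDefect_mem {H : Subgroup (FreeGroup (α ⊕ ι))} {u : FreeGroup α}
    (hH : ∀ v, conjInl v u ∈ H) (i : ι) (z : FreeGroup ι) : twistDefect i u z ∈ H := by
  refine freeGroup_induction_right_iff (P := fun z => twistDefect i u z ∈ H)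
    (by simp [H.one_mem]) (fun z k => ?_) z
  rw [twistDefect_mul_of, H.mul_mem_cancel_right]
  split_ifs
  exacts [hH _, H.one_mem]

section AdditiveOnWords

variable {A : Type*} [AddCommGroup A] {H : Subgroup (FreeGroup (α ⊕ ι))}
  {Φ : FreeGroup (α ⊕ ι) → A} {u : FreeGroup α}

theorem IsAdditiveOn.map_twistDefect_mul_of (hΦ : IsAdditiveOn H Φ) (hH : ∀ v, conjInl v u ∈ H)
    (i k : ι) (z : FreeGroup ι) :
    Φ (twistDefect i u (z * .of k)) =
      Φ (twistDefect i u z) + if k = i then Φ (conjInl (z * .of k) u) else 0 := by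
  rw [twistDefect_mul_of]
  split_ifs
  · rw [hΦ _ (twistDefect_mem hH i z) _ (hH _)]
  · rw [mul_one, add_zero]

theorem IsAdditiveOn.map_twistDefect_zpow (hΦ : IsAdditiveOn H Φ) (hH : ∀ v, conjInl v u ∈ H)
    (i : ι) (j : ℤ) (z : FreeGroup ι) :
    Φ (twistDefect i (u ^ j) z) = j • Φ (twistDefect i u z) := by
  have hHj : ∀ v, conjInl v (u ^ j) ∈ H := fun v => by
    rw [_root_.map_zpow]; exact H.zpow_mem (hH v) j
  refine freeGroup_induction_right_iff (P := fun z => Φ (twistDefect i (u ^ j) z) =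
    j • Φ (twistDefect i u z)) (by simp [hΦ.map_one]) (fun z k => ?_) z
  rw [hΦ.map_twistDefect_mul_of hHj, hΦ.map_twistDefect_mul_of hH, _root_.map_zpow,
    hΦ.map_zpow (hH _), smul_add, smul_ite, smul_zero, add_left_inj]

theorem IsAdditiveOn.map_conjInl_eq_zero [Nontrivial ι] {Φ : FreeGroup (α ⊕ ι) → ℝ}
    (hΦ : IsAdditiveOn H Φ) (hH : ∀ v, conjInl v u ∈ H) (K : Subgroup (FreeGroup ι))
    [K.FiniteIndex] (hK : ∀ κ ∈ K, inrHom κ ∈ H)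
    (hdefect : ∀ i, ∀ κ ∈ K, Φ (twistDefect i u κ) = 0) (v : FreeGroup ι) :
    Φ (conjInl v u) = 0 := by
  refine eq_zero_of_forall_increment K (N := fun i z => Φ (twistDefect i u z))
    (h := fun z => Φ (conjInl z u)) (hΦ.map_twistDefect_mul_of hH) (fun i κ hκ z => ?_) v
  have hz := twistDefect_mem hH i z
  rw [twistDefect_mul, hΦ _ (twistDefect_mem hH i κ) _
    (H.mul_mem (H.mul_mem (hK κ hκ) hz) (H.inv_mem (hK κ hκ))), hΦ.map_conj (hK κ hκ) hz,
    hdefect i κ hκ, zero_add]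

end AdditiveOnWords

end FreeGroups

section TwistSystems

variable {α ι G A : Type*} [Group G] [AddCommGroup A]

/-- The subgroup of the words on `α ⊕ ι` generated by the conjugates `v u v⁻¹` with `u ∈ KP` and
`v` any word in the letters `ι`, together with the words of `KQ`. -/
def wordCore (KP : Subgroup (FreeGroup α)) (KQ : Subgroup (FreeGroup ι)) :
    Subgroup (FreeGroup (α ⊕ ι)) :=
  (⨆ v, KP.map (conjInl v)) ⊔ KQ.map inrHom

theorem conjInl_mem_wordCore {KP : Subgroup (FreeGroup α)} (KQ : Subgroup (FreeGroup ι))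
    {u : FreeGroup α} (hu : u ∈ KP) (v : FreeGroup ι) : conjInl v u ∈ wordCore KP KQ :=
  Subgroup.mem_sup_left (Subgroup.mem_iSup_of_mem v (Subgroup.mem_map_of_mem _ hu))

theorem inrHom_mem_wordCore (KP : Subgroup (FreeGroup α)) {KQ : Subgroup (FreeGroup ι)}
    {κ : FreeGroup ι} (hκ : κ ∈ KQ) : inrHom κ ∈ wordCore KP KQ :=
  Subgroup.mem_sup_right (Subgroup.mem_map_of_mem _ hκ)

theorem wordCore_le {KP : Subgroup (FreeGroup α)} {KQ : Subgroup (FreeGroup ι)}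
    {H : Subgroup (FreeGroup (α ⊕ ι))} (hP : ∀ u ∈ KP, ∀ v, conjInl v u ∈ H)
    (hQ : ∀ κ ∈ KQ, inrHom κ ∈ H) : wordCore KP KQ ≤ H :=
  sup_le (iSup_le fun v => Subgroup.map_le_iff_le_comap.2 fun u hu => hP u hu v)
    (Subgroup.map_le_iff_le_comap.2 hQ)

theorem wordCore_eq_iSup_quotient (KP : Subgroup (FreeGroup α)) (KQ : Subgroup (FreeGroup ι)) :
    wordCore KP KQ = (⨆ q : FreeGroup ι ⧸ KQ, KP.map (conjInl q.out⁻¹)) ⊔ KQ.map inrHom := by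
  refine le_antisymm (wordCore_le (fun u hu v => ?_) fun κ hκ =>
    Subgroup.mem_sup_right (Subgroup.mem_map_of_mem _ hκ))
    (sup_le_sup_right (iSup_le fun q => le_iSup (fun v => KP.map (conjInl v)) _) _)
  obtain ⟨κ, hκ⟩ := QuotientGroup.mk_out_eq_mul KQ v⁻¹
  have hv : v = κ * ((v⁻¹ : FreeGroup ι) : FreeGroup ι ⧸ KQ).out⁻¹ := by rw [hκ]; group
  have hκ_mem : inrHom κ ∈ (⨆ q : FreeGroup ι ⧸ KQ, KP.map (conjInl (α := α) q.out⁻¹)) ⊔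
      KQ.map inrHom := Subgroup.mem_sup_right (Subgroup.mem_map_of_mem _ κ.2)
  rw [hv, conjInl_mul]
  exact Subgroup.mul_mem _ (Subgroup.mul_mem _ hκ_mem (Subgroup.mem_sup_left
    (Subgroup.mem_iSup_of_mem _ (Subgroup.mem_map_of_mem _ hu)))) (Subgroup.inv_mem _ hκ_mem)

theorem fg_map_of_finiteIndex {F : Type*} [Group F] [Group.FG F] (f : F →* G) (K : Subgroup F)
    [K.FiniteIndex] : (K.map f).FG := by
  rw [← K.range_subtype, MonoidHom.map_range]
  exact (Group.fg_iff_subgroup_fg _).1 inferInstance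

theorem wordCore_map_fg [Finite α] [Finite ι] (f : FreeGroup (α ⊕ ι) →* G)
    (KP : Subgroup (FreeGroup α)) (KQ : Subgroup (FreeGroup ι)) [KP.FiniteIndex]
    [KQ.FiniteIndex] : ((wordCore KP KQ).map f).FG := by
  simp only [wordCore_eq_iSup_quotient, Subgroup.map_sup, Subgroup.map_iSup, Subgroup.map_map]
  exact .sup (.iSup _ fun q => fg_map_of_finiteIndex _ KP) (fg_map_of_finiteIndex _ KQ)

variable [DecidableEq ι]

theorem twist_mem_wordCore {KP : Subgroup (FreeGroup α)} {KQ : Subgroup (FreeGroup ι)} (i : ι)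
    {u : FreeGroup α} (hu : u ∈ KP) {w : FreeGroup (α ⊕ ι)} (hw : w ∈ wordCore KP KQ) :
    twist i u w ∈ wordCore KP KQ := by
  have hdefect (v) : twistDefect i u v ∈ wordCore KP KQ :=
    twistDefect_mem (conjInl_mem_wordCore KQ hu) i v
  have hle : wordCore KP KQ ≤ (wordCore KP KQ).comap (twist i u) := by
    refine wordCore_le (fun u' hu' v => ?_) fun κ hκ => ?_
    · rw [Subgroup.mem_comap, twist_conjInl]
      exact mul_mem (mul_mem (hdefect v) (conjInl_mem_wordCore KQ hu' v)) (inv_mem (hdefect v))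
    · rw [Subgroup.mem_comap, twist_inrHom]
      exact mul_mem (hdefect κ) (inrHom_mem_wordCore KP hκ)
  exact hle hw

/-- A representation `R` of the free group on `α ⊕ ι` in `G`, together with representations `T i`
of the free group on `α` through which the twists `i ↦ i u` become inner: conjugation by `T i u`
realises `twist i u` on the image of `R`. -/
structure TwistSystem (α ι G : Type*) [DecidableEq ι] [Group G] where
  R : FreeGroup (α ⊕ ι) →* G
  T : ι → FreeGroup α →* G
  conj_R : ∀ i u w, T i u * R w * (T i u)⁻¹ = R (twist i u w)

namespace TwistSystem

variable (S : TwistSystem α ι G) (M : Subgroup G) (KP : Subgroup (FreeGroup α))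
  (KQ : Subgroup (FreeGroup ι))

/-- The system sends the words built from `KP` and `KQ` into the subgroup `M`, and so do the
representations `T i` with the words of `KP`. -/
structure MapsInto : Prop where
  T_mem : ∀ i, ∀ u ∈ KP, S.T i u ∈ M
  conj_mem : ∀ u ∈ KP, ∀ v, S.R (conjInl v u) ∈ M
  inr_mem : ∀ κ ∈ KQ, S.R (inrHom κ) ∈ M

/-- The image under `R` of the words built from `KP` and `KQ`. -/
def core : Subgroup G := (wordCore KP KQ).map S.R

variable {S M KP KQ}

theorem MapsInto.core_le (hS : S.MapsInto M KP KQ) : S.core KP KQ ≤ M :=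
  Subgroup.map_le_iff_le_comap.2 (wordCore_le hS.conj_mem hS.inr_mem)

theorem core_le (hS : ∀ u ∈ KP, ∀ v, S.R (conjInl v u) ∈ M)
    (hQ : ∀ κ ∈ KQ, S.R (inrHom κ) ∈ M) : S.core KP KQ ≤ M :=
  Subgroup.map_le_iff_le_comap.2 (wordCore_le hS hQ)

theorem R_conjInl_mem_core {u : FreeGroup α} (hu : u ∈ KP) (v : FreeGroup ι) :
    S.R (conjInl v u) ∈ S.core KP KQ :=
  Subgroup.mem_map_of_mem _ (conjInl_mem_wordCore KQ hu v)

theorem R_inrHom_mem_core {κ : FreeGroup ι} (hκ : κ ∈ KQ) : S.R (inrHom κ) ∈ S.core KP KQ :=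
  Subgroup.mem_map_of_mem _ (inrHom_mem_wordCore KP hκ)

theorem conj_T_mem_core (i : ι) {u : FreeGroup α} (hu : u ∈ KP) {g : G}
    (hg : g ∈ S.core KP KQ) : S.T i u * g * (S.T i u)⁻¹ ∈ S.core KP KQ := by
  obtain ⟨w, hw, rfl⟩ := hg
  rw [S.conj_R]
  exact Subgroup.mem_map_of_mem _ (twist_mem_wordCore i hu hw)

theorem core_fg [Finite α] [Finite ι] [KP.FiniteIndex] [KQ.FiniteIndex] : (S.core KP KQ).FG :=
  wordCore_map_fg S.R KP KQ

variable {Φ : G → ℝ} {u : FreeGroup α}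

theorem map_R_conjInl_eq_zero [Nontrivial ι] [KQ.FiniteIndex]
    (hΦ : IsAdditiveOn M Φ) (hS : S.MapsInto M KP KQ) (hu : u ∈ KP) (v : FreeGroup ι) :
    Φ (S.R (conjInl v u)) = 0 := by
  refine (hΦ.comp_hom S.R).map_conjInl_eq_zero (hS.conj_mem u hu) KQ hS.inr_mem
    (fun i κ hκ => ?_) v
  have hT := hS.T_mem i u hu
  have hκM := hS.inr_mem κ hκ
  have hconj := M.mul_mem (M.mul_mem hT hκM) (M.inv_mem hT)
  rw [twistDefect, map_mul, ← S.conj_R, map_inv, hΦ _ hconj _ (M.inv_mem hκM),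
    hΦ.map_conj hT hκM, hΦ.map_inv hκM, add_neg_cancel]

end TwistSystem

theorem exists_addMonoidHom_real_ne_zero {a : A} (ha : ¬IsOfFinAddOrder a) :
    ∃ l : A →+ ℝ, l a ≠ 0 := by
  obtain ⟨l, hl⟩ := (Module.Baer.of_divisible ℝ).extension_property_addMonoidHom
    (zmultiplesHom A a) (injective_zsmul_iff_not_isOfFinAddOrder.2 ha) (Int.castAddHom ℝ)
  refine ⟨l, ?_⟩
  have : l ((1 : ℤ) • a) = ((1 : ℤ) : ℝ) := DFunLike.congr_fun hl 1
  simp_all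

theorem TwistSystem.isOfFinAddOrder_map_R_conjInl [Nontrivial ι] {S : TwistSystem α ι G}
    {M : Subgroup G} {KP : Subgroup (FreeGroup α)} {KQ : Subgroup (FreeGroup ι)}
    [KQ.FiniteIndex] {Φ : G → A} (hΦ : IsAdditiveOn M Φ) (hS : S.MapsInto M KP KQ)
    {u : FreeGroup α} (hu : u ∈ KP) (v : FreeGroup ι) :
    IsOfFinAddOrder (Φ (S.R (conjInl v u))) := by
  by_contra hfin
  obtain ⟨l, hl⟩ := exists_addMonoidHom_real_ne_zero hfin
  exact hl (map_R_conjInl_eq_zero (hΦ.addMonoidHom_comp l) hS hu v)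

end TwistSystems

/-! ### Actions on the line near a common fixed point -/

section Displacement

variable {G : Type*} {L : G → ℝ → ℝ}

/-- The total displacement of the point `x` under the maps `L s` with `s ∈ S`. -/
def displacement (L : G → ℝ → ℝ) (S : Finset G) (x : ℝ) : ℝ := ∑ s ∈ S, |L s x - x|

theorem displacement_nonneg (L : G → ℝ → ℝ) (S : Finset G) (x : ℝ) : 0 ≤ displacement L S x :=
  Finset.sum_nonneg fun _ _ => abs_nonneg _

theorem abs_sub_le_displacement {S : Finset G} {s : G} (hs : s ∈ S) (x : ℝ) :
    |L s x - x| ≤ displacement L S x :=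
  Finset.single_le_sum (f := fun s => |L s x - x|) (fun _ _ => abs_nonneg _) hs

end Displacement

/-- The maps `L g`, for `g` in the subgroup `M`, form an action of `M` on the line by orientation
preserving `C¹` diffeomorphisms. The values of `L` outside `M` are irrelevant. -/
structure IsC1LineAction {G : Type*} [Group G] (M : Subgroup G) (L : G → ℝ → ℝ) : Prop where
  one_apply : ∀ x, L 1 x = x
  mul_apply : ∀ g ∈ M, ∀ h ∈ M, ∀ x, L (g * h) x = L g (L h x)
  strictMono : ∀ g ∈ M, StrictMono (L g)
  contDiff : ∀ g ∈ M, ContDiff ℝ 1 (L g)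
  deriv_ne_zero : ∀ g ∈ M, ∀ x, deriv (L g) x ≠ 0

section LineActions

variable {G : Type*} [Group G] {M : Subgroup G} {L : G → ℝ → ℝ} {g h : G} {q : ℝ}

namespace IsC1LineAction

theorem inv_apply_apply (hL : IsC1LineAction M L) (hg : g ∈ M) (x : ℝ) : L g⁻¹ (L g x) = x := by
  rw [← hL.mul_apply _ (M.inv_mem hg) _ hg, inv_mul_cancel, hL.one_apply]

theorem inv_apply_eq_iff (hL : IsC1LineAction M L) (hg : g ∈ M) {x y : ℝ} :
    L g⁻¹ x = y ↔ x = L g y := by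
  rw [← (hL.strictMono g hg).injective.eq_iff, ← hL.mul_apply _ hg _ (M.inv_mem hg),
    mul_inv_cancel, hL.one_apply]

theorem inv_apply_le_iff (hL : IsC1LineAction M L) (hg : g ∈ M) {x y : ℝ} :
    L g⁻¹ x ≤ y ↔ x ≤ L g y := by
  rw [← (hL.strictMono g hg).le_iff_le, ← hL.mul_apply _ hg _ (M.inv_mem hg),
    mul_inv_cancel, hL.one_apply]

theorem continuous (hL : IsC1LineAction M L) (hg : g ∈ M) : Continuous (L g) :=
  (hL.contDiff g hg).continuous

theorem hasStrictDerivAt (hL : IsC1LineAction M L) (hg : g ∈ M) (x : ℝ) :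
    HasStrictDerivAt (L g) (deriv (L g) x) x :=
  (hL.contDiff g hg).contDiffAt.hasStrictDerivAt one_ne_zero

theorem deriv_pos (hL : IsC1LineAction M L) (hg : g ∈ M) (x : ℝ) : 0 < deriv (L g) x :=
  (hL.strictMono g hg).monotone.deriv_nonneg.lt_of_ne (hL.deriv_ne_zero g hg x).symm

/-- The elements of the acting group that fix the point `q`. -/
def stabilizer (hL : IsC1LineAction M L) (q : ℝ) : Subgroup G where
  carrier := {g | g ∈ M ∧ L g q = q}
  one_mem' := ⟨M.one_mem, hL.one_apply q⟩
  mul_mem' := fun ⟨ha, haq⟩ ⟨hb, hbq⟩ =>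
    ⟨M.mul_mem ha hb, by rw [hL.mul_apply _ ha _ hb, hbq, haq]⟩
  inv_mem' := fun ⟨ha, haq⟩ => ⟨M.inv_mem ha, by rw [hL.inv_apply_eq_iff ha, haq]⟩

theorem lt_apply (hL : IsC1LineAction M L) (hg : g ∈ hL.stabilizer q) {x : ℝ} (hx : q < x) :
    q < L g x := by
  simpa only [hg.2] using hL.strictMono g hg.1 hx

theorem tendsto_nhds (hL : IsC1LineAction M L) (hg : g ∈ hL.stabilizer q) :
    Tendsto (L g) (𝓝 q) (𝓝 q) := by
  simpa only [hg.2] using (hL.continuous hg.1).tendsto q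

theorem tendsto_nhdsGT (hL : IsC1LineAction M L) (hg : g ∈ hL.stabilizer q) :
    Tendsto (L g) (𝓝[>] q) (𝓝[>] q) :=
  (hL.tendsto_nhds hg).inf <| tendsto_principal_principal.2 fun _ => hL.lt_apply hg

theorem isAdditiveOn_log_deriv (hL : IsC1LineAction M L) (q : ℝ) :
    IsAdditiveOn (hL.stabilizer q) fun g => Real.log (deriv (L g) q) := by
  rintro g ⟨hg, -⟩ h ⟨hh, hhq⟩
  have chain : deriv (L (g * h)) q = deriv (L g) q * deriv (L h) q := by
    have hcomp : L (g * h) = L g ∘ L h := funext (hL.mul_apply g hg h hh)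
    simpa only [hcomp, hhq] using deriv_comp q ((hL.contDiff g hg).differentiable one_ne_zero _)
      ((hL.contDiff h hh).differentiable one_ne_zero q)
  simp only [chain, Real.log_mul (hL.deriv_ne_zero g hg q) (hL.deriv_ne_zero h hh q)]

end IsC1LineAction

theorem eventually_abs_sub_sub_mul_le {f : ℝ → ℝ} {d ε : ℝ} (hf : HasStrictDerivAt f d q)
    (hε : 0 < ε) {l : Filter ℝ} {a b : ℝ → ℝ} (ha : Tendsto a l (𝓝 q)) (hb : Tendsto b l (𝓝 q)) :
    ∀ᶠ x in l, |f (a x) - f (b x) - (a x - b x) * d| ≤ ε * |a x - b x| := by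
  have hab : Tendsto (fun x => (a x, b x)) l (𝓝 (q, q)) := by
    rw [nhds_prod_eq]; exact ha.prodMk hb
  simpa [mul_comm] using hab.eventually (hf.isLittleO.def hε)

/-- Conjugation by `g` multiplies the displacement, relative to the distance to the fixed point `q`,
by a factor tending to `1`; any constant greater than `1` could replace `3 / 2`. -/
theorem IsC1LineAction.eventually_displacement_conj_le (hL : IsC1LineAction M L)
    (hg : g ∈ hL.stabilizer q) (hh : h ∈ hL.stabilizer q) :
    ∀ᶠ x in 𝓝[>] q, |L (g⁻¹ * h * g) x - x| * (L g x - q) ≤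
      3 / 2 * (|L h (L g x) - L g x| * (x - q)) := by
  have hg' := (hL.stabilizer q).inv_mem hg
  set d := deriv (L g⁻¹) q
  have hd : 0 < d := hL.deriv_pos hg'.1 q
  have hstrict := hL.hasStrictDerivAt hg'.1 q
  have tendsto_g := (hL.tendsto_nhds hg).mono_left (nhdsWithin_le_nhds (s := Set.Ioi q))
  have tendsto_hg := (hL.tendsto_nhds hh).comp tendsto_g
  filter_upwards [self_mem_nhdsWithin,
    eventually_abs_sub_sub_mul_le hstrict (by positivity : 0 < d / 5) tendsto_hg tendsto_g,
    eventually_abs_sub_sub_mul_le hstrict (by positivity : 0 < d / 5) tendsto_g tendsto_const_nhds]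
    with x hx hyz hyq
  have hy : 0 < L g x - q := sub_pos.2 (hL.lt_apply hg hx)
  rw [hL.mul_apply _ (M.mul_mem hg'.1 hh.1) _ hg.1, hL.mul_apply _ hg'.1 _ hh.1]
  simp only [Function.comp_apply, hL.inv_apply_apply hg.1] at hyz hyq
  rw [hg'.2, abs_of_pos hy] at hyq
  set Δ := L h (L g x) - L g x
  have hlower : 4 / 5 * d * (L g x - q) ≤ x - q := by linarith [(abs_le.1 hyq).1]
  have hupper : |L g⁻¹ (L h (L g x)) - x| ≤ 6 / 5 * d * |Δ| := by
    have htri := abs_add_le (L g⁻¹ (L h (L g x)) - x - Δ * d) (Δ * d)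
    rw [sub_add_cancel, abs_mul Δ d, abs_of_pos hd] at htri
    linarith
  calc |L g⁻¹ (L h (L g x)) - x| * (L g x - q)
      ≤ 6 / 5 * d * |Δ| * (L g x - q) := by gcongr
    _ = 3 / 2 * (|Δ| * (4 / 5 * d * (L g x - q))) := by ring
    _ ≤ 3 / 2 * (|Δ| * (x - q)) := by gcongr

theorem IsC1LineAction.displacement_pos (hL : IsC1LineAction M L) {S : Finset G}
    (hS : Subgroup.closure (S : Set G) ≤ M) (hh : h ∈ Subgroup.closure (S : Set G)) {x : ℝ}
    (hx : L h x ≠ x) : 0 < displacement L S x := by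
  refine (displacement_nonneg L S x).lt_of_ne fun hzero => hx ?_
  have hfix : Subgroup.closure (S : Set G) ≤ hL.stabilizer x := by
    refine (Subgroup.closure_le _).2 fun s hs => ⟨hS (Subgroup.subset_closure hs), ?_⟩
    have := hzero ▸ abs_sub_le_displacement (L := L) hs x
    exact sub_eq_zero.1 (abs_nonpos_iff.1 this)
  exact (hfix hh).2

theorem IsC1LineAction.isBigO_displacement (hL : IsC1LineAction M L) {S : Finset G}
    (hS : Subgroup.closure (S : Set G) ≤ hL.stabilizer q)
    (hh : h ∈ Subgroup.closure (S : Set G)) :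
    (fun x => L h x - x) =O[𝓝[>] q] displacement L S := by
  have lipschitz (a : G) (ha : a ∈ hL.stabilizer q) {f : ℝ → ℝ} (hf : Tendsto f (𝓝[>] q) (𝓝 q)) :
      (fun x => L a (f x) - L a x) =O[𝓝[>] q] fun x => f x - x :=
    (hL.hasStrictDerivAt ha.1 q).hasStrictFDerivAt.isBigO_sub.comp_tendsto
      (k := fun x => (f x, x))
      (by rw [nhds_prod_eq]; exact hf.prodMk (tendsto_id.mono_left nhdsWithin_le_nhds))
  have tendsto_apply (a : G) (ha : a ∈ hL.stabilizer q) : Tendsto (L a) (𝓝[>] q) (𝓝 q) :=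
    (hL.tendsto_nhds ha).mono_left nhdsWithin_le_nhds
  induction hh using Subgroup.closure_induction with
  | mem s hs =>
    refine .of_bound 1 (.of_forall fun x => ?_)
    rw [one_mul, Real.norm_eq_abs, Real.norm_of_nonneg (displacement_nonneg L S x)]
    exact abs_sub_le_displacement hs x
  | one => simpa only [hL.one_apply, sub_self] using isBigO_zero _ _
  | mul a b ha hb iha ihb =>
    refine (((lipschitz a (hS ha) (tendsto_apply b (hS hb))).trans ihb).add iha).congr_left
      fun x => ?_
    rw [hL.mul_apply _ (hS ha).1 _ (hS hb).1]
    ring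
  | inv a ha iha =>
    have hinv := lipschitz a⁻¹ ((hL.stabilizer q).inv_mem (hS ha)) (tendsto_apply a (hS ha))
    simp only [hL.inv_apply_apply (hS ha).1] at hinv
    exact ((hinv.trans iha).neg_left).congr_left fun x => neg_sub _ _

theorem IsC1LineAction.displacement_isBigO_sub (hL : IsC1LineAction M L) {S : Finset G}
    (hS : ∀ s ∈ S, s ∈ hL.stabilizer q) :
    displacement L S =O[𝓝[>] q] fun x => x - q := by
  refine IsBigO.fun_sum (A := fun s x => |L s x - x|) fun s hs => ?_
  have hs' := hS s hs
  have hderiv : (fun x => L s x - q) =O[𝓝[>] q] fun x => x - q := by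
    simpa only [hs'.2] using ((hL.contDiff s hs'.1).differentiable one_ne_zero q).isBigO_sub.mono
      nhdsWithin_le_nhds
  exact ((hderiv.sub (isBigO_refl _ _)).congr_left fun x => sub_sub_sub_cancel_right ..).norm_left

theorem frequently_forall_lt_two_mul {ψ : ℝ → ℝ} {B : ℝ} (hB : ∀ᶠ x in 𝓝[>] q, ψ x ≤ B)
    (hpos : ∃ᶠ x in 𝓝[>] q, 0 < ψ x) :
    ∃ᶠ x in 𝓝[>] q, 0 < ψ x ∧ ∀ y ∈ Set.Ioc q x, ψ y < 2 * ψ x := by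
  rw [frequently_iff]
  intro U hU
  obtain ⟨δ, hδ, hsub⟩ := mem_nhdsGT_iff_exists_Ioo_subset.1 (inter_mem hU hB)
  obtain ⟨x₀, hx₀, hx₀δ⟩ := (hpos.and_eventually (Ioo_mem_nhdsGT hδ)).exists
  have hbdd : BddAbove (ψ '' Set.Ioo q δ) :=
    ⟨B, Set.forall_mem_image.2 fun x hx => (hsub hx).2⟩
  have hsup : 0 < sSup (ψ '' Set.Ioo q δ) :=
    hx₀.trans_le (le_csSup hbdd (Set.mem_image_of_mem ψ hx₀δ))
  obtain ⟨_, ⟨x, hx, rfl⟩, hlt⟩ :=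
    exists_lt_of_lt_csSup ⟨_, Set.mem_image_of_mem ψ hx₀δ⟩ (half_lt_self hsup)
  refine ⟨x, (hsub hx).1, (half_pos hsup).trans hlt, fun y hy => ?_⟩
  have := le_csSup hbdd (Set.mem_image_of_mem ψ ⟨hy.1, hy.2.trans_lt hx.2⟩)
  linarith

theorem exists_tendsto_div_of_isBigO {X : Type*} {l : Ultrafilter X} {f m : X → ℝ}
    (hf : f =O[l] m) : ∃ c, Tendsto (fun x => f x / m x) l (𝓝 c) := by
  obtain ⟨C, hC, hbound⟩ := hf.exists_nonneg
  have hmem : ∀ᶠ x in l, f x / m x ∈ Metric.closedBall 0 C := by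
    filter_upwards [hbound.bound] with x hx
    rw [mem_closedBall_zero_iff, norm_div]
    exact div_le_of_le_mul₀ (norm_nonneg _) hC hx
  obtain ⟨c, -, hc⟩ := (isCompact_closedBall 0 C).ultrafilter_le_nhds' (l.map _)
    (Ultrafilter.mem_map.2 hmem)
  exact ⟨c, hc⟩

/-- The function `Φ` measures, on the group generated by `S`, the displacements relative to
`displacement L S` in the limit along an ultrafilter `l` of points `x` tending to `q` from the
right. The last field says that at these points the function `displacement L S x / (x - q)` is at
least half of its supremum over `(q, x]`. -/
structure IsBlowUp (L : G → ℝ → ℝ) (S : Finset G) (q : ℝ) (l : Ultrafilter ℝ) (Φ : G → ℝ) :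
    Prop where
  le_nhdsGT : l ≤ 𝓝[>] q
  displacement_pos : ∀ᶠ x in l, 0 < displacement L S x
  tendsto : ∀ h ∈ Subgroup.closure (S : Set G),
    Tendsto (fun x => (L h x - x) / displacement L S x) l (𝓝 (Φ h))
  displacement_mul_le : ∀ᶠ x in l, ∀ y ∈ Set.Ioc q x,
    displacement L S y * (x - q) ≤ 2 * displacement L S x * (y - q)

variable {S : Finset G} {l : Ultrafilter ℝ} {Φ : G → ℝ}

theorem IsC1LineAction.exists_isBlowUp (hL : IsC1LineAction M L)
    (hS : Subgroup.closure (S : Set G) ≤ hL.stabilizer q)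
    (hmoved : ∃ᶠ x in 𝓝[>] q, ∃ h ∈ Subgroup.closure (S : Set G), L h x ≠ x) :
    ∃ l Φ, IsBlowUp L S q l Φ := by
  have hSq : ∀ s ∈ S, s ∈ hL.stabilizer q := fun s hs => hS (Subgroup.subset_closure hs)
  obtain ⟨C, hC⟩ := (hL.displacement_isBigO_sub hSq).bound
  have hbdd : ∀ᶠ x in 𝓝[>] q, displacement L S x / (x - q) ≤ C := by
    filter_upwards [hC, self_mem_nhdsWithin] with x hx hqx
    have hqx : 0 < x - q := sub_pos.2 hqx
    rwa [div_le_iff₀ hqx, ← Real.norm_of_nonneg (displacement_nonneg L S x),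
      ← Real.norm_of_nonneg hqx.le]
  have hpos : ∃ᶠ x in 𝓝[>] q, 0 < displacement L S x / (x - q) := by
    refine (hmoved.and_eventually self_mem_nhdsWithin).mono ?_
    rintro x ⟨⟨h, hh, hx⟩, hqx⟩
    exact div_pos (hL.displacement_pos (fun _ ha => (hS ha).1) hh hx) (sub_pos.2 hqx)
  have hfreq := (frequently_forall_lt_two_mul hbdd hpos).and_eventually self_mem_nhdsWithin
  obtain ⟨l, hl⟩ := @Ultrafilter.exists_le _ _ (frequently_iff_neBot.1 hfreq)
  rw [le_inf_iff, le_principal_iff] at hl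
  obtain ⟨hl, hgood⟩ := hl
  have hlim (h : G) (hh : h ∈ Subgroup.closure (S : Set G)) :
      ∃ c, Tendsto (fun x => (L h x - x) / displacement L S x) l (𝓝 c) :=
    exists_tendsto_div_of_isBigO ((hL.isBigO_displacement hS hh).mono hl)
  choose! Φ hΦ using hlim
  refine ⟨l, Φ, hl, ?_, hΦ, ?_⟩
  · filter_upwards [hgood] with x ⟨⟨hx, _⟩, hqx⟩
    exact (div_pos_iff_of_pos_right (sub_pos.2 hqx)).1 hx
  · filter_upwards [hgood] with x ⟨⟨_, hx⟩, hqx⟩ y hy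
    have := (hx y hy).le
    rwa [mul_div_assoc', div_le_div_iff₀ (sub_pos.2 hy.1) (sub_pos.2 hqx)] at this

namespace IsBlowUp

theorem eq_zero_of_eventually_eq (hΦ : IsBlowUp L S q l Φ)
    (hh : h ∈ Subgroup.closure (S : Set G)) (hfix : ∀ᶠ x in 𝓝[>] q, L h x = x) : Φ h = 0 := by
  refine tendsto_nhds_unique (hΦ.tendsto h hh) (tendsto_const_nhds.congr' ?_)
  filter_upwards [hΦ.le_nhdsGT hfix] with x hx
  rw [hx, sub_self, zero_div]

theorem exists_ne_zero (hΦ : IsBlowUp L S q l Φ) : ∃ s ∈ S, Φ s ≠ 0 := by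
  by_contra! hzero
  have hsum : Tendsto (fun x => ∑ s ∈ S, |(L s x - x) / displacement L S x|) l (𝓝 0) := by
    simpa +contextual [hzero] using tendsto_finsetSum S fun s hs =>
      (hΦ.tendsto s (Subgroup.subset_closure hs)).abs
  have hone : ∀ᶠ x in l, ∑ s ∈ S, |(L s x - x) / displacement L S x| = 1 := by
    filter_upwards [hΦ.displacement_pos] with x hx
    simp only [abs_div, ← Finset.sum_div, abs_of_pos hx]
    exact div_self hx.ne'
  exact zero_ne_one <| tendsto_nhds_unique hsum <|
    tendsto_const_nhds.congr' (hone.mono fun _ => .symm)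

theorem isAdditiveOn (hΦ : IsBlowUp L S q l Φ) (hL : IsC1LineAction M L)
    (hS : Subgroup.closure (S : Set G) ≤ hL.stabilizer q)
    (hderiv : ∀ h ∈ Subgroup.closure (S : Set G), deriv (L h) q = 1) :
    IsAdditiveOn (Subgroup.closure (S : Set G)) Φ := by
  intro a ha b hb
  have hdefect : (fun x => L a (L b x) - L a x - (L b x - x)) =o[l] displacement L S := by
    have hpair : Tendsto (fun x => (L b x, x)) (𝓝[>] q) (𝓝 (q, q)) := by
      rw [nhds_prod_eq]
      exact ((hL.tendsto_nhds (hS hb)).prodMk tendsto_id).mono_left nhdsWithin_le_nhds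
    have hstrict := hL.hasStrictDerivAt (hS ha).1 q
    rw [hderiv a ha] at hstrict
    have := hstrict.isLittleO.comp_tendsto hpair
    simp only [Function.comp_def, ContinuousLinearMap.toSpanSingleton_apply, smul_eq_mul, mul_one]
      at this
    exact (this.trans_isBigO (hL.isBigO_displacement hS hb)).mono hΦ.le_nhdsGT
  have hlim := (hdefect.tendsto_div_nhds_zero.add (hΦ.tendsto a ha)).add (hΦ.tendsto b hb)
  rw [zero_add] at hlim
  refine tendsto_nhds_unique (hΦ.tendsto _ (mul_mem ha hb)) (hlim.congr fun x => ?_)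
  rw [hL.mul_apply a (hS ha).1 b (hS hb).1]
  ring

theorem exists_abs_map_conj_le (hΦ : IsBlowUp L S q l Φ) (hL : IsC1LineAction M L)
    (hS : Subgroup.closure (S : Set G) ≤ hL.stabilizer q)
    (hh : h ∈ Subgroup.closure (S : Set G)) :
    ∃ C, ∀ g ∈ hL.stabilizer q, g⁻¹ * h * g ∈ Subgroup.closure (S : Set G) →
      (∀ᶠ x in l, L g x ≤ x) → |Φ (g⁻¹ * h * g)| ≤ C := by
  obtain ⟨C, hC, hbound⟩ := (hL.isBigO_displacement hS hh).exists_nonneg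
  refine ⟨3 * C, fun g hg hconj hle => le_of_tendsto (hΦ.tendsto _ hconj).abs ?_⟩
  filter_upwards [hle, hΦ.displacement_pos, hΦ.displacement_mul_le,
    hΦ.le_nhdsGT self_mem_nhdsWithin,
    hΦ.le_nhdsGT (hL.eventually_displacement_conj_le hg (hS hh)),
    hΦ.le_nhdsGT ((hL.tendsto_nhdsGT hg).eventually hbound.bound)]
    with x hle hpos hmul hqx hconj hbound
  have hqg : 0 < L g x - q := sub_pos.2 (hL.lt_apply hg hqx)
  have hqx : 0 ≤ x - q := (sub_pos.2 hqx).le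
  rw [Real.norm_eq_abs, Real.norm_of_nonneg (displacement_nonneg L S _)] at hbound
  rw [abs_div, abs_of_pos hpos, div_le_iff₀ hpos]
  refine le_of_mul_le_mul_right ?_ hqg
  calc |L (g⁻¹ * h * g) x - x| * (L g x - q)
      ≤ 3 / 2 * (|L h (L g x) - L g x| * (x - q)) := hconj
    _ ≤ 3 / 2 * (C * displacement L S (L g x) * (x - q)) := by gcongr
    _ = 3 / 2 * C * (displacement L S (L g x) * (x - q)) := by ring
    _ ≤ 3 / 2 * C * (2 * displacement L S x * (L g x - q)) := by
      exact mul_le_mul_of_nonneg_left (hmul _ ⟨sub_pos.1 hqg, hle⟩) (by positivity)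
    _ = 3 * C * displacement L S x * (L g x - q) := by ring

theorem eq_zero_of_map_conj_zpow (hΦ : IsBlowUp L S q l Φ) (hL : IsC1LineAction M L)
    (hS : Subgroup.closure (S : Set G) ≤ hL.stabilizer q)
    (hh : h ∈ Subgroup.closure (S : Set G)) (hg : g ∈ hL.stabilizer q) {c : ℝ}
    (hconj : ∀ j : ℤ, g ^ j * h * (g ^ j)⁻¹ ∈ Subgroup.closure (S : Set G))
    (hmap : ∀ j : ℤ, Φ (g ^ j * h * (g ^ j)⁻¹) = Φ h + j • c) : c = 0 := by
  obtain ⟨C, hC⟩ := hΦ.exists_abs_map_conj_le hL hS hh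
  have hbound (j : ℤ) (hle : ∀ᶠ x in l, L (g ^ (-j)) x ≤ x) : |j * c| ≤ C + |Φ h| := by
    have hj := hC _ (zpow_mem hg (-j))
    rw [zpow_neg, inv_inv] at hj
    calc |j * c| = |Φ h + j • c - Φ h| := by rw [zsmul_eq_mul, add_sub_cancel_left]
      _ ≤ |Φ h + j • c| + |Φ h| := abs_sub _ _
      _ ≤ C + |Φ h| := by gcongr; exact hmap j ▸ hj (hconj j) (by rwa [zpow_neg] at hle)
  have hlinear (n : ℕ) : n * |c| ≤ C + |Φ h| := by
    have hn := (zpow_mem hg n).1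
    rw [← Nat.abs_cast, ← abs_mul]
    rcases l.eventually_or.1 (Eventually.of_forall fun x => le_total (L (g ^ (n : ℤ)) x) x)
      with hle | hle
    · simpa using hbound (-n) (by rwa [neg_neg])
    · simpa using hbound n (hle.mono fun x hx => by rwa [zpow_neg, hL.inv_apply_le_iff hn])
  by_contra hc
  obtain ⟨n, hn⟩ := exists_nat_gt ((C + |Φ h|) / |c|)
  rw [div_lt_iff₀ (abs_pos.2 hc)] at hn
  exact (hlinear n).not_gt hn

end IsBlowUp

end LineActions

/-! ### Twist systems acting on the line -/

section FirstMoved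

variable {G : Type*} [Group G] {M H : Subgroup G} {L : G → ℝ → ℝ} {g h : G} {q₀ r : ℝ}

/-- The points in `[q₀, ∞)` which are moved by some element of `H`. -/
def movedSet (L : G → ℝ → ℝ) (H : Subgroup G) (q₀ : ℝ) : Set ℝ :=
  {x | q₀ ≤ x ∧ ∃ h ∈ H, L h x ≠ x}

/-- The right end point of the largest interval `[q₀, r]` on which `H` acts trivially. -/
def firstMoved (L : G → ℝ → ℝ) (H : Subgroup G) (q₀ : ℝ) : ℝ := sInf (movedSet L H q₀)

theorem isGLB_firstMoved (hne : (movedSet L H q₀).Nonempty) :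
    IsGLB (movedSet L H q₀) (firstMoved L H q₀) :=
  isGLB_csInf hne ⟨q₀, fun _ hx => hx.1⟩

theorem le_firstMoved (hne : (movedSet L H q₀).Nonempty) : q₀ ≤ firstMoved L H q₀ :=
  (isGLB_firstMoved hne).2 fun _ hx => hx.1

theorem apply_eq_of_lt_firstMoved (hne : (movedSet L H q₀).Nonempty) (hh : h ∈ H) {x : ℝ}
    (hx : q₀ ≤ x) (hxr : x < firstMoved L H q₀) : L h x = x := by
  by_contra hmoved
  exact hxr.not_ge ((isGLB_firstMoved hne).1 ⟨hx, h, hh, hmoved⟩)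

theorem eventually_apply_eq_of_lt_firstMoved (hne : (movedSet L H q₀).Nonempty) (hr : q₀ ≤ r)
    (hrH : r < firstMoved L H q₀) (hh : h ∈ H) : ∀ᶠ x in 𝓝[>] r, L h x = x := by
  filter_upwards [Ioo_mem_nhdsGT hrH] with x hx
  exact apply_eq_of_lt_firstMoved hne hh (hr.trans hx.1.le) hx.2

namespace IsC1LineAction

theorem apply_firstMoved (hL : IsC1LineAction M L) (hne : (movedSet L H q₀).Nonempty)
    (hH : H ≤ hL.stabilizer q₀) (hh : h ∈ H) :
    L h (firstMoved L H q₀) = firstMoved L H q₀ := by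
  obtain heq | hlt := (le_firstMoved hne).eq_or_lt
  · rw [← heq]; exact (hH hh).2
  · have hfix : ∀ᶠ x in 𝓝[<] firstMoved L H q₀, x = L h x := by
      filter_upwards [Ioo_mem_nhdsLT hlt] with x hx
      exact (apply_eq_of_lt_firstMoved hne hh hx.1.le hx.2).symm
    refine tendsto_nhds_unique (((hL.continuous (hH hh).1).tendsto _).mono_left
      nhdsWithin_le_nhds) ((tendsto_id.mono_left nhdsWithin_le_nhds).congr' hfix)

theorem le_stabilizer_of_le_firstMoved (hL : IsC1LineAction M L)
    (hne : (movedSet L H q₀).Nonempty) (hH : H ≤ hL.stabilizer q₀) (hr : q₀ ≤ r)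
    (hrH : r ≤ firstMoved L H q₀) : H ≤ hL.stabilizer r := by
  refine fun h hh => ⟨(hH hh).1, ?_⟩
  obtain rfl | hlt := hrH.eq_or_lt
  · exact hL.apply_firstMoved hne hH hh
  · exact apply_eq_of_lt_firstMoved hne hh hr hlt

theorem frequently_moved (hL : IsC1LineAction M L) (hne : (movedSet L H q₀).Nonempty)
    (hH : H ≤ hL.stabilizer q₀) :
    ∃ᶠ x in 𝓝[>] firstMoved L H q₀, ∃ h ∈ H, L h x ≠ x := by
  have hfreq := (isGLB_firstMoved hne).frequently_mem hne
  rw [frequently_nhdsWithin_iff] at hfreq ⊢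
  refine hfreq.mono fun x ⟨⟨_, h, hh, hx⟩, hle⟩ =>
    ⟨⟨h, hh, hx⟩, Set.mem_Ioi.2 <| lt_of_le_of_ne hle ?_⟩
  rintro rfl
  exact hx (hL.apply_firstMoved hne hH hh)

theorem apply_firstMoved_le (hL : IsC1LineAction M L) (hne : (movedSet L H q₀).Nonempty)
    (hH : H ≤ M) (hg : g ∈ hL.stabilizer q₀) (hgH : ∀ h ∈ H, g⁻¹ * h * g ∈ H) :
    L g (firstMoved L H q₀) ≤ firstMoved L H q₀ := by
  have hg' := (hL.stabilizer q₀).inv_mem hg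
  refine (isGLB_firstMoved hne).2 fun y ⟨hy, h, hh, hmoved⟩ => ?_
  rw [← inv_inv g, hL.inv_apply_le_iff hg'.1]
  refine (isGLB_firstMoved hne).1 ⟨?_, g⁻¹ * h * g, hgH h hh, fun hfix => hmoved ?_⟩
  · simpa only [hg'.2] using (hL.strictMono _ hg'.1).monotone hy
  · rw [mul_assoc, hL.mul_apply _ hg'.1 _ (mul_mem (hH hh) hg.1),
      hL.mul_apply _ (hH hh) _ hg.1] at hfix
    have hcancel : L g (L g⁻¹ y) = y := ((hL.inv_apply_eq_iff hg.1).1 rfl).symm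
    simpa only [hcancel] using (hL.strictMono _ hg'.1).injective hfix

theorem mem_stabilizer_firstMoved (hL : IsC1LineAction M L) (hne : (movedSet L H q₀).Nonempty)
    (hH : H ≤ M) (hg : g ∈ hL.stabilizer q₀) (hgH : g ∈ Subgroup.normalizer (H : Set G)) :
    g ∈ hL.stabilizer (firstMoved L H q₀) := by
  refine ⟨hg.1, le_antisymm (hL.apply_firstMoved_le hne hH hg fun h hh =>
    (Subgroup.mem_normalizer_iff''.1 hgH h).1 hh) ?_⟩
  rw [← hL.inv_apply_le_iff hg.1]
  refine hL.apply_firstMoved_le hne hH ((hL.stabilizer q₀).inv_mem hg) fun h hh => ?_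
  rw [inv_inv]
  exact (Subgroup.mem_normalizer_iff.1 hgH h).1 hh

theorem deriv_eq_one_of_eventually_eq (hL : IsC1LineAction M L) (hg : g ∈ hL.stabilizer r)
    (hfix : ∀ᶠ x in 𝓝[>] r, L g x = x) : deriv (L g) r = 1 := by
  have hderiv := (hL.hasStrictDerivAt hg.1 r).hasDerivAt.hasDerivWithinAt (s := Set.Ioi r)
  have hid := (hasDerivWithinAt_id r (Set.Ioi r)).congr_of_eventuallyEq hfix hg.2
  exact (uniqueDiffWithinAt_Ioi r).eq_deriv _ hderiv hid

end IsC1LineAction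

end FirstMoved

section TwistSystems

variable {α ι G : Type*} [DecidableEq ι] [Group G] {A : TwistSystem α ι G}
  {KP : Subgroup (FreeGroup α)} {KQ : Subgroup (FreeGroup ι)} {M : Subgroup G}
  {L : G → ℝ → ℝ} {q₀ r : ℝ} {u : FreeGroup α}

theorem TwistSystem.T_mem_normalizer_core (i : ι) (hu : u ∈ KP) :
    A.T i u ∈ Subgroup.normalizer (A.core KP KQ : Set G) := by
  refine Subgroup.mem_normalizer_iff.2 fun g => ⟨A.conj_T_mem_core i hu, fun hg => ?_⟩
  simpa [mul_assoc] using A.conj_T_mem_core i (inv_mem hu) hg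

theorem TwistSystem.MapsInto.stabilizer_firstMoved (hA : A.MapsInto M KP KQ)
    (hL : IsC1LineAction M L) (hM : M ≤ hL.stabilizer q₀)
    (hne : (movedSet L (A.core KP KQ) q₀).Nonempty) :
    A.MapsInto (hL.stabilizer (firstMoved L (A.core KP KQ) q₀)) KP KQ where
  T_mem i _ hu := hL.mem_stabilizer_firstMoved hne hA.core_le (hM (hA.T_mem i _ hu))
    (A.T_mem_normalizer_core i hu)
  conj_mem _ hu v := hL.le_stabilizer_of_le_firstMoved hne (hA.core_le.trans hM)
    (le_firstMoved hne) le_rfl (A.R_conjInl_mem_core hu v)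
  inr_mem _ hκ := hL.le_stabilizer_of_le_firstMoved hne (hA.core_le.trans hM)
    (le_firstMoved hne) le_rfl (A.R_inrHom_mem_core hκ)

theorem IsC1LineAction.deriv_R_conjInl_eq_one [Nontrivial ι] [KQ.FiniteIndex]
    (hL : IsC1LineAction M L) (hA : A.MapsInto (hL.stabilizer r) KP KQ) (hu : u ∈ KP)
    (v : FreeGroup ι) : deriv (L (A.R (conjInl v u))) r = 1 :=
  Real.eq_one_of_pos_of_log_eq_zero (hL.deriv_pos (hA.conj_mem u hu v).1 r)
    (TwistSystem.map_R_conjInl_eq_zero (hL.isAdditiveOn_log_deriv r) hA hu v)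

theorem IsBlowUp.map_R_conjInl_eq_zero [Nontrivial ι] [KQ.FiniteIndex] {S : Finset G}
    {l : Ultrafilter ℝ} {Φ : G → ℝ} (hΦ : IsBlowUp L S r l Φ) (hL : IsC1LineAction M L)
    (hS : Subgroup.closure (S : Set G) ≤ hL.stabilizer r)
    (hadd : IsAdditiveOn (Subgroup.closure (S : Set G)) Φ)
    (hcore : A.core KP KQ ≤ Subgroup.closure (S : Set G))
    (hT : ∀ i, ∀ u ∈ KP, A.T i u ∈ hL.stabilizer r) (hu : u ∈ KP) (v : FreeGroup ι) :
    Φ (A.R (conjInl v u)) = 0 := by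
  have hconj (v : FreeGroup ι) : A.R (conjInl v u) ∈ Subgroup.closure (S : Set G) :=
    hcore (A.R_conjInl_mem_core hu v)
  have hinr (κ : FreeGroup ι) (hκ : κ ∈ KQ) : A.R (inrHom κ) ∈ Subgroup.closure (S : Set G) :=
    hcore (A.R_inrHom_mem_core hκ)
  refine (hadd.comp_hom A.R).map_conjInl_eq_zero hconj KQ hinr (fun i κ hκ => ?_) v
  refine hΦ.eq_zero_of_map_conj_zpow hL hS (hinr κ hκ) (hT i u hu) (fun j => ?_) fun j => ?_ <;>
    rw [← map_zpow]
  · exact hcore (A.conj_T_mem_core i (zpow_mem hu j) (A.R_inrHom_mem_core hκ))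
  · have hdefect : A.R (twistDefect i (u ^ j) κ) ∈ Subgroup.closure (S : Set G) :=
      twistDefect_mem (H := (Subgroup.closure (S : Set G)).comap A.R)
        (fun v => by simpa only [Subgroup.mem_comap, map_zpow] using zpow_mem (hconj v) j) i κ
    rw [A.conj_R, twist_inrHom, map_mul, hadd _ hdefect _ (hinr κ hκ), add_comm,
      (hadd.comp_hom A.R).map_twistDefect_zpow hconj i j κ]

theorem exists_mem_ne_one_of_finiteIndex [Nonempty α] (K : Subgroup (FreeGroup α))
    [K.FiniteIndex] : ∃ κ ∈ K, κ ≠ 1 := by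
  obtain ⟨n, hn, -, hmem⟩ := K.exists_pow_mem_of_index_ne_zero
    Subgroup.FiniteIndex.index_ne_zero (.of (Classical.arbitrary α))
  exact ⟨_, hmem, fun h => FreeGroup.of_ne_one _ ((pow_eq_one_iff_left hn.ne').1 h)⟩

theorem TwistSystem.movedSet_core_nonempty [Nonempty ι] [KQ.FiniteIndex]
    (hfaithful : ∀ g ∈ M, (∀ x ≥ q₀, L g x = x) → g = 1) (hA : A.MapsInto M KP KQ)
    (hinj : Function.Injective A.R) : (movedSet L (A.core KP KQ) q₀).Nonempty := by
  obtain ⟨κ, hκ, hκ_ne⟩ := exists_mem_ne_one_of_finiteIndex KQ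
  have hκ_R : A.R (inrHom κ) ≠ 1 := fun h => hκ_ne <|
    (injective_iff_map_eq_one _).1 (FreeGroup.map_injective Sum.inr_injective) κ <|
      (injective_iff_map_eq_one _).1 hinj _ h
  have := mt (hfaithful _ (hA.inr_mem κ hκ)) hκ_R
  push Not at this
  obtain ⟨x, hx, hmoved⟩ := this
  exact ⟨x, hx, _, A.R_inrHom_mem_core hκ, hmoved⟩

end TwistSystems

section DualSystems

variable {α ι G : Type*} [DecidableEq α] [DecidableEq ι] [Group G] {A : TwistSystem α ι G}
  {A' : TwistSystem ι α G} {KP : Subgroup (FreeGroup α)} {KQ : Subgroup (FreeGroup ι)}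
  {M : Subgroup G} {L : G → ℝ → ℝ} {q₀ r : ℝ}

/-- The systems `A` and `A'` have the same representation `R`, with the roles of the two sets of
letters exchanged. -/
def TwistSystem.IsDual (A : TwistSystem α ι G) (A' : TwistSystem ι α G) : Prop :=
  ∀ w, A'.R w = A.R (FreeGroup.map Sum.swap w)

theorem TwistSystem.IsDual.symm (hd : A.IsDual A') : A'.IsDual A := fun w => by
  rw [hd, FreeGroup.map.comp, Sum.swap_swap_eq, FreeGroup.map.id]

theorem TwistSystem.IsDual.R_inrHom (hd : A.IsDual A') (κ : FreeGroup ι) :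
    A.R (inrHom κ) = A'.R (conjInl 1 κ) := by
  rw [hd, conjInl_apply, map_one, one_mul, inv_one, mul_one, inlHom, FreeGroup.map.comp]
  rfl

theorem TwistSystem.IsDual.core_sup_core_le (hd : A.IsDual A') {H : Subgroup G}
    (hA : ∀ u ∈ KP, ∀ v, A.R (conjInl v u) ∈ H) (hA' : ∀ u ∈ KQ, ∀ v, A'.R (conjInl v u) ∈ H) :
    A.core KP KQ ⊔ A'.core KQ KP ≤ H :=
  sup_le (TwistSystem.core_le hA fun κ hκ => hd.R_inrHom κ ▸ hA' κ hκ 1)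
    (TwistSystem.core_le hA' fun κ hκ => hd.symm.R_inrHom κ ▸ hA κ hκ 1)

/-- If the conclusion fails, blow up at `r` the action of the group generated by both cores. By
averaging, the resulting additive function vanishes on every generator, since a generator belongs to
a system fixing `r` or acts trivially to the right of `r`. -/
theorem IsC1LineAction.eventually_apply_eq_of_mapsInto_stabilizer [Finite α] [Finite ι]
    [Nontrivial α] [Nontrivial ι] [KP.FiniteIndex] [KQ.FiniteIndex] (hL : IsC1LineAction M L)
    (hd : A.IsDual A') (hA : A.MapsInto (hL.stabilizer r) KP KQ)
    (hA' : A'.core KQ KP ≤ hL.stabilizer r)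
    (hcases : (∀ h ∈ A'.core KQ KP, ∀ᶠ x in 𝓝[>] r, L h x = x) ∨
      A'.MapsInto (hL.stabilizer r) KQ KP) :
    ∀ᶠ x in 𝓝[>] r, ∀ h ∈ A.core KP KQ, L h x = x := by
  obtain ⟨S, hS⟩ : (A.core KP KQ ⊔ A'.core KQ KP).FG := A.core_fg.sup A'.core_fg
  have hSr : Subgroup.closure (S : Set G) ≤ hL.stabilizer r := hS ▸ sup_le hA.core_le hA'
  have hcore : A.core KP KQ ≤ Subgroup.closure (S : Set G) := hS ▸ le_sup_left
  have hcore' : A'.core KQ KP ≤ Subgroup.closure (S : Set G) := hS ▸ le_sup_right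
  have hderiv : Subgroup.closure (S : Set G) ≤ (hL.isAdditiveOn_log_deriv r).ker := by
    refine hS.le.trans <| hd.core_sup_core_le (fun u hu v => ⟨hA.conj_mem u hu v, ?_⟩)
      fun u hu v => ⟨hA' (A'.R_conjInl_mem_core hu v), ?_⟩ <;> beta_reduce
    · rw [hL.deriv_R_conjInl_eq_one hA hu, Real.log_one]
    · have hmem := A'.R_conjInl_mem_core (KQ := KP) hu v
      rw [hcases.elim (fun hfix => hL.deriv_eq_one_of_eventually_eq (hA' hmem) (hfix _ hmem))
        fun hA' => hL.deriv_R_conjInl_eq_one hA' hu v, Real.log_one]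
  by_contra hmoved
  push Not at hmoved
  obtain ⟨l, Φ, hΦ⟩ := hL.exists_isBlowUp hSr <|
    hmoved.mono fun x ⟨h, hh, hx⟩ => ⟨h, hcore hh, hx⟩
  have hadd : IsAdditiveOn (Subgroup.closure (S : Set G)) Φ := hΦ.isAdditiveOn hL hSr fun h hh =>
    Real.eq_one_of_pos_of_log_eq_zero (hL.deriv_pos (hSr hh).1 r) (hderiv hh).2
  have hker : Subgroup.closure (S : Set G) ≤ hadd.ker := by
    refine hS.le.trans <| hd.core_sup_core_le (fun u hu v => ⟨hcore (A.R_conjInl_mem_core hu v),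
        hΦ.map_R_conjInl_eq_zero hL hSr hadd hcore hA.T_mem hu v⟩)
      fun u hu v => ⟨hcore' (A'.R_conjInl_mem_core hu v), ?_⟩
    have hmem := A'.R_conjInl_mem_core (KQ := KP) hu v
    exact hcases.elim (fun hfix => hΦ.eq_zero_of_eventually_eq (hcore' hmem) (hfix _ hmem))
      fun hA' => hΦ.map_R_conjInl_eq_zero hL hSr hadd hcore' hA'.T_mem hu v
  obtain ⟨s, hs, hne⟩ := hΦ.exists_ne_zero
  exact hne (hker (Subgroup.subset_closure hs)).2

theorem IsC1LineAction.firstMoved_lt [Finite α] [Finite ι] [Nontrivial α] [Nontrivial ι]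
    [KP.FiniteIndex] [KQ.FiniteIndex] (hL : IsC1LineAction M L) (hM : M ≤ hL.stabilizer q₀)
    (hd : A.IsDual A') (hA : A.MapsInto M KP KQ) (hA' : A'.MapsInto M KQ KP)
    (hne : (movedSet L (A.core KP KQ) q₀).Nonempty)
    (hne' : (movedSet L (A'.core KQ KP) q₀).Nonempty) :
    firstMoved L (A'.core KQ KP) q₀ < firstMoved L (A.core KP KQ) q₀ := by
  by_contra! hle
  have hr := le_firstMoved hne
  have hfix := hL.eventually_apply_eq_of_mapsInto_stabilizer hd
    (hA.stabilizer_firstMoved hL hM hne)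
    (hL.le_stabilizer_of_le_firstMoved hne' (hA'.core_le.trans hM) hr hle)
    (hle.lt_or_eq.imp (fun hlt _ => eventually_apply_eq_of_lt_firstMoved hne' hr hlt)
      fun heq => by rw [heq]; exact hA'.stabilizer_firstMoved hL hM hne')
  obtain ⟨x, ⟨h, hh, hx⟩, hx_fix⟩ :=
    ((hL.frequently_moved hne (hA.core_le.trans hM)).and_eventually hfix).exists
  exact hx (hx_fix h hh)

theorem IsC1LineAction.not_faithful_of_twistSystem [Finite α] [Finite ι] [Nontrivial α]
    [Nontrivial ι] [KP.FiniteIndex] [KQ.FiniteIndex] (hL : IsC1LineAction M L)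
    (hM : M ≤ hL.stabilizer q₀) (hd : A.IsDual A') (hinj : Function.Injective A.R)
    (hA : A.MapsInto M KP KQ) (hA' : A'.MapsInto M KQ KP) :
    ∃ g ∈ M, (∀ x ≥ q₀, L g x = x) ∧ g ≠ 1 := by
  by_contra! hfaithful
  have hinj' : Function.Injective A'.R := by
    rw [show ⇑A'.R = A.R ∘ FreeGroup.map Sum.swap from funext hd]
    exact hinj.comp (FreeGroup.map_injective Sum.swap_leftInverse.injective)
  have hne := TwistSystem.movedSet_core_nonempty hfaithful hA hinj
  have hne' := TwistSystem.movedSet_core_nonempty hfaithful hA' hinj'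
  exact (hL.firstMoved_lt hM hd hA hA' hne hne').asymm
    (hL.firstMoved_lt hM hd.symm hA' hA hne' hne)

end DualSystems

/-! ### Commuting groups of circle homeomorphisms -/

section Order

theorem orderIso_apply_eq_of_isGreatest {α : Type*} [PartialOrder α]
    (e : α ≃o α) {S : Set α} (hS : e '' S = S) {y : α} (hy : IsGreatest S y) : e y = y :=
  (hS ▸ e.monotone.map_isGreatest hy).unique hy

theorem orderIso_apply_eq_of_isLeast {α : Type*} [PartialOrder α]
    (e : α ≃o α) {S : Set α} (hS : e '' S = S) {y : α} (hy : IsLeast S y) : e y = y :=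
  (hS ▸ e.monotone.map_isLeast hy).unique hy

theorem image_fixedPoints_of_commute {α : Type*} (e : Equiv.Perm α) {g : α → α}
    (h : Function.Commute e g) : e '' Function.fixedPoints g = Function.fixedPoints g := by
  ext x
  rw [e.image_eq_preimage_symm, Set.mem_preimage, Function.mem_fixedPoints_iff,
    Function.mem_fixedPoints_iff, ← e.injective.eq_iff, h (e.symm x), e.apply_symm_apply]

end Order

/-- The preimage in `ℝ` of a closed subset of the circle `ℝ/ℤ`. -/
structure IsPeriodicClosed (C : Set ℝ) : Prop where
  isClosed : IsClosed C
  add_int_mem : ∀ x ∈ C, ∀ k : ℤ, x + k ∈ C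

namespace IsPeriodicClosed

variable {C D : Set ℝ}

theorem exists_isGreatest_inter_Iic (hC : IsPeriodicClosed C) (hne : C.Nonempty) (x : ℝ) :
    ∃ y, IsGreatest (C ∩ Set.Iic x) y := by
  obtain ⟨a, ha⟩ := hne
  have hlt : a + ⌊x - a⌋ ≤ x := by linarith [Int.floor_le (x - a)]
  exact ⟨_, (hC.isClosed.inter isClosed_Iic).isGreatest_csSup ⟨_, hC.add_int_mem a ha _, hlt⟩
    (bddAbove_Iic.mono Set.inter_subset_right)⟩

theorem exists_isLeast_inter_Ici (hC : IsPeriodicClosed C) (hne : C.Nonempty) (x : ℝ) :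
    ∃ y, IsLeast (C ∩ Set.Ici x) y := by
  obtain ⟨a, ha⟩ := hne
  have hlt : x ≤ a + ⌈x - a⌉ := by linarith [Int.le_ceil (x - a)]
  exact ⟨_, (hC.isClosed.inter isClosed_Ici).isLeast_csInf ⟨_, hC.add_int_mem a ha _, hlt⟩
    (bddBelow_Ici.mono Set.inter_subset_right)⟩

theorem biInter {ι : Type*} {C : ι → Set ℝ} (hC : ∀ i, IsPeriodicClosed (C i)) (t : Finset ι) :
    IsPeriodicClosed (⋂ i ∈ t, C i) where
  isClosed := isClosed_biInter fun i _ => (hC i).isClosed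
  add_int_mem x hx k := Set.mem_iInter₂.2 fun i hi =>
    (hC i).add_int_mem x (Set.mem_iInter₂.1 hx i hi) k

theorem exists_disjoint_biInter {ι : Type*} {C : ι → Set ℝ} (hC : ∀ i, IsPeriodicClosed (C i))
    (h : ⋂ i, C i = ∅) :
    ∃ (t : Finset ι) (b : ι), (⋂ i ∈ t, C i).Nonempty ∧ Disjoint (⋂ i ∈ t, C i) (C b) := by
  classical
  by_contra! hmeet
  have hfin (t : Finset ι) : (⋂ i ∈ t, C i).Nonempty := by
    induction t using Finset.induction_on with
    | empty => simp
    | insert b t _ ih =>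
      rw [Finset.set_biInter_insert, Set.inter_comm]
      exact Set.not_disjoint_iff_nonempty_inter.1 (hmeet t b ih)
  obtain ⟨x, -, hx⟩ := (isCompact_Icc (a := (0 : ℝ)) (b := 1)).inter_iInter_nonempty C
    (fun i => (hC i).isClosed) fun t => by
      obtain ⟨x, hx⟩ := hfin t
      refine ⟨x + (-⌊x⌋ : ℤ), ?_, (biInter hC t).add_int_mem x hx _⟩
      rw [Int.cast_neg, ← sub_eq_add_neg, Int.self_sub_floor]
      exact ⟨Int.fract_nonneg x, (Int.fract_lt_one x).le⟩
  exact h.le hx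

/-- The common fixed point is the last point `q` of `C` before some point of `D`: between the last
fixed point of `e` before `q` and the next point of `D`, everything extremal is fixed by `e`. -/
theorem exists_common_fixedPoint (hC : IsPeriodicClosed C) (hD : IsPeriodicClosed D)
    (hCne : C.Nonempty) (hDne : D.Nonempty) (hCD : Disjoint C D) :
    ∃ q, ∀ e : ℝ ≃o ℝ, e '' C = C → e '' D = D → IsPeriodicClosed (Function.fixedPoints e) →
      (Function.fixedPoints e).Nonempty → e q = q := by
  obtain ⟨d, hd⟩ := hDne
  obtain ⟨q, ⟨hqC, hqd⟩, hqmax⟩ := hC.exists_isGreatest_inter_Iic hCne d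
  refine ⟨q, fun e heC heD hFix hFixne => ?_⟩
  have image_Iic {S : Set ℝ} {x : ℝ} (hS : e '' S = S) (hx : e x = x) :
      e '' (S ∩ Set.Iic x) = S ∩ Set.Iic x := by
    rw [Set.image_inter e.injective, e.image_Iic, hS, hx]
  have image_Ici {S : Set ℝ} {x : ℝ} (hS : e '' S = S) (hx : e x = x) :
      e '' (S ∩ Set.Ici x) = S ∩ Set.Ici x := by
    rw [Set.image_inter e.injective, e.image_Ici, hS, hx]
  obtain ⟨p, ⟨hp, hpq⟩, hpmax⟩ := hFix.exists_isGreatest_inter_Iic hFixne q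
  obtain ⟨y, hy⟩ := hD.exists_isLeast_inter_Ici ⟨d, hd⟩ p
  have hey : e y = y := orderIso_apply_eq_of_isLeast e (image_Ici heD hp) hy
  rcases le_or_gt y q with hyq | hqy
  · obtain ⟨c, hc⟩ := hC.exists_isLeast_inter_Ici hCne p
    have hec : e c = c := orderIso_apply_eq_of_isLeast e (image_Ici heC hp) hc
    have hyp : y = p := (hpmax ⟨hey, hyq⟩).antisymm hy.1.2
    have hcp : c = p := (hpmax ⟨hec, hc.2 ⟨hqC, hpq⟩⟩).antisymm hc.1.2
    exact absurd (hyp ▸ hy.1.1) (Set.disjoint_left.1 hCD (hcp ▸ hc.1.1))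
  · obtain ⟨c, hc⟩ := hC.exists_isGreatest_inter_Iic hCne y
    have hcd : c ≤ d := hc.1.2.trans (hy.2 ⟨hd, Set.mem_Ici.2 (le_trans hpq hqd)⟩)
    have hcq : c = q := (hqmax ⟨hc.1.1, hcd⟩).antisymm (hc.2 ⟨hqC, hqy.le⟩)
    exact hcq ▸ orderIso_apply_eq_of_isGreatest e (image_Iic heC hey) hc

end IsPeriodicClosed

section Lifts

variable {D : Subgroup CircleDeg1Liftˣ} {f g : CircleDeg1Liftˣ} {q : ℝ}

theorem unit_mul_apply (f g : CircleDeg1Liftˣ) (x : ℝ) : (f * g) x = f (g x) := rfl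

theorem unit_strictMono (f : CircleDeg1Liftˣ) : StrictMono f :=
  (CircleDeg1Lift.toOrderIso f).strictMono

theorem unit_continuous (f : CircleDeg1Liftˣ) : Continuous f :=
  (CircleDeg1Lift.toOrderIso f).continuous

theorem unit_inv_apply_eq_of_apply_eq {x y : ℝ} (h : f x = y) : f⁻¹ y = x := by
  rw [← h, CircleDeg1Lift.units_inv_apply_apply]

theorem isPeriodicClosed_fixedPoints (f : CircleDeg1Liftˣ) :
    IsPeriodicClosed (Function.fixedPoints f) where
  isClosed := isClosed_fixedPoints (unit_continuous f)
  add_int_mem x hx k := (CircleDeg1Lift.map_add_int _ x k).trans (congrArg (· + (k : ℝ)) hx)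

theorem toOrderIso_image_fixedPoints (h : Commute f g) :
    CircleDeg1Lift.toOrderIso f '' Function.fixedPoints g = Function.fixedPoints g :=
  image_fixedPoints_of_commute (CircleDeg1Lift.toOrderIso f).toEquiv
    (CircleDeg1Lift.commute_iff_commute.1 h.units_val)

/-- `q` is fixed by all those elements of `D` which have a fixed point. -/
def IsCommonFixedPoint (D : Subgroup CircleDeg1Liftˣ) (q : ℝ) : Prop :=
  ∀ f ∈ D, (∃ x, f x = x) → f q = q

theorem exists_isCommonFixedPoint_or_of_commute {D₁ D₂ : Subgroup CircleDeg1Liftˣ}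
    (hcomm : ∀ f ∈ D₁, ∀ g ∈ D₂, Commute f g) :
    (∃ q, IsCommonFixedPoint D₁ q) ∨ ∃ q, IsCommonFixedPoint D₂ q := by
  let C (g : {g : CircleDeg1Liftˣ // g ∈ D₂ ∧ ∃ x, g x = x}) : Set ℝ := Function.fixedPoints g.1
  have hC g : IsPeriodicClosed (C g) := isPeriodicClosed_fixedPoints g.1
  by_cases hall : (⋂ g, C g).Nonempty
  · obtain ⟨q, hq⟩ := hall
    exact Or.inr ⟨q, fun g hg hfix => Set.mem_iInter.1 hq ⟨g, hg, hfix⟩⟩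
  obtain ⟨t, b, hne, hdisj⟩ :=
    IsPeriodicClosed.exists_disjoint_biInter hC (Set.not_nonempty_iff_eq_empty.1 hall)
  obtain ⟨q, hq⟩ := (IsPeriodicClosed.biInter hC t).exists_common_fixedPoint (hC b) hne b.2.2 hdisj
  refine Or.inl ⟨q, fun f hf hfix => ?_⟩
  have himage g : CircleDeg1Lift.toOrderIso f '' C g = C g :=
    toOrderIso_image_fixedPoints (hcomm f hf g.1 g.2.1)
  refine hq (CircleDeg1Lift.toOrderIso f) ?_ (himage b) (isPeriodicClosed_fixedPoints f) hfix
  rw [Set.image_iInter₂ (CircleDeg1Lift.toOrderIso f).bijective]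
  exact Set.iInter₂_congr fun g _ => himage g

theorem IsCommonFixedPoint.apply (hq : IsCommonFixedPoint D q) (hf : f ∈ D) :
    IsCommonFixedPoint D (f q) := by
  rintro k hk ⟨y, hy⟩
  have hconj : (f⁻¹ * k * f) q = q :=
    hq _ (D.mul_mem (D.mul_mem (D.inv_mem hf) hk) hf) ⟨f⁻¹ y, by
      rw [unit_mul_apply, unit_mul_apply, CircleDeg1Lift.units_apply_inv_apply, hy]⟩
  rw [unit_mul_apply, unit_mul_apply] at hconj
  rw [← CircleDeg1Lift.units_apply_inv_apply f (k (f q)), hconj]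

end Lifts

section TranslationNumber

local notation "τ" => CircleDeg1Lift.translationNumber

theorem iterate_comp_le_iterate_iterate {α : Type*} [Preorder α] {f g : α → α} (hf : Monotone f)
    (hg : Monotone g) (h : g ∘ f ≤ f ∘ g) (n : ℕ) (x : α) : (f ∘ g)^[n] x ≤ f^[n] (g^[n] x) := by
  induction n with
  | zero => rfl
  | succ n ih =>
    simp only [Function.iterate_succ_apply', Function.comp_apply]
    exact hf ((hg ih).trans (hf.le_iterate_comp_of_le h n _))

theorem translationNumber_mul_le_of_mapsTo {f g : CircleDeg1Lift} {O : Set ℝ} (hO : O.Nonempty)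
    (hf : Set.MapsTo f O O) (hg : Set.MapsTo g O O) (hle : ∀ x ∈ O, g (f x) ≤ f (g x)) :
    τ (f * g) ≤ τ f + τ g := by
  obtain ⟨q, hq⟩ := hO
  have hiter (n : ℕ) : ((f * g) ^ n) q ≤ (f ^ n) ((g ^ n) q) := by
    have h := iterate_comp_le_iterate_iterate (f := hf.restrict f O O) (g := hg.restrict g O O)
      (fun _ _ h => f.monotone h) (fun _ _ h => g.monotone h) (fun x => hle x x.2) n ⟨q, hq⟩
    rw [show hf.restrict f O O ∘ hg.restrict g O O = (hf.comp hg).restrict (f ∘ g) O O from rfl,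
      Set.MapsTo.iterate_restrict, Set.MapsTo.iterate_restrict, Set.MapsTo.iterate_restrict] at h
    simpa only [CircleDeg1Lift.coe_pow] using! h
  have hbound (n : ℕ) : ((f * g) ^ n) q - q ≤ n * (τ f + τ g) + 2 := by
    have hfn := (f ^ n).map_lt_add_translationNumber_add_one ((g ^ n) q)
    have hgn := (g ^ n).map_lt_add_translationNumber_add_one q
    rw [CircleDeg1Lift.translationNumber_pow] at hfn hgn
    linarith [hiter n]
  have hlim : Tendsto (fun n : ℕ => τ f + τ g + 2 / (n : ℝ)) atTop (𝓝 (τ f + τ g)) := by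
    simpa using tendsto_const_nhds.add (tendsto_const_div_atTop_nhds_zero_nat (2 : ℝ))
  refine le_of_tendsto_of_tendsto ((f * g).tendsto_translationNumber q) hlim ?_
  filter_upwards [eventually_gt_atTop 0] with n hn
  rw [div_le_iff₀ (Nat.cast_pos.2 hn), add_mul, div_mul_cancel₀ _ (Nat.cast_ne_zero.2 hn.ne')]
  linarith [hbound n]

theorem translationNumber_mul_comm (f g : CircleDeg1Liftˣ) :
    τ (f * g : CircleDeg1Liftˣ) = τ (g * f : CircleDeg1Liftˣ) := by
  simpa [mul_assoc] using CircleDeg1Lift.translationNumber_conj_eq f (g * f)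

namespace IsCommonFixedPoint

variable {D : Subgroup CircleDeg1Liftˣ} {f g : CircleDeg1Liftˣ} {q : ℝ}

theorem translationNumber_mul_of_le (hq : IsCommonFixedPoint D q) (hf : f ∈ D) (hg : g ∈ D)
    (hle : ∀ x, IsCommonFixedPoint D x → g (f x) ≤ f (g x)) :
    τ (f * g : CircleDeg1Liftˣ) = τ f + τ g := by
  refine le_antisymm (translationNumber_mul_le_of_mapsTo (O := {x | IsCommonFixedPoint D x})
    ⟨q, hq⟩ (fun x hx => hx.apply hf) (fun x hx => hx.apply hg) hle) ?_
  have hle_inv (y : ℝ) (hy : IsCommonFixedPoint D y) : g⁻¹ (f⁻¹ y) ≤ f⁻¹ (g⁻¹ y) := by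
    have h := hle _ ((hy.apply (D.inv_mem hg)).apply (D.inv_mem hf))
    rw [CircleDeg1Lift.units_apply_inv_apply, CircleDeg1Lift.units_apply_inv_apply] at h
    simpa only [CircleDeg1Lift.units_inv_apply_apply] using
      (unit_strictMono g⁻¹).monotone ((unit_strictMono f⁻¹).monotone h)
  have hinv : τ (f⁻¹ * g⁻¹ : CircleDeg1Liftˣ) ≤
      τ (f⁻¹ : CircleDeg1Liftˣ) + τ (g⁻¹ : CircleDeg1Liftˣ) :=
    translationNumber_mul_le_of_mapsTo (O := {x | IsCommonFixedPoint D x}) ⟨q, hq⟩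
      (fun x hx => hx.apply (D.inv_mem hf)) (fun x hx => hx.apply (D.inv_mem hg)) hle_inv
  rw [← mul_inv_rev, CircleDeg1Lift.translationNumber_units_inv,
    CircleDeg1Lift.translationNumber_units_inv, CircleDeg1Lift.translationNumber_units_inv,
    ← translationNumber_mul_comm] at hinv
  linarith

/-- If `f * g` and `g * f` agree at one point, their quotient has a fixed point and hence they agree
at all common fixed points; otherwise one of them is everywhere the larger one. -/
theorem mul_comm_le_or_le (hf : f ∈ D) (hg : g ∈ D) :
    (∀ x, IsCommonFixedPoint D x → g (f x) ≤ f (g x)) ∨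
      ∀ x, IsCommonFixedPoint D x → f (g x) ≤ g (f x) := by
  by_contra! hcon
  obtain ⟨⟨a, ha, hlt⟩, b, -, hgt⟩ := hcon
  obtain ⟨x, hx⟩ := mem_range_of_exists_le_of_exists_ge (c := 0)
    (((unit_continuous f).comp (unit_continuous g)).sub
      ((unit_continuous g).comp (unit_continuous f)))
    ⟨a, sub_nonpos.2 hlt.le⟩ ⟨b, sub_nonneg.2 hgt.le⟩
  have hquot : ((g * f)⁻¹ * (f * g)) a = a :=
    ha _ (D.mul_mem (D.inv_mem (D.mul_mem hg hf)) (D.mul_mem hf hg))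
      ⟨x, unit_inv_apply_eq_of_apply_eq (f := g * f) (sub_eq_zero.1 hx).symm⟩
  have hcommute := congrArg (g * f : CircleDeg1Liftˣ) hquot
  rw [unit_mul_apply (g * f)⁻¹, CircleDeg1Lift.units_apply_inv_apply] at hcommute
  exact hlt.ne hcommute

theorem translationNumber_mul (hq : IsCommonFixedPoint D q) (hf : f ∈ D) (hg : g ∈ D) :
    τ (f * g : CircleDeg1Liftˣ) = τ f + τ g := by
  rcases mul_comm_le_or_le hf hg with hle | hle
  · exact hq.translationNumber_mul_of_le hf hg hle
  · rw [translationNumber_mul_comm, hq.translationNumber_mul_of_le hg hf hle, add_comm]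

end IsCommonFixedPoint

end TranslationNumber

/-! ### Lifting a circle action to the line -/

section IntTranslate

local notation "τ" => CircleDeg1Lift.translationNumber

/-- The translation of the line by an integer, a lift of the identity of the circle. -/
def intTranslate (n : ℤ) : CircleDeg1Liftˣ :=
  CircleDeg1Lift.translate (Multiplicative.ofAdd (n : ℝ))

theorem intTranslate_apply (n : ℤ) (x : ℝ) : intTranslate n x = n + x :=
  CircleDeg1Lift.translate_apply _ _

theorem intTranslate_zero : intTranslate 0 = 1 := by simp [intTranslate]

theorem commute_intTranslate (n : ℤ) (F : CircleDeg1Liftˣ) :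
    Commute (intTranslate n : CircleDeg1Lift) F :=
  CircleDeg1Lift.commute_iff_commute.2 fun x => by
    rw [intTranslate_apply, intTranslate_apply, CircleDeg1Lift.map_int_add]

theorem translationNumber_intTranslate_mul (n : ℤ) (F : CircleDeg1Liftˣ) :
    τ (intTranslate n * F : CircleDeg1Liftˣ) = n + τ F := by
  rw [Units.val_mul, CircleDeg1Lift.translationNumber_mul_of_commute (commute_intTranslate n F),
    intTranslate, CircleDeg1Lift.translationNumber_translate]

theorem coe_intTranslate_apply (n : ℤ) (x : ℝ) : (intTranslate n x : 𝕊) = x := by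
  rw [intTranslate_apply, add_comm, ← zsmul_one, AddCircle.coe_add,
    (AddCircle.coe_eq_zero_iff (1 : ℝ)).2 ⟨n, rfl⟩, add_zero]

end IntTranslate

section Lifts

variable {f g : Equiv.Perm 𝕊} {F H : CircleDeg1Liftˣ}

theorem isOPLift_of_unit (F : CircleDeg1Liftˣ) (hF : ∀ x : ℝ, f x = (F x : 𝕊)) :
    IsOPLift f F :=
  ⟨unit_continuous F, unit_strictMono F, CircleDeg1Lift.map_add_one _, hF⟩

theorem isC1Lift_intTranslate (n : ℤ) : IsC1Lift 1 (intTranslate n) := by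
  have hcoe : ⇑(intTranslate n : CircleDeg1Lift) = fun x => (n : ℝ) + x :=
    funext (intTranslate_apply n)
  refine ⟨isOPLift_of_unit _ fun x => (coe_intTranslate_apply n x).symm, ?_, fun x => ?_⟩
  · rw [hcoe]; exact contDiff_const.add contDiff_id
  · rw [hcoe]; simp

theorem isC1Lift_mul (hF : IsC1Lift f F) (hH : IsC1Lift g H) :
    IsC1Lift (f * g) (F * H : CircleDeg1Liftˣ) := by
  obtain ⟨hFop, hF1, hF0⟩ := hF
  obtain ⟨hHop, hH1, hH0⟩ := hH
  refine ⟨isOPLift_of_unit _ fun x => ?_, hF1.comp hH1, fun x => ?_⟩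
  · rw [Equiv.Perm.mul_apply, hHop.2.2.2, hFop.2.2.2, unit_mul_apply]
  · have hchain := deriv_comp x (hF1.differentiable one_ne_zero (H x))
      (hH1.differentiable one_ne_zero x)
    exact hchain ▸ mul_ne_zero (hF0 _) (hH0 _)

theorem isC1Lift_inv (hF : IsC1Lift f F) : IsC1Lift f⁻¹ (F⁻¹ : CircleDeg1Liftˣ) := by
  obtain ⟨hop, hF1, hF0⟩ := hF
  have hinv : ContDiff ℝ 1 (F⁻¹ : CircleDeg1Liftˣ) :=
    (CircleDeg1Lift.toOrderIso F).toHomeomorph.contDiff_symm_deriv (f' := deriv F) hF0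
      (fun x => (hF1.differentiable one_ne_zero x).hasDerivAt) hF1
  refine ⟨isOPLift_of_unit _ fun x => ?_, hinv, fun x hderiv => ?_⟩
  · rw [Equiv.Perm.inv_eq_iff_eq, hop.2.2.2, CircleDeg1Lift.units_apply_inv_apply]
  · have hchain := deriv_comp x (hF1.differentiable one_ne_zero (F⁻¹ x))
      (hinv.differentiable one_ne_zero x)
    rw [hderiv, mul_zero, show ⇑(F : CircleDeg1Lift) ∘ ⇑(F⁻¹ : CircleDeg1Liftˣ) = id from
      funext (CircleDeg1Lift.units_apply_inv_apply F), deriv_id] at hchain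
    exact one_ne_zero hchain

theorem exists_unit_isC1Lift (hf : IsC1Diffeo f) : ∃ F : CircleDeg1Liftˣ, IsC1Lift f F := by
  obtain ⟨F, hF⟩ := hf
  obtain ⟨hcont, hmono, hadd, -⟩ := hF.1
  let F' : CircleDeg1Lift := ⟨⟨F, hmono.monotone⟩, hadd⟩
  have hbij : Function.Bijective F' :=
    ⟨hmono.injective, (CircleDeg1Lift.continuous_iff_surjective F').1 hcont⟩
  obtain ⟨U, hU⟩ := CircleDeg1Lift.isUnit_iff_bijective.2 hbij
  exact ⟨U, by rw [hU]; exact hF⟩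

theorem exists_eq_intTranslate_of_isC1Lift_one (hF : IsC1Lift 1 F) :
    ∃ n : ℤ, F = intTranslate n := by
  have hmaps : Set.MapsTo (fun x => F x - x) Set.univ (AddSubgroup.zmultiples (1 : ℝ)) :=
    fun x _ => AddSubgroup.mem_zmultiples_iff.2 <| (AddCircle.coe_eq_zero_iff (1 : ℝ)).1 <| by
      rw [AddCircle.coe_sub, ← hF.1.2.2.2 x, Equiv.Perm.one_apply, sub_self]
  obtain ⟨_, ⟨n, rfl⟩, hn⟩ := isPreconnected_univ.eqOn_const_of_mapsTo
    ⟨inferInstanceAs (DiscreteTopology (AddSubgroup.zmultiples (1 : ℝ)))⟩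
    ((unit_continuous F).sub continuous_id).continuousOn hmaps ⟨0, zero_mem _⟩
  refine ⟨n, Units.ext (CircleDeg1Lift.ext fun x => ?_)⟩
  rw [intTranslate_apply, ← sub_eq_iff_eq_add]
  simpa using hn (Set.mem_univ x)

end Lifts

section LiftGroup

local notation "τ" => CircleDeg1Lift.translationNumber

variable {G : Type*} [Group G] {Γ Δ : Subgroup G} {ρ : Γ →* Equiv.Perm 𝕊} {g h : G}
  {F H : CircleDeg1Liftˣ} {q : ℝ}

/-- The central extension of `Γ` by `ℤ` formed by the lifts to the line of the circle action `ρ`,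
as a subgroup of pairs (group element, lift). -/
def liftGroup (ρ : Γ →* Equiv.Perm 𝕊) : Subgroup (G × CircleDeg1Liftˣ) where
  carrier := {p | ∃ h : p.1 ∈ Γ, IsC1Lift (ρ ⟨p.1, h⟩) p.2}
  one_mem' := ⟨Γ.one_mem, by
    have hone := isC1Lift_intTranslate 0
    rw [intTranslate_zero, ← map_one ρ] at hone
    exact hone⟩
  mul_mem' := fun {a b} ⟨ha, hF⟩ ⟨hb, hH⟩ => ⟨Γ.mul_mem ha hb, by
    have hmul := isC1Lift_mul hF hH
    rw [← map_mul] at hmul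
    exact hmul⟩
  inv_mem' := fun {a} ⟨ha, hF⟩ => ⟨Γ.inv_mem ha, by
    have hinv := isC1Lift_inv hF
    rw [← map_inv] at hinv
    exact hinv⟩

theorem exists_mem_liftGroup (hρ : ∀ g : Γ, IsC1Diffeo (ρ g)) (hg : g ∈ Γ) :
    ∃ F, (g, F) ∈ liftGroup ρ :=
  (exists_unit_isC1Lift (hρ ⟨g, hg⟩)).imp fun _ hF => ⟨hg, hF⟩

theorem intTranslate_mul_mem_liftGroup (n : ℤ) (hF : (g, F) ∈ liftGroup ρ) :
    (g, intTranslate n * F) ∈ liftGroup ρ := by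
  have hn : ((1 : G), intTranslate n) ∈ liftGroup ρ := by
    refine ⟨Γ.one_mem, ?_⟩
    have hone := isC1Lift_intTranslate n
    rw [← map_one ρ] at hone
    exact hone
  simpa using mul_mem hn hF

theorem exists_eq_intTranslate_mul (hF : (g, F) ∈ liftGroup ρ) (hH : (g, H) ∈ liftGroup ρ) :
    ∃ n : ℤ, H = intTranslate n * F := by
  obtain ⟨_, hone⟩ : ((1 : G), H * F⁻¹) ∈ liftGroup ρ := by simpa using mul_mem hH (inv_mem hF)
  obtain ⟨n, hn⟩ := exists_eq_intTranslate_of_isC1Lift_one (map_one ρ ▸ hone)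
  exact ⟨n, by rw [← hn, inv_mul_cancel_right]⟩

theorem commute_of_mem_liftGroup (hgh : Commute g h) (hF : (g, F) ∈ liftGroup ρ)
    (hH : (h, H) ∈ liftGroup ρ) : Commute F H := by
  have hconj : (h, F * H * F⁻¹) ∈ liftGroup ρ := by
    simpa [hgh.eq] using mul_mem (mul_mem hF hH) (inv_mem hF)
  obtain ⟨n, hn⟩ := exists_eq_intTranslate_mul hH hconj
  have hτ : τ (F * H * F⁻¹ : CircleDeg1Liftˣ) = τ H := by
    rw [translationNumber_mul_comm, inv_mul_cancel_left]
  rw [hn, translationNumber_intTranslate_mul, add_eq_right, Int.cast_eq_zero] at hτ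
  rw [hτ, intTranslate_zero, one_mul] at hn
  exact mul_inv_eq_iff_eq_mul.1 hn

theorem coe_translationNumber_eq (hF : (g, F) ∈ liftGroup ρ) (hH : (g, H) ∈ liftGroup ρ) :
    (τ F : 𝕊) = (τ H : 𝕊) := by
  obtain ⟨n, rfl⟩ := exists_eq_intTranslate_mul hF hH
  rw [translationNumber_intTranslate_mul, ← intTranslate_apply, coe_intTranslate_apply]

theorem eq_one_of_one_mem_liftGroup (hinj : Function.Injective ρ) (hg : (g, 1) ∈ liftGroup ρ) :
    g = 1 := by
  obtain ⟨hgΓ, hlift⟩ := hg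
  have hρg : ρ ⟨g, hgΓ⟩ = 1 := Equiv.ext fun x => by
    induction x using QuotientAddGroup.induction_on with
    | H x => exact hlift.1.2.2.2 x
  exact congrArg Subtype.val (hinj (hρg.trans (map_one ρ).symm))

theorem eq_of_mem_liftGroup_of_apply_eq (hF : (g, F) ∈ liftGroup ρ) (hH : (g, H) ∈ liftGroup ρ)
    (h : F q = H q) : F = H := by
  obtain ⟨n, rfl⟩ := exists_eq_intTranslate_mul hF hH
  rw [unit_mul_apply, intTranslate_apply, right_eq_add, Int.cast_eq_zero] at h
  rw [h, intTranslate_zero, one_mul]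

/-- The group of all lifts of the elements of `Δ`. -/
def liftsOf (ρ : Γ →* Equiv.Perm 𝕊) (Δ : Subgroup G) : Subgroup CircleDeg1Liftˣ :=
  (liftGroup ρ ⊓ Δ.comap (MonoidHom.fst G CircleDeg1Liftˣ)).map (MonoidHom.snd G CircleDeg1Liftˣ)

theorem mem_liftsOf : F ∈ liftsOf ρ Δ ↔ ∃ g ∈ Δ, (g, F) ∈ liftGroup ρ := by
  simp [liftsOf, Subgroup.mem_map, and_comm]

theorem commute_of_mem_liftsOf {Δ₁ Δ₂ : Subgroup G} (hcomm : ∀ g ∈ Δ₁, ∀ h ∈ Δ₂, Commute g h)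
    (hF : F ∈ liftsOf ρ Δ₁) (hH : H ∈ liftsOf ρ Δ₂) : Commute F H := by
  obtain ⟨g, hg, hgF⟩ := mem_liftsOf.1 hF
  obtain ⟨h, hh, hhH⟩ := mem_liftsOf.1 hH
  exact commute_of_mem_liftGroup (hcomm g hg h hh) hgF hhH

/-- The function `θ` is the rotation number, which is not additive without the common fixed
point `q`. -/
theorem exists_isAdditiveOn_rotationNumber (hρ : ∀ g : Γ, IsC1Diffeo (ρ g)) (hΔ : Δ ≤ Γ)
    (hq : IsCommonFixedPoint (liftsOf ρ Δ) q) :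
    ∃ θ : G → 𝕊, IsAdditiveOn Δ θ ∧
      ∀ g ∈ Δ, θ g = 0 → ∃ F : CircleDeg1Liftˣ, (g, F) ∈ liftGroup ρ ∧ F q = q := by
  choose! F hF using fun g (hg : g ∈ Δ) => exists_mem_liftGroup hρ (hΔ hg)
  refine ⟨fun g => (τ (F g) : 𝕊), fun g hg h hh => ?_, fun g hg hθ => ?_⟩
  · have hmul := hq.translationNumber_mul (mem_liftsOf.2 ⟨g, hg, hF g hg⟩)
      (mem_liftsOf.2 ⟨h, hh, hF h hh⟩)
    rw [← AddCircle.coe_add, ← hmul]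
    exact coe_translationNumber_eq (hF _ (Δ.mul_mem hg hh)) (mul_mem (hF g hg) (hF h hh))
  · obtain ⟨n, hn⟩ := (AddCircle.coe_eq_zero_iff (1 : ℝ)).1 hθ
    have hlift := intTranslate_mul_mem_liftGroup (-n) (hF g hg)
    have hτ : τ (intTranslate (-n) * F g : CircleDeg1Liftˣ) = (0 : ℤ) := by
      rw [translationNumber_intTranslate_mul, ← hn]; simp
    obtain ⟨x, hx⟩ := (CircleDeg1Lift.translationNumber_eq_int_iff _ (unit_continuous _)).1 hτ
    exact ⟨_, hlift, hq _ (mem_liftsOf.2 ⟨g, hg, hlift⟩) ⟨x, by simpa using hx⟩⟩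

theorem exists_isC1LineAction {M : Subgroup G} (hinj : Function.Injective ρ)
    (hM : ∀ g ∈ M, ∃ F : CircleDeg1Liftˣ, (g, F) ∈ liftGroup ρ ∧ F q = q) :
    ∃ (L : G → ℝ → ℝ) (hL : IsC1LineAction M L), M ≤ hL.stabilizer q ∧
      ∀ g ∈ M, (∀ x ≥ q, L g x = x) → g = 1 := by
  choose! F hF hFq using hM
  have hone : F 1 = 1 :=
    eq_of_mem_liftGroup_of_apply_eq (hF 1 M.one_mem) (one_mem _) (hFq 1 M.one_mem)
  have hmul (g) (hg : g ∈ M) (h) (hh : h ∈ M) : F (g * h) = F g * F h :=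
    eq_of_mem_liftGroup_of_apply_eq (hF _ (M.mul_mem hg hh)) (mul_mem (hF g hg) (hF h hh))
      (by rw [hFq _ (M.mul_mem hg hh), unit_mul_apply, hFq h hh, hFq g hg])
  refine ⟨fun g => F g, ⟨fun x => by rw [hone]; rfl, fun g hg h hh x => by rw [hmul g hg h hh]; rfl,
    fun g _ => unit_strictMono (F g), fun g hg => (hF g hg).2.2.1, fun g hg => (hF g hg).2.2.2⟩,
    fun g hg => ⟨hg, hFq g hg⟩, fun g hg hfix => ?_⟩
  have hFg : F g = 1 := Units.ext <| CircleDeg1Lift.ext fun x => by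
    have hx := hfix (x + ⌈q - x⌉) (by linarith [Int.le_ceil (q - x)])
    exact add_right_cancel ((CircleDeg1Lift.map_add_int _ x _).symm.trans hx)
  exact eq_one_of_one_mem_liftGroup hinj (hFg ▸ hF g hg)

end LiftGroup

section AdditiveKernel

theorem IsAdditiveOn.finiteIndex_ker {K A : Type*} [Group K] [AddCommGroup A] [Group.FG K]
    {H : Subgroup K} [H.FiniteIndex] {Φ : K → A} (hΦ : IsAdditiveOn H Φ)
    (htors : ∀ u ∈ H, IsOfFinAddOrder (Φ u)) : hΦ.ker.FiniteIndex := by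
  let χ : H →* Multiplicative A := MonoidHom.mk' (fun u => Multiplicative.ofAdd (Φ u))
    fun a b => congrArg Multiplicative.ofAdd (hΦ a a.2 b b.2)
  have hrange : Finite χ.range := by
    have : Group.FG χ.range := Group.fg_of_surjective χ.rangeRestrict_surjective
    refine CommGroup.finite_of_fg_isMulTorsion _ ?_
    rintro ⟨_, u, rfl⟩
    exact Submonoid.isOfFinOrder_coe.1 (isOfFinOrder_ofAdd_iff.2 (htors u u.2))
  have hker : hΦ.ker.subgroupOf H = χ.ker := by
    ext u
    exact and_iff_right u.2
  have hle : hΦ.ker ≤ H := fun u hu => hu.1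
  refine ⟨?_⟩
  rw [← Subgroup.relIndex_mul_index hle, Subgroup.relIndex, hker]
  exact mul_ne_zero (Subgroup.finiteIndex_ker χ).index_ne_zero Subgroup.FiniteIndex.index_ne_zero

end AdditiveKernel

section VirtualSystems

variable {α ι G A : Type*} [DecidableEq ι] [Group G] [AddCommGroup A] {Δ : Subgroup G} {Φ : G → A}

/-- The system sends the words built from some subgroups of finite index of the two free groups into
the subgroup `M`. -/
def TwistSystem.VirtuallyMapsInto (S : TwistSystem α ι G) (M : Subgroup G) : Prop :=
  ∃ (KP : Subgroup (FreeGroup α)) (KQ : Subgroup (FreeGroup ι)),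
    KP.FiniteIndex ∧ KQ.FiniteIndex ∧ S.MapsInto M KP KQ

/-- Each of the representations `T i` of the system extends to the representation `R` of a twist
system that virtually maps into `M`. -/
def TwistSystem.TExtendsInto (S : TwistSystem α ι G) (M : Subgroup G) : Prop :=
  ∀ i, ∃ B : TwistSystem α ι G, B.VirtuallyMapsInto M ∧ ∀ u, S.T i u = B.R (inlHom u)

theorem TwistSystem.VirtuallyMapsInto.exists_R_conjInl_mem_ker [Finite α] [Nontrivial ι]
    {S : TwistSystem α ι G} (hS : S.VirtuallyMapsInto Δ) (hΦ : IsAdditiveOn Δ Φ) :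
    ∃ K : Subgroup (FreeGroup α), K.FiniteIndex ∧ ∀ u ∈ K, ∀ v, S.R (conjInl v u) ∈ hΦ.ker := by
  obtain ⟨KP, KQ, _, _, hS⟩ := hS
  have hfin (v : FreeGroup ι) : (hΦ.ker.comap (S.R.comp (conjInl v))).FiniteIndex := by
    have hadd : IsAdditiveOn KP (fun u => Φ (S.R.comp (conjInl v) u)) :=
      (hΦ.comp_hom (S.R.comp (conjInl v))).mono fun u hu => hS.conj_mem u hu v
    have := hadd.finiteIndex_ker fun u hu => S.isOfFinAddOrder_map_R_conjInl hΦ hS hu v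
    exact Subgroup.finiteIndex_of_le (H := hadd.ker) fun u hu => ⟨hS.conj_mem u hu.1 v, hu.2⟩
  refine ⟨⨅ c : FreeGroup ι ⧸ KQ, hΦ.ker.comap (S.R.comp (conjInl c.out⁻¹)),
    Subgroup.finiteIndex_iInf fun c => hfin _, fun u hu v => ?_⟩
  let c : FreeGroup ι ⧸ KQ := (v⁻¹ : FreeGroup ι)
  obtain ⟨κ, hκ⟩ : ∃ κ : KQ, c.out = v⁻¹ * κ := QuotientGroup.mk_out_eq_mul KQ v⁻¹
  have hv : v = κ * c.out⁻¹ := by rw [hκ]; simp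
  have hmem : S.R (conjInl c.out⁻¹ u) ∈ hΦ.ker := Subgroup.mem_iInf.1 hu c
  have hκΔ := hS.inr_mem κ κ.2
  rw [hv, conjInl_mul, map_mul, map_mul, map_inv]
  exact ⟨Δ.mul_mem (Δ.mul_mem hκΔ hmem.1) (Δ.inv_mem hκΔ),
    (hΦ.map_conj hκΔ hmem.1).trans hmem.2⟩

theorem TwistSystem.exists_T_mem_ker_and_R_conjInl_mem_ker [Finite α] [Finite ι] [Nontrivial ι]
    {S : TwistSystem α ι G} (hS : S.VirtuallyMapsInto Δ) (hT : S.TExtendsInto Δ)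
    (hΦ : IsAdditiveOn Δ Φ) :
    ∃ K : Subgroup (FreeGroup α), K.FiniteIndex ∧
      (∀ i, ∀ u ∈ K, S.T i u ∈ hΦ.ker) ∧ ∀ u ∈ K, ∀ v, S.R (conjInl v u) ∈ hΦ.ker := by
  choose B hB hTB using hT
  obtain ⟨K, _, hK⟩ := hS.exists_R_conjInl_mem_ker hΦ
  choose K' hK'fin hK' using fun i => (hB i).exists_R_conjInl_mem_ker hΦ
  have := Subgroup.finiteIndex_iInf hK'fin
  refine ⟨K ⊓ ⨅ i, K' i, inferInstance, fun i u hu => ?_, fun u hu => hK u hu.1⟩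
  rw [hTB, ← conjInl_one (ι := ι)]
  exact hK' i u (Subgroup.mem_iInf.1 hu.2 i) 1

variable [DecidableEq α] [Finite α] [Finite ι] [Nontrivial α] [Nontrivial ι]
  {S : TwistSystem α ι G} {S' : TwistSystem ι α G}

/-- Otherwise the rotation number is additive on `Δ`. Its kernel still contains the images of
subgroups of finite index of the free groups, and acts on the line fixing `q`. -/
theorem not_isCommonFixedPoint_of_twistSystem {Γ : Subgroup G} {ρ : Γ →* Equiv.Perm 𝕊}
    (hρ : ∀ g : Γ, IsC1Diffeo (ρ g)) (hinj : Function.Injective ρ) (hΔ : Δ ≤ Γ)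
    (hd : S.IsDual S') (hR : Function.Injective S.R) (hS : S.VirtuallyMapsInto Δ)
    (hS' : S'.VirtuallyMapsInto Δ) (hT : S.TExtendsInto Δ) (hT' : S'.TExtendsInto Δ) (q : ℝ) :
    ¬IsCommonFixedPoint (liftsOf ρ Δ) q := by
  intro hq
  obtain ⟨θ, hθ, hlift⟩ := exists_isAdditiveOn_rotationNumber hρ hΔ hq
  obtain ⟨KP, _, hTP, hRP⟩ := TwistSystem.exists_T_mem_ker_and_R_conjInl_mem_ker hS hT hθ
  obtain ⟨KQ, _, hTQ, hRQ⟩ := TwistSystem.exists_T_mem_ker_and_R_conjInl_mem_ker hS' hT' hθ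
  obtain ⟨L, hL, hM, hfaithful⟩ :=
    exists_isC1LineAction (M := hθ.ker) hinj fun g hg => hlift g hg.1 hg.2
  obtain ⟨g, hg, hfix, hne⟩ := hL.not_faithful_of_twistSystem hM hd hR
    ⟨hTP, hRP, fun κ hκ => hd.R_inrHom κ ▸ hRQ κ hκ 1⟩
    ⟨hTQ, hRQ, fun κ hκ => hd.symm.R_inrHom κ ▸ hRP κ hκ 1⟩
  exact hne (hfaithful g hg hfix)

end VirtualSystems

/-! ### Transvections of a free group -/

section Transvections

open scoped Pointwise

variable {α β γ : Type*}

theorem mulAut_freeGroup_ext {g h : MulAut (FreeGroup β)} (hgh : ∀ b, g (.of b) = h (.of b)) :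
    g = h :=
  MulEquiv.toMonoidHom_injective (FreeGroup.ext_hom _ _ hgh)

/-- The automorphisms that fix the letters outside `X` and preserve the subgroup generated by `X`.
-/
def supportedAut (X : Set β) : Subgroup (MulAut (FreeGroup β)) :=
  fixingSubgroup _ (FreeGroup.of '' Xᶜ) ⊓
    MulAction.stabilizer _ (Subgroup.closure (FreeGroup.of '' X))

theorem apply_of_mem_supportedAut {X : Set β} {g : MulAut (FreeGroup β)} (hg : g ∈ supportedAut X)
    {b : β} (hb : b ∉ X) : g (.of b) = .of b :=
  (mem_fixingSubgroup_iff _).1 hg.1 _ ⟨b, hb, rfl⟩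

theorem apply_apply_of_mem_supportedAut {X Y : Set β} (hXY : Disjoint X Y)
    {g h : MulAut (FreeGroup β)} (hg : g ∈ supportedAut X) (hh : h ∈ supportedAut Y) {b : β}
    (hb : b ∈ X) : g (h (.of b)) = h (g (.of b)) := by
  have hgb : g (.of b) ∈ Subgroup.closure (FreeGroup.of '' X) := by
    have := Subgroup.smul_mem_pointwise_smul _ g _
      (Subgroup.subset_closure (Set.mem_image_of_mem FreeGroup.of hb))
    rwa [MulAction.mem_stabilizer_iff.1 hg.2] at this
  have hfix : Subgroup.closure (FreeGroup.of '' X) ≤ h.toMonoidHom.eqLocus (.id _) := by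
    rw [Subgroup.closure_le]
    rintro _ ⟨c, hc, rfl⟩
    exact apply_of_mem_supportedAut hh (hXY.notMem_of_mem_left hc)
  rw [apply_of_mem_supportedAut hh (hXY.notMem_of_mem_left hb)]
  exact (hfix hgb).symm

theorem commute_of_mem_supportedAut {X Y : Set β} (hXY : Disjoint X Y)
    {g h : MulAut (FreeGroup β)} (hg : g ∈ supportedAut X) (hh : h ∈ supportedAut Y) :
    Commute g h := by
  refine mulAut_freeGroup_ext fun b => ?_
  rw [MulAut.mul_apply, MulAut.mul_apply]
  by_cases hX : b ∈ X
  · exact apply_apply_of_mem_supportedAut hXY hg hh hX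
  by_cases hY : b ∈ Y
  · exact (apply_apply_of_mem_supportedAut hXY.symm hh hg hY).symm
  rw [apply_of_mem_supportedAut hg hX, apply_of_mem_supportedAut hh hY,
    apply_of_mem_supportedAut hg hX]

variable [DecidableEq β]

/-- The endomorphism multiplying the letter `y` on the right by the word `w`, whose letters are read
through `f`, and fixing the other letters. -/
def transvectionHom (y : β) (f : α → β) (w : FreeGroup α) : FreeGroup β →* FreeGroup β :=
  FreeGroup.lift (Function.update .of y (.of y * FreeGroup.map f w))

variable {y : β} {f : α → β}

theorem transvectionHom_self (w : FreeGroup α) :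
    transvectionHom y f w (.of y) = .of y * FreeGroup.map f w := by
  simp [transvectionHom]

theorem transvectionHom_of_ne (w : FreeGroup α) {b : β} (hb : b ≠ y) :
    transvectionHom y f w (.of b) = .of b := by
  simp [transvectionHom, hb]

theorem transvectionHom_map (w : FreeGroup α) {f' : γ → β} (hf' : ∀ c, f' c ≠ y)
    (v : FreeGroup γ) : transvectionHom y f w (FreeGroup.map f' v) = FreeGroup.map f' v := by
  have : (transvectionHom y f w).comp (FreeGroup.map f') = FreeGroup.map f' := by
    ext c; simp [transvectionHom_of_ne w (hf' c)]
  exact DFunLike.congr_fun this v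

theorem transvectionHom_mul (hf : ∀ a, f a ≠ y) (w w' : FreeGroup α) :
    transvectionHom y f (w * w') = (transvectionHom y f w).comp (transvectionHom y f w') := by
  ext b
  rw [MonoidHom.comp_apply]
  obtain rfl | hb := eq_or_ne b y
  · simp only [transvectionHom_self, map_mul, transvectionHom_map _ hf, mul_assoc]
  · simp only [transvectionHom_of_ne _ hb]

theorem transvectionHom_one : transvectionHom y f 1 = .id _ := by
  ext b
  obtain rfl | hb := eq_or_ne b y
  · simp [transvectionHom_self]
  · simp [transvectionHom_of_ne _ hb]

/-- The automorphisms multiplying the letter `y` on the right by words in other letters. -/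
def transvection (hf : ∀ a, f a ≠ y) : FreeGroup α →* MulAut (FreeGroup β) where
  toFun w := MonoidHom.toMulEquiv (transvectionHom y f w) (transvectionHom y f w⁻¹)
    (by rw [← transvectionHom_mul hf, inv_mul_cancel, transvectionHom_one])
    (by rw [← transvectionHom_mul hf, mul_inv_cancel, transvectionHom_one])
  map_one' := MulEquiv.toMonoidHom_injective transvectionHom_one
  map_mul' w w' := MulEquiv.toMonoidHom_injective (transvectionHom_mul hf w w')

theorem transvection_apply (hf : ∀ a, f a ≠ y) (w : FreeGroup α) (x : FreeGroup β) :
    transvection hf w x = transvectionHom y f w x := rfl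

theorem transvection_eq {y' : β} {f' : γ → β} {w : FreeGroup α} {w' : FreeGroup γ}
    (hf : ∀ a, f a ≠ y) (hf' : ∀ c, f' c ≠ y') (hy : y = y')
    (hw : FreeGroup.map f w = FreeGroup.map f' w') : transvection hf w = transvection hf' w' := by
  ext x
  rw [transvection_apply, transvection_apply, transvectionHom, transvectionHom, hw, hy]

theorem transvection_injective (hf : ∀ a, f a ≠ y) (hinj : Function.Injective f) :
    Function.Injective (transvection hf) := by
  intro w w' h
  have hy := DFunLike.congr_fun h (.of y)
  rw [transvection_apply, transvection_apply, transvectionHom_self, transvectionHom_self] at hy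
  exact FreeGroup.map_injective hinj (mul_left_cancel hy)

theorem transvection_smul_closure_le {X : Set β} (hf : ∀ a, f a ≠ y) (hfX : ∀ a, f a ∈ X)
    (w : FreeGroup α) : transvection hf w • Subgroup.closure (FreeGroup.of '' X) ≤
      Subgroup.closure (FreeGroup.of '' X) := by
  rw [Subgroup.smul_closure, Subgroup.closure_le]
  rintro _ ⟨_, ⟨b, hb, rfl⟩, rfl⟩
  have hof : ∀ c ∈ X, FreeGroup.of c ∈ Subgroup.closure (FreeGroup.of '' X) :=
    fun c hc => Subgroup.subset_closure ⟨c, hc, rfl⟩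
  have hmap : (FreeGroup.map f).range ≤ Subgroup.closure (FreeGroup.of '' X) := by
    rw [FreeGroup.map_eq_lift]
    exact FreeGroup.range_lift_le (Set.range_subset_iff.2 fun a => hof _ (hfX a))
  change transvectionHom y f w (.of b) ∈ _
  obtain rfl | hby := eq_or_ne b y
  · rw [transvectionHom_self]
    exact mul_mem (hof b hb) (hmap ⟨w, rfl⟩)
  · rw [transvectionHom_of_ne _ hby]
    exact hof b hb

theorem transvection_mem_supportedAut {X : Set β} (hf : ∀ a, f a ≠ y) (hy : y ∈ X)
    (hfX : ∀ a, f a ∈ X) (w : FreeGroup α) : transvection hf w ∈ supportedAut X := by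
  refine ⟨(mem_fixingSubgroup_iff _).2 ?_, MulAction.mem_stabilizer_iff.2 (le_antisymm
    (transvection_smul_closure_le hf hfX w) ?_)⟩
  · rintro _ ⟨b, hb, rfl⟩
    exact transvectionHom_of_ne w fun hby => hb (hby ▸ hy)
  · rw [Subgroup.subset_pointwise_smul_iff, ← map_inv]
    exact transvection_smul_closure_le hf hfX w⁻¹

end Transvections

section TransvectionSystem

variable {α ι β : Type*} [DecidableEq β] [DecidableEq ι] (e : Option (α ⊕ ι) ↪ β)

theorem transvectionHom_map_twist (i : ι) (u : FreeGroup α) (w : FreeGroup (α ⊕ ι)) :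
    transvectionHom (e (some (.inr i))) (fun a => e (some (.inl a))) u
        (FreeGroup.map (fun a => e (some a)) w) =
      FreeGroup.map (fun a => e (some a)) (twist i u w) := by
  have hmap : FreeGroup.map (fun a => e (some a)) (inlHom u) =
      FreeGroup.map (fun a => e (some (.inl a))) u := by
    rw [inlHom, FreeGroup.map.comp]; rfl
  suffices (transvectionHom (e (some (.inr i))) (fun a => e (some (.inl a))) u).comp
      (FreeGroup.map fun a => e (some a)) =
        (FreeGroup.map fun a => e (some a)).comp (twist i u) from
    DFunLike.congr_fun this w
  ext (a | k)
  · simp [twist, transvectionHom_of_ne]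
  · obtain rfl | hk := eq_or_ne k i
    · simp [twist, hmap, transvectionHom_self]
    · simp [twist, hk, transvectionHom_of_ne]

/-- The twist system formed by the transvections of the letters `none` and `some (inr i)`, for a
family of distinct letters indexed by `Option (α ⊕ ι)`. -/
def transvectionSystem : TwistSystem α ι (MulAut (FreeGroup β)) where
  R := transvection (y := e none) (f := fun a => e (some a)) fun a => by simp
  T i := transvection (y := e (some (.inr i))) (f := fun a => e (some (.inl a))) fun a => by simp
  conj_R i u w := by
    refine mul_inv_eq_iff_eq_mul.2 (mulAut_freeGroup_ext fun b => ?_)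
    simp only [MulAut.mul_apply, transvection_apply]
    have hi : e none ≠ e (some (.inr i)) := by simp
    obtain rfl | hb := eq_or_ne b (e none)
    · rw [transvectionHom_of_ne _ hi, transvectionHom_self, transvectionHom_self, map_mul,
        transvectionHom_of_ne _ hi, transvectionHom_map_twist]
    rw [transvectionHom_of_ne _ hb]
    obtain rfl | hbi := eq_or_ne b (e (some (.inr i)))
    · rw [transvectionHom_self, map_mul, transvectionHom_of_ne _ hb,
        transvectionHom_map _ fun a => by simp]
    · rw [transvectionHom_of_ne _ hbi, transvectionHom_of_ne _ hb]

theorem transvectionSystem_R_injective : Function.Injective (transvectionSystem e).R :=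
  transvection_injective (fun a => by simp) (e.injective.comp (Option.some_injective _))

theorem transvectionSystem_isDual [DecidableEq α] : (transvectionSystem e).IsDual
    (transvectionSystem ((Equiv.optionCongr (Equiv.sumComm ι α)).toEmbedding.trans e)) :=
  fun w => transvection_eq (by simp) (by simp) rfl (by rw [FreeGroup.map.comp]; rfl)

theorem transvectionSystem_T_eq [DecidableEq α] (i : ι) (u : FreeGroup α) :
    (transvectionSystem e).T i u = (transvectionSystem
      ((Equiv.swap none (some (.inr i))).toEmbedding.trans e)).R (inlHom u) :=
  transvection_eq (by simp) (fun _ => (Function.Embedding.injective _).ne (by simp)) (by simp)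
    (by rw [inlHom, FreeGroup.map.comp]; rfl)

theorem finiteIndex_comap {G G' : Type*} [Group G] [Group G'] (N : Subgroup G) [N.FiniteIndex]
    (f : G' →* G) : (N.comap f).FiniteIndex :=
  ⟨by rw [Subgroup.index_comap]; exact Subgroup.FiniteIndex.index_ne_zero⟩

variable {e} {N : Subgroup (MulAut (FreeGroup β))} [N.Normal] [N.FiniteIndex] {X : Set β} [Finite ι]

theorem transvectionSystem_virtuallyMapsInto (he : ∀ a, e a ∈ X) :
    (transvectionSystem e).VirtuallyMapsInto (N ⊓ supportedAut X) := by
  set S := transvectionSystem e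
  have hRX (w) : S.R w ∈ supportedAut X :=
    transvection_mem_supportedAut (by simp) (he _) (fun _ => he _) w
  have hTX (i u) : S.T i u ∈ supportedAut X :=
    transvection_mem_supportedAut (by simp) (he _) (fun _ => he _) u
  have := finiteIndex_comap N (S.R.comp inlHom)
  have := Subgroup.finiteIndex_iInf fun i => finiteIndex_comap N (S.T i)
  refine ⟨N.comap (S.R.comp inlHom) ⊓ ⨅ i, N.comap (S.T i), N.comap (S.R.comp inrHom),
    inferInstance, finiteIndex_comap N _, fun i u hu => ⟨Subgroup.mem_iInf.1 hu.2 i, hTX i u⟩,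
    fun u hu v => ⟨?_, hRX _⟩, fun κ hκ => ⟨hκ, hRX _⟩⟩
  rw [conjInl_apply, map_mul, map_mul, map_inv]
  exact Subgroup.Normal.conj_mem (H := N) inferInstance _ hu.1 _

theorem transvectionSystem_tExtendsInto (he : ∀ a, e a ∈ X) :
    (transvectionSystem e).TExtendsInto (N ⊓ supportedAut X) := fun i => by
  classical
  refine ⟨_, ?_, transvectionSystem_T_eq e i⟩
  exact transvectionSystem_virtuallyMapsInto fun _ => he _

end TransvectionSystem

theorem not_isCommonFixedPoint_liftsOf_supportedAut {α ι β : Type*} [Finite α] [Finite ι]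
    [Nontrivial α] [Nontrivial ι] {e : Option (α ⊕ ι) ↪ β} {X : Set β} (he : ∀ a, e a ∈ X)
    {Γ : Subgroup (MulAut (FreeGroup β))} [Γ.FiniteIndex] {ρ : Γ →* Equiv.Perm 𝕊}
    (hρ : ∀ g : Γ, IsC1Diffeo (ρ g)) (hinj : Function.Injective ρ) (q : ℝ) :
    ¬IsCommonFixedPoint (liftsOf ρ (Γ.normalCore ⊓ supportedAut X)) q := by
  classical
  exact not_isCommonFixedPoint_of_twistSystem hρ hinj (inf_le_left.trans Γ.normalCore_le)
    (transvectionSystem_isDual e) (transvectionSystem_R_injective e)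
    (transvectionSystem_virtuallyMapsInto he) (transvectionSystem_virtuallyMapsInto fun _ => he _)
    (transvectionSystem_tExtendsInto he) (transvectionSystem_tExtendsInto fun _ => he _) q

theorem exists_embeddings_disjoint_range {β : Type*} (hβ : 10 ≤ Cardinal.mk β) :
    ∃ e₁ e₂ : Option (Fin 2 ⊕ Fin 2) ↪ β, Disjoint (Set.range e₁) (Set.range e₂) := by
  obtain ⟨f⟩ : Nonempty (Option (Fin 2 ⊕ Fin 2) ⊕ Option (Fin 2 ⊕ Fin 2) ↪ β) :=
    Cardinal.lift_mk_le'.1 (by norm_num; exact hβ)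
  refine ⟨Function.Embedding.inl.trans f, Function.Embedding.inr.trans f, ?_⟩
  rw [Set.disjoint_left]
  rintro _ ⟨a, rfl⟩ ⟨b, hb⟩
  simpa using f.injective hb

end CircleAction

open CircleAction in
theorem aut_finite_index_action_not_faithful_general {β : Type*} (hβ : 10 ≤ Cardinal.mk β)
    (Γ : Subgroup (MulAut (FreeGroup β))) [Γ.FiniteIndex]
    (ρ : Γ →* Equiv.Perm 𝕊) (hρ : ∀ g : Γ, IsC1Diffeo (ρ g)) :
    ¬ Function.Injective ρ := by
  intro hinj
  obtain ⟨e₁, e₂, hdisj⟩ := exists_embeddings_disjoint_range hβ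
  have hcomm : ∀ g ∈ Γ.normalCore ⊓ supportedAut (Set.range e₁),
      ∀ h ∈ Γ.normalCore ⊓ supportedAut (Set.range e₂), Commute g h :=
    fun g hg h hh => commute_of_mem_supportedAut hdisj hg.2 hh.2
  obtain ⟨q, hq⟩ | ⟨q, hq⟩ := exists_isCommonFixedPoint_or_of_commute fun F hF H hH =>
    commute_of_mem_liftsOf (ρ := ρ) hcomm hF hH
  · exact not_isCommonFixedPoint_liftsOf_supportedAut Set.mem_range_self hρ hinj q hq
  · exact not_isCommonFixedPoint_liftsOf_supportedAut Set.mem_range_self hρ hinj q hq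

/-- For `n ≥ 10`, any orientation preserving `C¹` action of an arbitrary
finite index subgroup `Γ` of `Aut(Fₙ)` on the circle cannot be faithful. -/
theorem aut_finite_index_action_not_faithful
    (n : ℕ) (hn : 10 ≤ n)
    (Γ : Subgroup (AutF n)) [Γ.FiniteIndex]
    (ρ : Γ →* Equiv.Perm 𝕊) (hρ : ∀ g : Γ, IsC1Diffeo (ρ g)) :
    ¬ Function.Injective ρ :=
  aut_finite_index_action_not_faithful_general (by simpa using mod_cast hn) Γ ρ hρ
end
end

section
/- For n ≥ 10, any orientation preserving C^1 action of an arbitrary finite index subgroup Γ of Out(F_n) on the circle cannot be faithful; that is, every group homomorphism Γ → Diff^1_+(S^1) has nontrivial kernel. -/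
noncomputable section

open MeasureTheory

/-- The subgroup of inner automorphisms of `Fₙ`. -/
def InnF (n : ℕ) : Subgroup (AutF n) := (MulAut.conj : FreeGrp n →* AutF n).range

instance (n : ℕ) : (InnF n).Normal := by
  constructor
  rintro _ ⟨g, rfl⟩ e
  refine ⟨e g, ?_⟩
  ext x
  simp [MulAut.conj_apply, MulAut.mul_apply, MulAut.inv_def, map_mul, map_inv]

/-- The outer automorphism group `Out(Fₙ) = Aut(Fₙ)/Inn(Fₙ)`. -/
def OutF (n : ℕ) : Type := AutF n ⧸ InnF n

instance (n : ℕ) : Group (OutF n) := QuotientGroup.Quotient.group (InnF n)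

/-- The Torelli subgroup `𝒯ₙ ≤ Out(Fₙ)`: the subgroup of outer automorphisms acting
trivially on the abelianization `Fₙ^{ab} ≅ ℤⁿ`, i.e. the kernel of the induced map
`Out(Fₙ) → Aut(ℤⁿ)`.  Since inner automorphisms act trivially on the abelianization,
this kernel is exactly the image of `IAₙ` in `Out(Fₙ)`. -/
def Torelli (n : ℕ) : Subgroup (OutF n) :=
  (IA n).map (QuotientGroup.mk' (InnF n))

/-!
Two disjoint sets of five of the generators of `Fₙ` give commuting subgroups of `Aut(Fₙ)`, generated
by the transvections multiplying one generator of the set by a word in the others. Suitable finitely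
generated subgroups of these map into `Γ` and have no nontrivial homomorphism to `ℝ`: such a
homomorphism would yield functions on a finite quotient of `F₂` which are coboundaries in two ways,
and summing squares shows that they vanish.

Let two such groups `G` and `H` act on the circle by commuting homeomorphisms. Then one of them has
a finite orbit. Indeed, if two disjoint closed sets are invariant under `G`, then sending a point of
the first to the next point of the second commutes with `G` and takes finitely many values.
Otherwise, by compactness, there is a point `x₀` lying in every nonempty closed `G`-invariant set,
in particular in the fixed point set of every `h : H` which has a fixed point. The order on the
orbit of `x₀` then makes the rotation number a homomorphism on `H`; its kernel has finite index and
fixes `x₀`.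

A point with a finite orbit is fixed by a smaller group of the same kind, which acts trivially by
Thurston stability, yet contains powers of transvections, and these are not inner.
-/

section

open Asymptotics Filter Topology

section Characters

variable {G : Type*} [Group G]

lemma eq_zero_of_map_mul_eq_add [Subsingleton (G →* Multiplicative ℝ)] {f : G → ℝ}
    (hf : ∀ g h, f (g * h) = f g + f h) (g : G) : f g = 0 :=
  let φ : G →* Multiplicative ℝ :=
    MonoidHom.mk' (fun g ↦ Multiplicative.ofAdd (f g)) fun g h ↦ by rw [hf, ofAdd_add]
  congrArg Multiplicative.toAdd (DFunLike.congr_fun (Subsingleton.elim φ 1) g)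

theorem finiteIndex_ker_of_commGroup {A : Type*} [Group.FG G]
    [Subsingleton (G →* Multiplicative ℝ)] [CommGroup A] (φ : G →* A) : φ.ker.FiniteIndex := by
  have : Group.FG φ.range := Group.fg_range φ
  obtain ⟨ι, κ, _, _, p, hp, e, ⟨E⟩⟩ := CommGroup.equiv_free_prod_prod_multiplicative_zmod φ.range
  have no_free_part : IsEmpty κ := by
    refine ⟨fun k ↦ ?_⟩
    let coordinate : G →* Multiplicative ℝ :=
      (AddMonoidHom.toMultiplicative (Int.castAddHom ℝ)).comp
        ((Pi.evalMonoidHom (fun _ : κ ↦ Multiplicative ℤ) k).comp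
          ((MonoidHom.fst _ _).comp (E.toMonoidHom.comp φ.rangeRestrict)))
    obtain ⟨g, hg⟩ := φ.rangeRestrict_surjective (E.symm (fun _ ↦ Multiplicative.ofAdd 1, 1))
    have htrivial := DFunLike.congr_fun (Subsingleton.elim coordinate 1) g
    simp [coordinate, hg] at htrivial
  have (i : ι) : NeZero (p i ^ e i) := ⟨pow_ne_zero _ (hp i).ne_zero⟩
  have (i : ι) : Finite (Multiplicative (ZMod (p i ^ e i))) :=
    inferInstanceAs (Finite (ZMod (p i ^ e i)))
  have : Finite φ.range := Finite.of_equiv _ E.symm.toEquiv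
  exact Subgroup.finiteIndex_ker φ

end Characters

section Stability

variable {G : Type*} [Group G] [MulAction G ℝ]

lemma deriv_smul_eq_one [Subsingleton (G →* Multiplicative ℝ)]
    (hdiff : ∀ g : G, Differentiable ℝ fun x : ℝ ↦ g • x)
    (hmono : ∀ g : G, Monotone fun x : ℝ ↦ g • x) {a : ℝ} (ha : ∀ g : G, g • a = a) (g : G) :
    deriv (fun x : ℝ ↦ g • x) a = 1 := by
  set d : G → ℝ := fun g ↦ deriv (fun x : ℝ ↦ g • x) a with hd
  have d_mul (g h : G) : d (g * h) = d g * d h := by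
    have key := deriv_comp (h₂ := fun x : ℝ ↦ g • x) (h := fun x : ℝ ↦ h • x) a (hdiff g _)
      (hdiff h a)
    simpa only [hd, Function.comp_def, smul_smul, ha h] using key
  have d_ne_zero (g : G) : d g ≠ 0 := fun h ↦ by
    have h_one : d (g * g⁻¹) = 1 := by simp [hd]
    rw [d_mul, h, zero_mul] at h_one
    exact zero_ne_one h_one
  have d_pos (g : G) : 0 < d g := ((hmono g).deriv_nonneg).lt_of_ne' (d_ne_zero g)
  have log_d : Real.log (d g) = 0 := eq_zero_of_map_mul_eq_add (f := fun g ↦ Real.log (d g))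
    (fun g h ↦ by rw [d_mul, Real.log_mul (d_ne_zero g) (d_ne_zero h)]) g
  exact Real.eq_one_of_pos_of_log_eq_zero (d_pos g) log_d

/-- The displacement of the point `x` under `g`, the quantity whose first-order behaviour near a
global fixed point is additive in `g`. -/
def displacement (g : G) (x : ℝ) : ℝ := g • x - x

lemma displacement_mul_sub_isLittleO {g h : G} {a : ℝ}
    (hg : HasStrictDerivAt (fun x : ℝ ↦ g • x) 1 a) (hh : ContinuousAt (fun x : ℝ ↦ h • x) a)
    (ha : h • a = a) :
    (fun x ↦ displacement (g * h) x - displacement g x - displacement h x) =o[𝓝 a]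
      displacement h := by
  have pair : Tendsto (fun x : ℝ ↦ (h • x, x)) (𝓝 a) (𝓝 (a, a)) :=
    Tendsto.prodMk_nhds (by simpa only [ContinuousAt, ha] using hh) tendsto_id
  refine (hg.isLittleO.comp_tendsto pair).congr_left fun x ↦ ?_
  simp [displacement, mul_smul]

/-- The total displacement of `x` under a finite set `S`. -/
def totalDisplacement (S : Finset G) (x : ℝ) : ℝ := ∑ s ∈ S, |displacement s x|

lemma smul_eq_of_totalDisplacement_eq_zero {S : Finset G}
    (hS : Subgroup.closure (S : Set G) = ⊤) {x : ℝ} (hx : totalDisplacement S x = 0) (g : G) :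
    g • x = x := by
  have hsub : Subgroup.closure (S : Set G) ≤ MulAction.stabilizer G x := by
    refine (Subgroup.closure_le _).2 fun s hs ↦ ?_
    have := (Finset.sum_eq_zero_iff_of_nonneg fun s _ ↦ abs_nonneg _).1 hx s hs
    exact sub_eq_zero.1 (abs_eq_zero.1 this)
  exact hsub (hS ▸ Subgroup.mem_top g)

lemma displacement_isBigO_totalDisplacement {S : Finset G}
    (hS : Subgroup.closure (S : Set G) = ⊤) {a : ℝ}
    (hderiv : ∀ g : G, HasStrictDerivAt (fun x : ℝ ↦ g • x) 1 a) (ha : ∀ g : G, g • a = a)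
    (g : G) : displacement g =O[𝓝 a] totalDisplacement S := by
  have almost_add (g h : G) :=
    displacement_mul_sub_isLittleO (hderiv g) (hderiv h).hasDerivAt.continuousAt (ha h)
  induction (hS ▸ Subgroup.mem_top g : g ∈ Subgroup.closure (S : Set G))
    using Subgroup.closure_induction with
  | mem s hs =>
    refine IsBigO.of_norm_le fun x ↦ ?_
    exact Finset.single_le_sum (f := fun s ↦ |displacement s x|) (fun _ _ ↦ abs_nonneg _) hs
  | one => exact (isBigO_zero _ _).congr_left fun x ↦ by simp [displacement]
  | mul g h _ _ hg hh =>
    refine (((almost_add g h).isBigO.trans hh).add (hg.add hh)).congr_left fun x ↦ ?_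
    ring
  | inv g _ hg =>
    refine (((almost_add g⁻¹ g).isBigO.trans hg).add hg).neg_left.congr_left fun x ↦ ?_
    simp [displacement]

lemma exists_tendsto_div_of_isBigO {α : Type*} {l : Ultrafilter α} {u v : α → ℝ}
    (h : u =O[(l : Filter α)] v) : ∃ c, Tendsto (fun x ↦ u x / v x) l (𝓝 c) := by
  obtain ⟨C, hC⟩ := div_isBoundedUnder_of_isBigO h
  have hball : (l.map fun x ↦ u x / v x : Filter ℝ) ≤ 𝓟 (Metric.closedBall 0 C) :=
    le_principal_iff.2 <| (eventually_map.1 hC).mono fun x hx ↦ mem_closedBall_zero_iff.2 hx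
  obtain ⟨c, -, hc⟩ := (isCompact_closedBall (0 : ℝ) C).ultrafilter_le_nhds
    (l.map fun x ↦ u x / v x) hball
  exact ⟨c, hc⟩

/- If points arbitrarily close to `a` were moved, the displacements divided by the total
displacement of a generating set would converge, along an ultrafilter, to a nonzero character. -/
theorem eventually_smul_eq [Group.FG G] [Subsingleton (G →* Multiplicative ℝ)]
    (hC1 : ∀ g : G, ContDiff ℝ 1 fun x : ℝ ↦ g • x)
    (hmono : ∀ g : G, Monotone fun x : ℝ ↦ g • x) {a : ℝ} (ha : ∀ g : G, g • a = a) :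
    ∀ᶠ x in 𝓝 a, ∀ g : G, g • x = x := by
  obtain ⟨S, hS⟩ := Group.fg_def.1 ‹Group.FG G›
  have hderiv (g : G) : HasStrictDerivAt (fun x : ℝ ↦ g • x) 1 a := by
    rw [← deriv_smul_eq_one (fun g ↦ (hC1 g).differentiable one_ne_zero) hmono ha g]
    exact (hC1 g).contDiffAt.hasStrictDerivAt one_ne_zero
  have hO := displacement_isBigO_totalDisplacement hS hderiv ha
  by_contra hmoved
  have : (𝓝 a ⊓ 𝓟 {x | ¬ ∀ g : G, g • x = x}).NeBot :=
    frequently_iff_neBot.1 (not_eventually.1 hmoved)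
  let l := Ultrafilter.of (𝓝 a ⊓ 𝓟 {x | ¬ ∀ g : G, g • x = x})
  have hla : (l : Filter ℝ) ≤ 𝓝 a := (Ultrafilter.of_le _).trans inf_le_left
  have hl : ∀ᶠ x in l, totalDisplacement S x ≠ 0 := by
    filter_upwards [(Ultrafilter.of_le _).trans inf_le_right (mem_principal_self _)] with x hx h0
    exact hx (smul_eq_of_totalDisplacement_eq_zero hS h0)
  choose χ hχ using fun g ↦ exists_tendsto_div_of_isBigO ((hO g).mono hla)
  have χ_add (g h : G) : χ (g * h) = χ g + χ h := by
    have hlittle := ((displacement_mul_sub_isLittleO (hderiv g)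
      (hderiv h).hasDerivAt.continuousAt (ha h)).trans_isBigO (hO h)).mono hla
    have h0 := tendsto_nhds_unique hlittle.tendsto_div_nhds_zero
      ((((hχ (g * h)).sub (hχ g)).sub (hχ h)).congr fun x ↦ by ring)
    linarith
  have hsum : Tendsto (fun x ↦ totalDisplacement S x / totalDisplacement S x) l (𝓝 0) := by
    have habs : Tendsto (fun x ↦ ∑ s ∈ S, |displacement s x / totalDisplacement S x|) l
        (𝓝 (∑ s ∈ S, |χ s|)) := tendsto_finsetSum S fun s _ ↦ (hχ s).abs
    simp only [eq_zero_of_map_mul_eq_add χ_add, abs_zero, Finset.sum_const_zero] at habs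
    refine habs.congr fun x ↦ ?_
    have hnonneg : 0 ≤ totalDisplacement S x := Finset.sum_nonneg fun s _ ↦ abs_nonneg _
    simp_rw [abs_div, ← Finset.sum_div, abs_of_nonneg hnonneg]
    rfl
  have hone : Tendsto (fun x ↦ totalDisplacement S x / totalDisplacement S x) l (𝓝 1) :=
    tendsto_const_nhds.congr' (hl.mono fun x hx ↦ (div_self hx).symm)
  exact zero_ne_one (tendsto_nhds_unique hsum hone)

theorem smul_eq_of_exists_fixed_real [Group.FG G] [Subsingleton (G →* Multiplicative ℝ)]
    (hC1 : ∀ g : G, ContDiff ℝ 1 fun x : ℝ ↦ g • x)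
    (hmono : ∀ g : G, Monotone fun x : ℝ ↦ g • x) {a : ℝ} (ha : ∀ g : G, g • a = a) (g : G)
    (x : ℝ) : g • x = x := by
  have hclosed : IsClosed (MulAction.fixedPoints G ℝ) := by
    simp only [MulAction.fixedPoints, Set.ofPred_forall]
    exact isClosed_iInter fun g ↦ isClosed_eq (hC1 g).continuous continuous_id
  have hopen : IsOpen (MulAction.fixedPoints G ℝ) :=
    isOpen_iff_mem_nhds.2 fun b hb ↦ eventually_smul_eq hC1 hmono hb
  exact (IsClopen.eq_univ ⟨hclosed, hopen⟩ ⟨a, ha⟩).ge (Set.mem_univ x) g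

end Stability

section Lifts

lemma coe_circle_eq_iff (x y : ℝ) : (x : 𝕊) = (y : 𝕊) ↔ ∃ n : ℤ, y = x + n := by
  rw [eq_comm, ← sub_eq_zero, ← AddCircle.coe_sub, AddCircle.coe_eq_zero_iff]
  simp only [zsmul_eq_mul, mul_one, eq_sub_iff_add_eq', @eq_comm ℝ y]

lemma coe_add_int (x : ℝ) (n : ℤ) : ((x + n : ℝ) : 𝕊) = x :=
  ((coe_circle_eq_iff _ _).2 ⟨n, rfl⟩).symm

namespace IsOPLift

variable {f g : Equiv.Perm 𝕊} {F F' : ℝ → ℝ}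

/-- An orientation preserving lift as a monotone degree one map, the form in which translation
numbers are available. -/
def toCircleDeg1Lift (h : IsOPLift f F) : CircleDeg1Lift where
  toFun := F
  monotone' := h.2.1.monotone
  map_add_one' := h.2.2.1

lemma toCircleDeg1Lift_apply (h : IsOPLift f F) (x : ℝ) : h.toCircleDeg1Lift x = F x := rfl

lemma map_add_int (h : IsOPLift f F) (x : ℝ) (n : ℤ) : F (x + n) = F x + n :=
  h.toCircleDeg1Lift.map_add_int x n

/-- An orientation preserving lift as an order isomorphism of the line. -/
def toOrderIso (h : IsOPLift f F) : ℝ ≃o ℝ :=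
  h.2.1.orderIsoOfSurjective F (h.toCircleDeg1Lift.continuous_iff_surjective.1 h.1)

lemma toOrderIso_apply (h : IsOPLift f F) (x : ℝ) : h.toOrderIso x = F x := rfl

lemma one : IsOPLift 1 id := ⟨continuous_id, strictMono_id, fun _ ↦ rfl, fun _ ↦ rfl⟩

lemma mul (hf : IsOPLift f F) (hg : IsOPLift g F') : IsOPLift (f * g) (F ∘ F') :=
  ⟨hf.1.comp hg.1, hf.2.1.comp hg.2.1,
    fun x ↦ by rw [Function.comp_apply, hg.2.2.1, hf.2.2.1, Function.comp_apply],
    fun x ↦ by rw [Equiv.Perm.mul_apply, hg.2.2.2, hf.2.2.2, Function.comp_apply]⟩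

lemma mul_toPerm {G : Type*} [Group G] [MulAction G 𝕊] {g h : G}
    (hg : IsOPLift (MulAction.toPerm g) F) (hh : IsOPLift (MulAction.toPerm h) F') :
    IsOPLift (MulAction.toPerm (g * h)) (F ∘ F') := by
  have toPerm_mul : (MulAction.toPerm (g * h) : Equiv.Perm 𝕊) =
      MulAction.toPerm g * MulAction.toPerm h := (MulAction.toPermHom G 𝕊).map_mul g h
  exact toPerm_mul ▸ hg.mul hh

lemma add_int (h : IsOPLift f F) (n : ℤ) : IsOPLift f fun x ↦ F x + n :=
  ⟨h.1.add continuous_const, h.2.1.add_const _, fun x ↦ by simp only [h.2.2.1, add_right_comm],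
    fun x ↦ by rw [h.2.2.2, coe_add_int]⟩

lemma exists_eq_add_int (h : IsOPLift f F) (h' : IsOPLift f F') :
    ∃ n : ℤ, ∀ x, F' x = F x + n := by
  have pointwise (x : ℝ) : ∃ n : ℤ, F' x = F x + n := by
    rw [← coe_circle_eq_iff, ← h.2.2.2, ← h'.2.2.2]
  choose n hn using pointwise
  have n_continuous : Continuous n := by
    refine Int.isClosedEmbedding_coe_real.continuous_iff.2 ((h'.1.sub h.1).congr fun x ↦ ?_)
    rw [Pi.sub_apply, hn x, add_sub_cancel_left, Function.comp_apply]
  exact ⟨n 0, fun x ↦ by rw [hn x, PreconnectedSpace.constant inferInstance n_continuous (x := x)]⟩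

lemma eq_of_apply_eq (h : IsOPLift f F) (h' : IsOPLift f F') {p : ℝ} (hp : F p = F' p) :
    F = F' := by
  obtain ⟨n, hn⟩ := h.exists_eq_add_int h'
  have hn0 : (n : ℝ) = 0 := by linarith [hn p]
  exact funext fun x ↦ by rw [hn x, hn0, add_zero]

lemma exists_fixing {p : ℝ} (h : IsOPLift f F) (hp : f p = p) :
    ∃ n : ℤ, F p + n = p := by
  rw [h.2.2.2] at hp
  exact ((coe_circle_eq_iff _ _).1 hp).imp fun _ ↦ Eq.symm

end IsOPLift

lemma IsOPHomeo.continuous {f : Equiv.Perm 𝕊} (h : IsOPHomeo f) : Continuous f := by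
  obtain ⟨F, hF⟩ := h
  have hquot : IsQuotientMap (fun x : ℝ ↦ (x : 𝕊)) := isQuotientMap_quotient_mk'
  rw [hquot.continuous_iff]
  exact ((AddCircle.continuous_mk' 1).comp hF.1).congr fun x ↦ (hF.2.2.2 x).symm

lemma IsC1Diffeo.isOPHomeo {f : Equiv.Perm 𝕊} (h : IsC1Diffeo f) : IsOPHomeo f :=
  h.imp fun _ ↦ And.left

theorem smul_eq_of_exists_fixed {G : Type*} [Group G] [Group.FG G]
    [Subsingleton (G →* Multiplicative ℝ)] [MulAction G 𝕊]
    (hG : ∀ g : G, IsC1Diffeo (MulAction.toPerm g)) {x₀ : 𝕊} (hx₀ : ∀ g : G, g • x₀ = x₀)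
    (g : G) (y : 𝕊) : g • y = y := by
  obtain ⟨p, rfl⟩ := QuotientAddGroup.mk_surjective x₀
  have exists_lift (g : G) :
      ∃ F : ℝ → ℝ, IsOPLift (MulAction.toPerm g) F ∧ ContDiff ℝ 1 F ∧ F p = p := by
    obtain ⟨F, hF, hC1, -⟩ := hG g
    obtain ⟨n, hn⟩ := hF.exists_fixing (hx₀ g)
    exact ⟨_, hF.add_int n, hC1.add contDiff_const, hn⟩
  choose F hF hC1 hp using exists_lift
  have F_one : F 1 = id :=
    (hF 1).eq_of_apply_eq (MulAction.toPerm_one (G := G) (α := 𝕊) ▸ .one) (hp 1)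
  have F_mul (g h : G) : F (g * h) = F g ∘ F h :=
    (hF (g * h)).eq_of_apply_eq ((hF g).mul_toPerm (hF h)) (p := p)
      (by rw [Function.comp_apply, hp, hp, hp])
  let _ : MulAction G ℝ :=
    { smul := F
      one_smul := congrFun F_one
      mul_smul := fun g h ↦ congrFun (F_mul g h) }
  obtain ⟨t, rfl⟩ := QuotientAddGroup.mk_surjective y
  have fixed_line : F g t = t :=
    smul_eq_of_exists_fixed_real hC1 (fun g ↦ (hF g).2.1.monotone) hp g t
  exact ((hF g).2.2.2 t).trans (congrArg _ fixed_line)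

end Lifts

section DisjointInvariantSets

/-- The first point of `D` at or to the right of `x`; meaningful when `D` is closed and has such
points. -/
def nextPoint (D : Set ℝ) (x : ℝ) : ℝ := sInf (D ∩ Set.Ici x)

lemma nextPoint_orderIso {D : Set ℝ} (hD : IsCofinal D) (e : ℝ ≃o ℝ) (he : e ⁻¹' D = D) (x : ℝ) :
    nextPoint D (e x) = e (nextPoint D x) := by
  have image_D : e '' D = D := by
    conv_lhs => rw [← he]
    exact Set.image_preimage_eq D e.surjective
  have himage : e '' (D ∩ Set.Ici x) = D ∩ Set.Ici (e x) := by
    rw [Set.image_inter e.injective, image_D, e.image_Ici]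
  rw [nextPoint, ← himage]
  exact (e.map_csInf' (hD x) ⟨x, fun _ h ↦ h.2⟩).symm

lemma eventually_nextPoint_eq {D : Set ℝ} (hD : IsClosed D) {x : ℝ} (hx : x ∉ D) :
    ∀ᶠ y in 𝓝 x, nextPoint D y = nextPoint D x := by
  obtain ⟨b, c, ⟨hbx, hxc⟩, hmem, hsub⟩ :=
    exists_Icc_mem_subset_of_mem_nhds (hD.isOpen_compl.mem_nhds hx)
  filter_upwards [hmem] with y hy
  have skip_gap {u v z : ℝ} (hz : z ∈ D) (hu : b ≤ u) (hv : v ≤ c) (huz : u ≤ z) : v ≤ z :=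
    hv.trans (lt_of_not_ge fun hzc ↦ hsub ⟨hu.trans huz, hzc⟩ hz).le
  refine congrArg sInf (Set.ext fun z ↦ and_congr_right fun hz ↦ ?_)
  exact ⟨skip_gap hz hy.1 hxc, skip_gap hz hbx hy.2⟩

lemma finite_nextPoint_image {D K : Set ℝ} (hD : IsClosed D) (hK : IsCompact K)
    (hdisj : Disjoint K D) : (nextPoint D '' K).Finite := by
  have : CompactSpace K := isCompact_iff_compactSpace.1 hK
  have hconst : IsLocallyConstant fun x : K ↦ nextPoint D x :=
    (IsLocallyConstant.iff_eventually_eq _).2 fun x ↦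
      continuous_subtype_val.continuousAt.eventually
        (eventually_nextPoint_eq hD (hdisj.notMem_of_mem_left x.2))
  rw [Set.image_eq_range]
  exact hconst.range_finite

lemma isCofinal_preimage_coe {A : Set 𝕊} (hA : A.Nonempty) :
    IsCofinal ((↑) ⁻¹' A : Set ℝ) := by
  obtain ⟨⟨t⟩, ht⟩ := hA
  refine fun x ↦ ⟨t + ⌈x - t⌉, ?_, by linarith [Int.le_ceil (x - t)]⟩
  rwa [Set.mem_preimage, coe_add_int]

theorem finiteIndex_stabilizer_of_disjoint_invariant {G : Type*} [Group G] [MulAction G 𝕊]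
    (hG : ∀ g : G, IsOPHomeo (MulAction.toPerm g)) {A B : Set 𝕊} (hA : IsClosed A)
    (hB : IsClosed B) (hA₀ : A.Nonempty) (hB₀ : B.Nonempty) (hGA : ∀ g : G, ∀ x ∈ A, g • x ∈ A)
    (hGB : ∀ g : G, ∀ x ∈ B, g • x ∈ B) (hdisj : Disjoint A B) :
    ∃ x : 𝕊, (MulAction.stabilizer G x).FiniteIndex := by
  have hcoe : Continuous fun x : ℝ ↦ (x : 𝕊) := AddCircle.continuous_mk' 1
  set D : Set ℝ := (↑) ⁻¹' B
  have hD : IsCofinal D := isCofinal_preimage_coe hB₀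
  have nextPoint_add_int (x : ℝ) (n : ℤ) : nextPoint D (x + n) = nextPoint D x + n := by
    refine nextPoint_orderIso hD (OrderIso.addRight (n : ℝ)) ?_ x
    ext y
    simp only [D, Set.mem_preimage, OrderIso.addRight_apply, coe_add_int]
  have nextPoint_lift {g : G} {F : ℝ → ℝ} (hF : IsOPLift (MulAction.toPerm g) F) (x : ℝ) :
      nextPoint D (F x) = F (nextPoint D x) := by
    refine nextPoint_orderIso hD hF.toOrderIso ?_ x
    ext y
    have hy : g • (y : 𝕊) = (F y : 𝕊) := hF.2.2.2 y
    simp only [D, Set.mem_preimage, hF.toOrderIso_apply, ← hy]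
    exact ⟨fun h ↦ by simpa using hGB g⁻¹ _ h, hGB g _⟩
  set Q : Set 𝕊 := (↑) '' (nextPoint D '' ((↑) ⁻¹' A ∩ Set.Icc 0 1))
  have hQ : Q.Finite := by
    refine (finite_nextPoint_image (hB.preimage hcoe)
      (isCompact_Icc.inter_left (hA.preimage hcoe)) ?_).image _
    exact (hdisj.preimage _).mono_left Set.inter_subset_left
  have mem_Q {x : ℝ} (hx : (x : 𝕊) ∈ A) : (nextPoint D x : 𝕊) ∈ Q := by
    rw [← Int.fract_add_floor x, nextPoint_add_int, coe_add_int]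
    refine Set.mem_image_of_mem _ (Set.mem_image_of_mem _ ⟨?_, ?_⟩)
    · rwa [← Int.fract_add_floor x, coe_add_int] at hx
    · exact ⟨Int.fract_nonneg x, (Int.fract_lt_one x).le⟩
  obtain ⟨⟨t⟩, ht⟩ := hA₀
  refine ⟨nextPoint D t, ⟨?_⟩⟩
  rw [MulAction.index_stabilizer]
  refine Set.ncard_ne_zero_of_mem (MulAction.mem_orbit_self _) (hQ.subset ?_)
  rintro _ ⟨g, rfl⟩
  obtain ⟨F, hF⟩ := hG g
  change MulAction.toPerm g _ ∈ Q
  rw [hF.2.2.2, ← nextPoint_lift hF]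
  exact mem_Q (hF.2.2.2 t ▸ hGA g _ ht)

end DisjointInvariantSets

section RotationNumber

lemma iterate_comp_bounds {α : Type*} [Preorder α] {f g : α → α} (hf : Monotone f)
    (hg : Monotone g) (h : f ∘ g ≤ g ∘ f) (n : ℕ) (x : α) :
    f^[n] (g^[n] x) ≤ (f ∘ g)^[n] x ∧ (f ∘ g)^[n] x ≤ g^[n] (f^[n] x) := by
  induction n generalizing x with
  | zero => exact ⟨le_rfl, le_rfl⟩
  | succ n ih =>
    obtain ⟨lower, upper⟩ := ih (f (g x))
    exact ⟨(hf.iterate n (hg.le_iterate_comp_of_le h n (g x))).trans lower,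
      upper.trans (hg.iterate n (hf.iterate_comp_le_of_le h (n + 1) x))⟩

lemma map_sub_le_map_sub_add_one (f : CircleDeg1Lift) (x y : ℝ) : f y - y ≤ f x - x + 1 := by
  have hyx : y ≤ x + ⌈y - x⌉ := by linarith [Int.le_ceil (y - x)]
  have hmono := f.monotone hyx
  rw [f.map_add_int] at hmono
  linarith [Int.ceil_lt_add_one (y - x)]

theorem translationNumber_mul_of_map_le {f g : CircleDeg1Lift} {O : Set ℝ} (hO : O.Nonempty)
    (hf : Set.MapsTo f O O) (hg : Set.MapsTo g O O) (h : ∀ x ∈ O, f (g x) ≤ g (f x)) :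
    (f * g).translationNumber = f.translationNumber + g.translationNumber := by
  obtain ⟨p, hp⟩ := hO
  have iterates (n : ℕ) :
      (f ^ n) ((g ^ n) p) ≤ ((f * g) ^ n) p ∧ ((f * g) ^ n) p ≤ (g ^ n) ((f ^ n) p) := by
    have key := iterate_comp_bounds (f := hf.restrict f O O) (g := hg.restrict g O O)
      (fun _ _ hxy ↦ f.monotone hxy) (fun _ _ hxy ↦ g.monotone hxy) (fun x ↦ h x x.2) n ⟨p, hp⟩
    rw [show hf.restrict f O O ∘ hg.restrict g O O = (hf.comp hg).restrict (f ∘ g) O O from rfl]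
      at key
    simpa only [← Subtype.coe_le_coe, Set.MapsTo.coe_iterate_restrict, CircleDeg1Lift.coe_pow,
      CircleDeg1Lift.coe_mul] using key
  set defect : ℕ → ℝ := fun n ↦ ((f * g) ^ n) p - p - ((f ^ n) p - p) - ((g ^ n) p - p)
    with defect_def
  have neg_one_le (n : ℕ) : -1 ≤ defect n := by
    linarith [(iterates n).1, map_sub_le_map_sub_add_one (f ^ n) ((g ^ n) p) p, defect_def]
  have le_one (n : ℕ) : defect n ≤ 1 := by
    linarith [(iterates n).2, map_sub_le_map_sub_add_one (g ^ n) p ((f ^ n) p), defect_def]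
  have defect_div : Tendsto (fun n : ℕ ↦ defect n / n) atTop (𝓝 0) :=
    tendsto_bdd_div_atTop_nhds_zero (.of_forall neg_one_le) (.of_forall le_one)
      tendsto_natCast_atTop_atTop
  have hlim := (((f * g).tendsto_translationNumber p).sub (f.tendsto_translationNumber p)).sub
    (g.tendsto_translationNumber p)
  simp only [← sub_div] at hlim
  linarith [tendsto_nhds_unique hlim defect_div]

lemma translationNumber_mul_of_map_le_or_le {f g : CircleDeg1Lift} {O : Set ℝ} (hO : O.Nonempty)
    (hf : Set.MapsTo f O O) (hg : Set.MapsTo g O O)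
    (h : (∀ x ∈ O, f (g x) ≤ g (f x)) ∨ ∀ x ∈ O, g (f x) ≤ f (g x)) :
    (f * g).translationNumber = f.translationNumber + g.translationNumber := by
  rcases h with h | h
  · exact translationNumber_mul_of_map_le hO hf hg h
  · rw [CircleDeg1Lift.translationNumber_eq_of_semiconjBy (mul_assoc g f g).symm, add_comm]
    exact translationNumber_mul_of_map_le hO hg hf h

namespace IsOPLift

variable {f g : Equiv.Perm 𝕊} {F F' : ℝ → ℝ}

lemma translationNumber_add_int (h : IsOPLift f F) (n : ℤ) :
    (h.add_int n).toCircleDeg1Lift.translationNumber =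
      h.toCircleDeg1Lift.translationNumber + n := by
  set T : CircleDeg1Lift := (CircleDeg1Lift.translate (Multiplicative.ofAdd (n : ℝ))).val
  have hT (x : ℝ) : T x = n + x := CircleDeg1Lift.translate_apply _ _
  have hmul : (h.add_int n).toCircleDeg1Lift = h.toCircleDeg1Lift * T := by
    ext x
    rw [CircleDeg1Lift.mul_apply, hT, CircleDeg1Lift.map_int_add, add_comm]
    rfl
  have hcomm : Commute h.toCircleDeg1Lift T := CircleDeg1Lift.commute_iff_commute.2 fun x ↦ by
    rw [hT, hT, CircleDeg1Lift.map_int_add]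
  rw [hmul, CircleDeg1Lift.translationNumber_mul_of_commute hcomm,
    CircleDeg1Lift.translationNumber_translate]

lemma lt_add_one_of_apply_eq (hf : IsOPLift f F) (hg : IsOPLift g F') {z : ℝ} (hz : F z = F' z)
    (x : ℝ) : F x < F' x + 1 := by
  set m := ⌊x - z⌋
  have hm : z + m ≤ x := by linarith [Int.floor_le (x - z)]
  have hm' : x < z + (m + 1 : ℤ) := by push_cast; linarith [Int.lt_floor_add_one (x - z)]
  calc F x < F (z + (m + 1 : ℤ)) := hf.2.1 hm'
    _ = F' (z + m) + 1 := by rw [hf.map_add_int, hg.map_add_int, hz]; push_cast; ring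
    _ ≤ F' x + 1 := by gcongr; exact hg.2.1.monotone hm

lemma apply_eq_of_coe_eq (hf : IsOPLift f F) (hg : IsOPLift g F') {z : ℝ} (hz : F z = F' z)
    {x : ℝ} (hx : f x = g x) : F x = F' x := by
  rw [hf.2.2.2, hg.2.2.2, coe_circle_eq_iff] at hx
  obtain ⟨n, hn⟩ := hx
  have lower := hf.lt_add_one_of_apply_eq hg hz x
  have upper := hg.lt_add_one_of_apply_eq hf hz.symm x
  rw [hn] at lower upper
  have hn_lt : n < 1 := by exact_mod_cast (by linarith : (n : ℝ) < 1)
  have lt_hn : -1 < n := by exact_mod_cast (by linarith : (-1 : ℝ) < n)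
  obtain rfl : n = 0 := by lia
  simpa using hn.symm

end IsOPLift

variable {H : Type*} [Group H] [MulAction H 𝕊] {x₀ : 𝕊}

lemma le_on_orbit_or_le_on_orbit (hfix : ∀ h : H, (∃ y : 𝕊, h • y = y) → h • x₀ = x₀) {h k : H}
    {u v : ℝ → ℝ} (hu : IsOPLift (MulAction.toPerm h) u) (hv : IsOPLift (MulAction.toPerm k) v) :
    (∀ x : ℝ, (x : 𝕊) ∈ MulAction.orbit H x₀ → u x ≤ v x) ∨
      ∀ x : ℝ, (x : 𝕊) ∈ MulAction.orbit H x₀ → v x ≤ u x := by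
  by_cases hagree : ∃ z, u z = v z
  · obtain ⟨z, hz⟩ := hagree
    left
    rintro x ⟨g, hx : g • x₀ = x⟩
    refine (hu.apply_eq_of_coe_eq hv hz ?_).le
    have fixes_z : (h⁻¹ * k) • (z : 𝕊) = z := by
      rw [mul_smul, inv_smul_eq_iff]
      exact (hv.2.2.2 z).trans (hz ▸ (hu.2.2.2 z).symm)
    have fixes_x₀ := hfix (g⁻¹ * (h⁻¹ * k) * g)
      ⟨g⁻¹ • (z : 𝕊), by rw [smul_smul, mul_inv_cancel_right, mul_smul, fixes_z]⟩
    rw [mul_smul, hx, mul_smul, inv_smul_eq_iff, hx, mul_smul, inv_smul_eq_iff] at fixes_x₀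
    exact fixes_x₀.symm
  · by_contra! hcross
    obtain ⟨⟨x, -, hx⟩, y, -, hy⟩ := hcross
    obtain ⟨z, hz⟩ := mem_range_of_exists_le_of_exists_ge (c := 0) (hu.1.sub hv.1)
      ⟨y, (sub_neg.2 hy).le⟩ ⟨x, (sub_pos.2 hx).le⟩
    exact hagree ⟨z, sub_eq_zero.1 hz⟩

lemma translationNumber_mul_of_lifts (hfix : ∀ h : H, (∃ y : 𝕊, h • y = y) → h • x₀ = x₀)
    {h k : H} {u v : ℝ → ℝ} (hu : IsOPLift (MulAction.toPerm h) u)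
    (hv : IsOPLift (MulAction.toPerm k) v) :
    (hu.mul_toPerm hv).toCircleDeg1Lift.translationNumber =
      hu.toCircleDeg1Lift.translationNumber + hv.toCircleDeg1Lift.translationNumber := by
  have mapsTo_orbit {h : H} {w : ℝ → ℝ} (hw : IsOPLift (MulAction.toPerm h) w) :
      Set.MapsTo hw.toCircleDeg1Lift ((↑) ⁻¹' MulAction.orbit H x₀)
        ((↑) ⁻¹' MulAction.orbit H x₀) := by
    intro x hx
    rw [Set.mem_preimage, hw.toCircleDeg1Lift_apply, ← hw.2.2.2 x]
    exact MulAction.mem_orbit_of_mem_orbit h hx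
  have nonempty : ((↑) ⁻¹' MulAction.orbit H x₀ : Set ℝ).Nonempty :=
    (MulAction.nonempty_orbit x₀).preimage QuotientAddGroup.mk_surjective
  have toCircleDeg1Lift_mul : (hu.mul_toPerm hv).toCircleDeg1Lift =
      hu.toCircleDeg1Lift * hv.toCircleDeg1Lift := CircleDeg1Lift.ext fun _ ↦ rfl
  rw [toCircleDeg1Lift_mul]
  exact translationNumber_mul_of_map_le_or_le nonempty (mapsTo_orbit hu) (mapsTo_orbit hv)
    (le_on_orbit_or_le_on_orbit hfix (hu.mul_toPerm hv) (hv.mul_toPerm hu))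

theorem exists_rotationHom (hH : ∀ h : H, IsOPHomeo (MulAction.toPerm h))
    (hfix : ∀ h : H, (∃ y : 𝕊, h • y = y) → h • x₀ = x₀) :
    ∃ φ : H →* Multiplicative 𝕊, ∀ h ∈ φ.ker, ∃ y : 𝕊, h • y = y := by
  choose F hF using hH
  let τ (h : H) : ℝ := (hF h).toCircleDeg1Lift.translationNumber
  have τ_mul (h k : H) : ((τ (h * k) : ℝ) : 𝕊) = τ h + τ k := by
    have hmul := (hF h).mul_toPerm (hF k)
    obtain ⟨n, hn⟩ := hmul.exists_eq_add_int (hF (h * k))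
    have τ_eq : τ (h * k) = τ h + τ k + n := by
      rw [← translationNumber_mul_of_lifts hfix (hF h) (hF k)]
      refine (congrArg _ (CircleDeg1Lift.ext fun x ↦ ?_)).trans (hmul.translationNumber_add_int n)
      exact hn x
    rw [τ_eq, coe_add_int, AddCircle.coe_add]
  refine ⟨MonoidHom.mk' (fun h ↦ Multiplicative.ofAdd (τ h : 𝕊)) fun h k ↦ ?_, fun h hh ↦ ?_⟩
  · rw [τ_mul, ofAdd_add]
  · have τ_zero : ((0 : ℝ) : 𝕊) = (τ h : 𝕊) := Eq.symm hh
    obtain ⟨n, hn⟩ := (coe_circle_eq_iff _ _).1 τ_zero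
    rw [zero_add] at hn
    obtain ⟨y, hy⟩ := ((hF h).toCircleDeg1Lift.translationNumber_eq_int_iff (hF h).1).1 hn
    refine ⟨y, ((hF h).2.2.2 y).trans ?_⟩
    exact ((coe_circle_eq_iff _ _).2 ⟨n, hy⟩).symm

theorem finiteIndex_stabilizer_of_fixes [Group.FG H] [Subsingleton (H →* Multiplicative ℝ)]
    (hH : ∀ h : H, IsOPHomeo (MulAction.toPerm h))
    (hfix : ∀ h : H, (∃ y : 𝕊, h • y = y) → h • x₀ = x₀) :
    (MulAction.stabilizer H x₀).FiniteIndex := by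
  obtain ⟨φ, hφ⟩ := exists_rotationHom hH hfix
  have := finiteIndex_ker_of_commGroup φ
  exact Subgroup.finiteIndex_of_le fun h hh ↦ hfix h (hφ h hh)

end RotationNumber

section CommutingActions

theorem exists_finiteIndex_stabilizer_of_commuting {G H : Type*} [Group G] [Group H] [Group.FG H]
    [Subsingleton (H →* Multiplicative ℝ)] [MulAction G 𝕊] [MulAction H 𝕊] [SMulCommClass G H 𝕊]
    (hG : ∀ g : G, IsOPHomeo (MulAction.toPerm g)) (hH : ∀ h : H, IsOPHomeo (MulAction.toPerm h)) :
    (∃ x : 𝕊, (MulAction.stabilizer G x).FiniteIndex) ∨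
      ∃ x : 𝕊, (MulAction.stabilizer H x).FiniteIndex := by
  by_contra! hno
  let invariantSets : Set (Set 𝕊) := {A | IsClosed A ∧ A.Nonempty ∧ ∀ g : G, ∀ x ∈ A, g • x ∈ A}
  have : Nonempty invariantSets :=
    ⟨⟨Set.univ, isClosed_univ, Set.univ_nonempty, fun _ _ _ ↦ trivial⟩⟩
  have directed : DirectedOn (· ⊇ ·) invariantSets := by
    rintro A ⟨hA, hA₀, hGA⟩ B ⟨hB, hB₀, hGB⟩
    refine ⟨A ∩ B, ⟨hA.inter hB, ?_, fun g x hx ↦ ⟨hGA g x hx.1, hGB g x hx.2⟩⟩,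
      Set.inter_subset_left, Set.inter_subset_right⟩
    by_contra hempty
    obtain ⟨x, hx⟩ := finiteIndex_stabilizer_of_disjoint_invariant hG hA hB hA₀ hB₀ hGA hGB
      (Set.not_nonempty_iff_eq_empty.1 hempty |> Set.disjoint_iff_inter_eq_empty.2)
    exact hno.1 x hx
  obtain ⟨x₀, hx₀⟩ := IsCompact.nonempty_sInter_of_directed_nonempty_isCompact_isClosed directed
    (fun A hA ↦ hA.2.1) (fun A hA ↦ hA.1.isCompact) (fun A hA ↦ hA.1)
  refine hno.2 x₀ (finiteIndex_stabilizer_of_fixes hH fun h hh ↦ ?_)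
  refine hx₀ {y | h • y = y} ⟨isClosed_eq (hH h).continuous continuous_id, hh, fun g x hx ↦ ?_⟩
  rw [Set.mem_ofPred_eq, ← smul_comm g h, hx]

end CommutingActions

section ConjClosure

variable {E O : Type*} [Group E] [Group O]

/-- The subgroup generated by the conjugates of `φ(K)` by `ψ(E)`, for all pairs `(φ, ψ)` in `S`. -/
def conjClosure (S : Set ((E →* O) × (E →* O))) (K : Subgroup E) : Subgroup O :=
  Subgroup.closure {x | ∃ p ∈ S, ∃ q, ∃ u ∈ K, p.2 q * p.1 u * (p.2 q)⁻¹ = x}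

variable {S : Set ((E →* O) × (E →* O))} {K K₀ : Subgroup E} {Λ : Subgroup O}
  {p : (E →* O) × (E →* O)}

lemma conj_mem_conjClosure (hp : p ∈ S) (q : E) {u : E} (hu : u ∈ K) :
    p.2 q * p.1 u * (p.2 q)⁻¹ ∈ conjClosure S K :=
  Subgroup.subset_closure ⟨p, hp, q, u, hu, rfl⟩

lemma fst_mem_conjClosure (hp : p ∈ S) {u : E} (hu : u ∈ K) : p.1 u ∈ conjClosure S K := by
  simpa using conj_mem_conjClosure hp 1 hu

lemma snd_mem_conjClosure (hS : ∀ p ∈ S, p.swap ∈ S) (hp : p ∈ S) {u : E} (hu : u ∈ K) :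
    p.2 u ∈ conjClosure S K :=
  fst_mem_conjClosure (hS p hp) hu

lemma conjClosure_le (hS : ∀ p ∈ S, p.swap ∈ S) (hK₀ : ∀ p ∈ S, K₀ ≤ Λ.comap p.1)
    (hK : ∀ p ∈ S, ∀ c : E ⧸ K₀, K ≤ Λ.comap ((MulAut.conj (p.2 c.out⁻¹)).toMonoidHom.comp p.1)) :
    conjClosure S K ≤ Λ := by
  refine (Subgroup.closure_le _).2 ?_
  rintro _ ⟨p, hp, q, u, hu, rfl⟩
  obtain ⟨k, hk⟩ := QuotientGroup.mk_out_eq_mul K₀ q⁻¹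
  have hq : q = k * ((q⁻¹ : E) : E ⧸ K₀).out⁻¹ := by rw [hk]; group
  have hψk : p.2 k ∈ Λ := hK₀ p.swap (hS p hp) k.2
  have hconj : p.2 ((q⁻¹ : E) : E ⧸ K₀).out⁻¹ * p.1 u * (p.2 ((q⁻¹ : E) : E ⧸ K₀).out⁻¹)⁻¹ ∈ Λ :=
    hK p hp _ hu
  have hmem := mul_mem (mul_mem hψk hconj) (inv_mem hψk)
  rw [hq, map_mul]
  simpa only [mul_assoc, mul_inv_rev, SetLike.mem_coe] using hmem

lemma fg_conjClosure [Group.FG E] [K.FiniteIndex] (hS : ∀ p ∈ S, p.swap ∈ S) (hfin : S.Finite) :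
    (conjClosure S K).FG := by
  have hKfg (f : E →* O) : (K.map f).FG := by
    have := Subgroup.fg_of_index_ne_zero K
    rw [← Group.fg_iff_subgroup_fg, ← K.range_subtype, MonoidHom.map_range]
    infer_instance
  let conj (p : (E →* O) × (E →* O)) (c : E ⧸ K) : E →* O :=
    (MulAut.conj (p.2 c.out⁻¹)).toMonoidHom.comp p.1
  have heq : conjClosure S K = ⨆ p ∈ S, K.map p.1 ⊔ ⨆ c, K.map (conj p c) := by
    refine le_antisymm (conjClosure_le (K₀ := K) hS (fun p hp ↦ ?_) fun p hp c ↦ ?_)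
      (iSup₂_le fun p hp ↦ sup_le ?_ (iSup_le fun c ↦ ?_))
    · exact Subgroup.map_le_iff_le_comap.1 (le_iSup₂_of_le p hp le_sup_left)
    · exact Subgroup.map_le_iff_le_comap.1
        (le_iSup₂_of_le p hp (le_sup_of_le_right (le_iSup (fun c ↦ K.map (conj p c)) c)))
    · exact Subgroup.map_le_iff_le_comap.2 fun u hu ↦ fst_mem_conjClosure hp hu
    · exact Subgroup.map_le_iff_le_comap.2 fun u hu ↦ conj_mem_conjClosure hp _ hu
  rw [heq]
  exact Subgroup.FG.biSup hfin _ fun p _ ↦ (hKfg _).sup (Subgroup.FG.iSup _ fun c ↦ hKfg _)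

lemma exists_conjClosure_le (hS : ∀ p ∈ S, p.swap ∈ S) (hfin : S.Finite) (K : Subgroup E)
    [K.FiniteIndex] (Λ : Subgroup O) [Λ.IsFiniteRelIndex (conjClosure S K)] :
    ∃ K' : Subgroup E, K'.FiniteIndex ∧ conjClosure S K' ≤ Λ := by
  have := hfin.to_subtype
  have finiteIndex_comap (f : E →* O) (hf : K.map f ≤ conjClosure S K) :
      (Λ.comap f).FiniteIndex := by
    have := Subgroup.isFiniteRelIndex_of_le_right Λ hf
    refine ⟨?_⟩
    have h := Subgroup.relIndex_ne_zero_trans (H := Λ.comap f) (K := K) (L := ⊤)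
      (by rw [Subgroup.relIndex_comap]; exact Subgroup.IsFiniteRelIndex.relIndex_ne_zero)
      (by rw [Subgroup.relIndex_top_right]; exact Subgroup.FiniteIndex.index_ne_zero)
    rwa [Subgroup.relIndex_top_right] at h
  let K₀ : Subgroup E := ⨅ p : S, Λ.comap p.1.1
  have : K₀.FiniteIndex := Subgroup.finiteIndex_iInf fun p ↦ finiteIndex_comap _ <|
    Subgroup.map_le_iff_le_comap.2 fun u hu ↦ fst_mem_conjClosure p.2 hu
  let conj (pc : S × (E ⧸ K₀)) : E →* O :=
    (MulAut.conj (pc.1.1.2 pc.2.out⁻¹)).toMonoidHom.comp pc.1.1.1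
  refine ⟨⨅ pc, Λ.comap (conj pc), Subgroup.finiteIndex_iInf fun pc ↦ finiteIndex_comap _ <|
    Subgroup.map_le_iff_le_comap.2 fun u hu ↦ conj_mem_conjClosure pc.1.2 _ hu, ?_⟩
  exact conjClosure_le hS (fun p hp ↦ iInf_le_of_le ⟨p, hp⟩ le_rfl)
    fun p hp c ↦ iInf_le_of_le (⟨p, hp⟩, c) le_rfl

end ConjClosure

section Coboundaries

lemma comp_eq_of_cocycle {X : Type*} [Finite X] (δ ε : Equiv.Perm X) {a D : X → ℝ}
    (hδ : ∀ x, D (δ x) = D x) (hε : ∀ x, D (ε x) = D x + (a (δ x) - a x)) (x : X) :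
    a (δ x) = a x := by
  have := Fintype.ofFinite X
  have hsq (x : X) : (a (δ x) - a x) ^ 2
      = (D (ε x) ^ 2 - D x ^ 2) - 2 * (D (δ x) * a (δ x) - D x * a x) := by
    rw [hδ, hε]; ring
  have hsum : ∑ x, (a (δ x) - a x) ^ 2 = 0 := by
    simp only [hsq, Finset.sum_sub_distrib, ← Finset.mul_sum]
    rw [Equiv.sum_comp ε fun x ↦ D x ^ 2, Equiv.sum_comp δ fun x ↦ D x * a x]
    ring
  have hzero := (Finset.sum_eq_zero_iff_of_nonneg fun _ _ ↦ sq_nonneg _).1 hsum x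
    (Finset.mem_univ x)
  exact sub_eq_zero.1 (pow_eq_zero_iff two_ne_zero |>.1 hzero)

lemma eq_zero_of_coboundary {X : Type*} [Finite X] (δ : Equiv.Perm X) {a A : X → ℝ}
    (ha : ∀ x, a (δ x) = a x) (hA : ∀ x, A (δ x) = A x + a x) (x : X) : a x = 0 := by
  have := Fintype.ofFinite X
  have hsq (x : X) : a x ^ 2 = a (δ x) * A (δ x) - a x * A x := by rw [ha, hA]; ring
  have hsum : ∑ x, a x ^ 2 = 0 := by
    simp only [hsq, Finset.sum_sub_distrib]
    rw [Equiv.sum_comp δ fun x ↦ a x * A x, sub_self]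
  have hzero := (Finset.sum_eq_zero_iff_of_nonneg fun _ _ ↦ sq_nonneg _).1 hsum x
    (Finset.mem_univ x)
  exact pow_eq_zero_iff two_ne_zero |>.1 hzero

variable {E : Type*} [Group E] {d e : E}

lemma map_eq_one_of_coboundaries {M : Type*} [Group M] (α : E →* MulAut M)
    (f : M →* Multiplicative ℝ) {K : Subgroup E} [K.FiniteIndex]
    (hf : ∀ k ∈ K, ∀ m, f (α k m) = f m) {b c₁ c₂ c₃ : M}
    (hd₁ : α d c₁ = c₁) (he₁ : α e c₁ = b * c₁) (hd₂ : α d c₂ = c₂) (he₂ : α e c₂ = α d b * c₂)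
    (hd₃ : α d c₃ = b * c₃) (g : E) : f (α g b) = 1 := by
  let value (m : M) : E ⧸ K → ℝ :=
    Quotient.lift (fun g : E ↦ (f (α g⁻¹ m)).toAdd) fun g h hgh ↦ by
      have h₁ := hf _ (K.inv_mem (QuotientGroup.leftRel_apply.1 hgh)) (α g⁻¹ m)
      rw [← MulAut.mul_apply, ← map_mul, mul_inv_rev, inv_inv, mul_inv_cancel_right] at h₁
      exact congrArg Multiplicative.toAdd h₁.symm
  have value_smul (h : E) (m : M) (x : E ⧸ K) : value (α h m) x = value m (h⁻¹ • x) := by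
    induction x using QuotientGroup.induction_on with | H g =>
    change (f (α g⁻¹ (α h m))).toAdd = (f (α (h⁻¹ * g)⁻¹ m)).toAdd
    rw [← MulAut.mul_apply, ← map_mul, mul_inv_rev, inv_inv]
  have value_mul (m m' : M) (x : E ⧸ K) : value (m * m') x = value m x + value m' x := by
    induction x using QuotientGroup.induction_on with | H g =>
    change (f (α g⁻¹ (m * m'))).toAdd = (f (α g⁻¹ m)).toAdd + (f (α g⁻¹ m')).toAdd
    rw [map_mul, map_mul, toAdd_mul]
  have hinvariant := comp_eq_of_cocycle (X := E ⧸ K) (MulAction.toPerm d⁻¹) (MulAction.toPerm e⁻¹)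
    (a := value b) (D := fun x ↦ value c₂ x - value c₁ x)
    (fun x ↦ by simp only [MulAction.toPerm_apply, ← value_smul, hd₁, hd₂])
    (fun x ↦ by simp only [MulAction.toPerm_apply, ← value_smul, he₁, he₂, value_mul]; ring)
  have hzero := eq_zero_of_coboundary (X := E ⧸ K) (MulAction.toPerm d⁻¹) (A := value c₃) hinvariant
    (fun x ↦ by simp only [MulAction.toPerm_apply, ← value_smul, hd₃, value_mul]; ring)
  simpa [value] using hzero (QuotientGroup.mk g⁻¹)

variable {O : Type*} [Group O]

/-- The largest subgroup of `G` normalized by the range of `ψ`. -/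
def conjCore (ψ : E →* O) (G : Subgroup O) : Subgroup O :=
  ⨅ g, G.comap (MulAut.conj (ψ g)).toMonoidHom

variable {ψ : E →* O} {G : Subgroup O} {b : O}

lemma mem_conjCore : b ∈ conjCore ψ G ↔ ∀ g, ψ g * b * (ψ g)⁻¹ ∈ G :=
  Subgroup.mem_iInf

lemma conjCore_le : conjCore ψ G ≤ G := fun b hb ↦ by simpa using mem_conjCore.1 hb 1

lemma conj_mem_conjCore (g : E) (hb : b ∈ conjCore ψ G) : ψ g * b * (ψ g)⁻¹ ∈ conjCore ψ G :=
  mem_conjCore.2 fun h ↦ by simpa [mul_assoc] using mem_conjCore.1 hb (h * g)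

/-- The action of `E` on `conjCore ψ G` by conjugation through `ψ`. -/
def conjCoreAction (ψ : E →* O) (G : Subgroup O) : E →* MulAut (conjCore ψ G) :=
  (Subgroup.normalizerMonoidHom (conjCore ψ G)).comp <|
    ψ.codRestrict _ fun g ↦ Subgroup.mem_normalizer_iff.2 fun b ↦
      ⟨conj_mem_conjCore g, fun hb ↦ by simpa [mul_assoc] using conj_mem_conjCore g⁻¹ hb⟩

/-- In additive notation for the conjugation action of `E` through `ψ`: `b = e • c - c` for some
`c ∈ G` fixed by `d`. -/
def IsPartialCoboundary (ψ : E →* O) (G : Subgroup O) (d e : E) (b : O) : Prop :=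
  ∃ c ∈ G, ψ d * c * (ψ d)⁻¹ = c ∧ ψ e * c * (ψ e)⁻¹ = b * c

lemma IsPartialCoboundary.exists_mem_conjCore (h : IsPartialCoboundary ψ G d e b)
    (hde : Subgroup.closure {d, e} = ⊤) (hb : b ∈ conjCore ψ G) :
    ∃ c : conjCore ψ G, conjCoreAction ψ G d c = c ∧ conjCoreAction ψ G e c = ⟨b, hb⟩ * c := by
  obtain ⟨c, hcG, hd, he⟩ := h
  suffices hc : c ∈ conjCore ψ G from ⟨⟨c, hc⟩, Subtype.ext hd, Subtype.ext he⟩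
  have step_iff : ∀ y ∈ ({d, e} : Set E), ∀ g,
      ψ (g * y) * c * (ψ (g * y))⁻¹ ∈ G ↔ ψ g * c * (ψ g)⁻¹ ∈ G := by
    intro y hy g
    have hconj : ψ (g * y) * c * (ψ (g * y))⁻¹ = ψ g * (ψ y * c * (ψ y)⁻¹) * (ψ g)⁻¹ := by
      simp only [map_mul, mul_inv_rev, mul_assoc]
    rcases hy with rfl | rfl
    · rw [hconj, hd]
    · have hsplit : ψ g * (b * c) * (ψ g)⁻¹ = (ψ g * b * (ψ g)⁻¹) * (ψ g * c * (ψ g)⁻¹) := by group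
      rw [hconj, he, hsplit, Subgroup.mul_mem_cancel_left _ (mem_conjCore.1 hb g)]
  refine mem_conjCore.2 fun g ↦ ?_
  induction (hde ▸ Subgroup.mem_top g : g ∈ Subgroup.closure {d, e})
    using Subgroup.closure_induction_right with
  | one => simpa using hcG
  | mul_right g _ y hy ih => exact (step_iff y hy g).2 ih
  | mul_inv_cancel g _ y hy ih => exact (step_iff y hy _).1 (by rwa [inv_mul_cancel_right])

theorem map_conj_eq_one_of_isPartialCoboundary (hde : Subgroup.closure {d, e} = ⊤)
    {K : Subgroup E} [K.FiniteIndex] (hK : K ≤ G.comap ψ) (f : G →* Multiplicative ℝ)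
    (hb : b ∈ conjCore ψ G) (h₁ : IsPartialCoboundary ψ G d e b)
    (h₂ : IsPartialCoboundary ψ G d e (ψ d * b * (ψ d)⁻¹)) (h₃ : IsPartialCoboundary ψ G e d b)
    (g : E) : f ⟨ψ g * b * (ψ g)⁻¹, mem_conjCore.1 hb g⟩ = 1 := by
  obtain ⟨c₁, hd₁, he₁⟩ := h₁.exists_mem_conjCore hde hb
  obtain ⟨c₂, hd₂, he₂⟩ := h₂.exists_mem_conjCore hde (conj_mem_conjCore d hb)
  obtain ⟨c₃, -, hd₃⟩ := h₃.exists_mem_conjCore (by rwa [Set.pair_comm]) hb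
  refine map_eq_one_of_coboundaries (conjCoreAction ψ G) (f.comp (Subgroup.inclusion conjCore_le))
    (K := K) (fun k hk m ↦ ?_) hd₁ he₁ hd₂ he₂ hd₃ g
  have hconj : Subgroup.inclusion conjCore_le (conjCoreAction ψ G k m)
      = ⟨ψ k, hK hk⟩ * Subgroup.inclusion conjCore_le m * ⟨ψ k, hK hk⟩⁻¹ :=
    rfl
  rw [MonoidHom.comp_apply, hconj, map_mul, map_mul, map_inv, mul_inv_cancel_comm,
    MonoidHom.comp_apply]

end Coboundaries

section Transvections

variable {ι : Type*} [DecidableEq ι]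

/-- The endomorphism of a free group killing the generator `i`. Its fixed points are the words
not involving `i`. -/
def deleteGen (i : ι) : FreeGroup ι →* FreeGroup ι :=
  FreeGroup.lift (Function.update FreeGroup.of i 1)

lemma deleteGen_of_self (i : ι) : deleteGen i (.of i) = 1 := by
  simp [deleteGen]

lemma deleteGen_of_of_ne {i j : ι} (h : j ≠ i) : deleteGen i (.of j) = .of j := by
  simp [deleteGen, h]

lemma deleteGen_map {κ : Type*} {i : ι} {α : κ → ι} (h : ∀ s, α s ≠ i) (w : FreeGroup κ) :
    deleteGen i (FreeGroup.map α w) = FreeGroup.map α w := by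
  suffices (deleteGen i).comp (FreeGroup.map α) = FreeGroup.map α from DFunLike.congr_fun this w
  ext s
  simp [deleteGen_of_of_ne (h s)]

lemma deleteGen_comm (i j : ι) (w : FreeGroup ι) :
    deleteGen i (deleteGen j w) = deleteGen j (deleteGen i w) := by
  suffices (deleteGen i).comp (deleteGen j) = (deleteGen j).comp (deleteGen i) from
    DFunLike.congr_fun this w
  ext k
  obtain rfl | hi := eq_or_ne k i <;> obtain rfl | hj := eq_or_ne k j <;>
    simp [deleteGen_of_self, deleteGen_of_of_ne, *]

/-- The endomorphism of a free group sending the generator `i` to `v'⁻¹ * i`, where `v'` is `v` with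
`i` deleted, and fixing the other generators. -/
def transvectionHom (i : ι) (v : FreeGroup ι) : FreeGroup ι →* FreeGroup ι :=
  FreeGroup.lift (Function.update FreeGroup.of i ((deleteGen i v)⁻¹ * .of i))

lemma transvectionHom_of_self (i : ι) (v : FreeGroup ι) :
    transvectionHom i v (.of i) = (deleteGen i v)⁻¹ * .of i := by
  simp [transvectionHom]

lemma transvectionHom_of_of_ne {i j : ι} (h : j ≠ i) (v : FreeGroup ι) :
    transvectionHom i v (.of j) = .of j := by
  simp [transvectionHom, h]

lemma transvectionHom_deleteGen (i : ι) (v w : FreeGroup ι) :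
    transvectionHom i v (deleteGen i w) = deleteGen i w := by
  suffices (transvectionHom i v).comp (deleteGen i) = deleteGen i from DFunLike.congr_fun this w
  ext j
  obtain rfl | h := eq_or_ne j i
  · simp [deleteGen_of_self]
  · simp [deleteGen_of_of_ne h, transvectionHom_of_of_ne h]

lemma transvectionHom_one (i : ι) : transvectionHom i 1 = MonoidHom.id _ := by
  ext j
  obtain rfl | h := eq_or_ne j i
  · simp [transvectionHom_of_self]
  · simp [transvectionHom_of_of_ne h]

lemma transvectionHom_mul (i : ι) (v w : FreeGroup ι) :
    transvectionHom i (v * w) = (transvectionHom i v).comp (transvectionHom i w) := by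
  ext j
  obtain rfl | h := eq_or_ne j i
  · simp [transvectionHom_of_self, transvectionHom_deleteGen, mul_assoc]
  · simp [transvectionHom_of_of_ne h]

/-- The automorphisms of a free group multiplying the generator `i` on the left by the inverse of a
word and fixing the other generators. The inverse makes this a homomorphism in the word, of which
only the image under `deleteGen i` matters. -/
def transvection (i : ι) : FreeGroup ι →* MulAut (FreeGroup ι) where
  toFun v := (transvectionHom i v).toMulEquiv (transvectionHom i v⁻¹)
    (by rw [← transvectionHom_mul, inv_mul_cancel, transvectionHom_one])
    (by rw [← transvectionHom_mul, mul_inv_cancel, transvectionHom_one])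
  map_one' := by
    ext
    simp [transvectionHom_one]
  map_mul' v w := by
    ext
    simp [transvectionHom_mul]

lemma transvection_apply (i : ι) (v w : FreeGroup ι) :
    transvection i v w = transvectionHom i v w :=
  rfl

lemma transvection_apply_eq_self {i : ι} {w : FreeGroup ι} (hw : deleteGen i w = w)
    (v : FreeGroup ι) : transvection i v w = w := by
  rw [← hw]
  exact transvectionHom_deleteGen i v w

lemma deleteGen_transvection {i j : ι} (hij : i ≠ j) {w : FreeGroup ι} (hw : deleteGen i w = w)
    (v : FreeGroup ι) : deleteGen i (transvection j w v) = transvection j w (deleteGen i v) := by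
  suffices (deleteGen i).comp (transvectionHom j w) = (transvectionHom j w).comp (deleteGen i) from
    DFunLike.congr_fun this v
  ext k
  obtain rfl | hi := eq_or_ne k i
  · simp [deleteGen_of_self, transvectionHom_of_of_ne hij]
  obtain rfl | hj := eq_or_ne k j
  · simp [deleteGen_of_of_ne hi, transvectionHom_of_self, deleteGen_comm i k, hw]
  · simp [deleteGen_of_of_ne hi, transvectionHom_of_of_ne hj]

lemma conj_transvection {i j : ι} (hij : i ≠ j) (v : FreeGroup ι) {w : FreeGroup ι}
    (hw : deleteGen i w = w) :
    transvection j w * transvection i v * (transvection j w)⁻¹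
      = transvection i (transvection j w v) := by
  rw [mul_inv_eq_iff_eq_mul]
  suffices (transvectionHom j w).comp (transvectionHom i v)
      = (transvectionHom i (transvection j w v)).comp (transvectionHom j w) from
    MulEquiv.ext fun x ↦ DFunLike.congr_fun this x
  ext k
  simp only [MonoidHom.comp_apply]
  obtain rfl | hk := eq_or_ne k i
  · rw [transvectionHom_of_of_ne hij, transvectionHom_of_self, transvectionHom_of_self,
      deleteGen_transvection hij hw, map_mul, map_inv, transvectionHom_of_of_ne hij,
      transvection_apply]
  · have hfree : deleteGen i (transvection j w (.of k)) = transvection j w (.of k) := by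
      rw [deleteGen_transvection hij hw, deleteGen_of_of_ne hk]
    rw [transvectionHom_of_of_ne hk]
    exact (transvection_apply_eq_self hfree _).symm

lemma commute_transvection {i j : ι} (hij : i ≠ j) {v w : FreeGroup ι} (hv : deleteGen j v = v)
    (hw : deleteGen i w = w) : Commute (transvection i v) (transvection j w) := by
  have h := conj_transvection hij v hw
  rw [transvection_apply_eq_self hv, mul_inv_eq_iff_eq_mul] at h
  exact h.symm

lemma isPartialCoboundary_transvection {κ : Type*} {β : κ → ι} {d e : κ} {i : ι}
    (hde : β d ≠ β e) (hie : i ≠ β e) {w : FreeGroup ι} (hiw : deleteGen i w = w)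
    (hew : deleteGen (β e) w = w) {G : Subgroup (MulAut (FreeGroup ι))}
    (hG : transvection (β e) w ∈ G) :
    IsPartialCoboundary ((transvection i).comp (FreeGroup.map β)) G (.of d) (.of e)
      (transvection i w) := by
  refine ⟨transvection (β e) w, hG, ?_, ?_⟩ <;>
    simp only [MonoidHom.comp_apply, FreeGroup.map.of]
  · have hd := conj_transvection hie (.of (β d)) hiw
    rw [transvection_apply_eq_self (deleteGen_of_of_ne hde), mul_inv_eq_iff_eq_mul] at hd
    rw [← hd, mul_inv_cancel_right]
  · have he := conj_transvection hie (.of (β e)) hiw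
    rw [transvection_apply, transvectionHom_of_self, hew, map_mul, map_inv] at he
    rw [mul_inv_eq_iff_eq_mul] at he ⊢
    rw [mul_assoc, he]
    group

lemma transvection_notMem_range_conj {i j : ι} (hij : i ≠ j) {m : ℕ} (hm : m ≠ 0) :
    transvection i (.of j ^ m) ∉ (MulAut.conj : FreeGroup ι →* _).range := by
  rintro ⟨g, hg⟩
  let exponentSum : FreeGroup ι →* Multiplicative ℤ :=
    FreeGroup.lift (Function.update 1 j (.ofAdd 1))
  have hexp := congrArg exponentSum (DFunLike.congr_fun hg (.of i))
  rw [transvection_apply, transvectionHom_of_self, map_pow, deleteGen_of_of_ne hij.symm,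
    MulAut.conj_apply, map_mul, map_mul, map_inv, mul_inv_cancel_comm, map_mul, map_inv,
    right_eq_mul, inv_eq_one, map_pow] at hexp
  simp [exponentSum, ← ofAdd_nsmul, hm] at hexp

end Transvections

section TransvectionPairs

/-- Index type of a configuration of five generators: a target `none`, two generators
`some (inl s)` for `s : Bool` and two generators `some (inr s)`. -/
abbrev ConfigIndex : Type := Option (Bool ⊕ Bool)

/-- The conjugate of `u`, in the first two of four free generators, by `q`, in the last two. -/
def conjWord (q u : FreeGroup Bool) : FreeGroup (Bool ⊕ Bool) :=
  FreeGroup.map Sum.inr q * FreeGroup.map Sum.inl u * (FreeGroup.map Sum.inr q)⁻¹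

variable {ι : Type*} [DecidableEq ι]

/-- The two homomorphisms from the free group of rank two to the transvections of the target of
the configuration `t`, by words in its first, respectively last, two generators. -/
def transvectionPair (t : ConfigIndex → ι) :
    (FreeGroup Bool →* MulAut (FreeGroup ι)) × (FreeGroup Bool →* MulAut (FreeGroup ι)) :=
  ((transvection (t none)).comp (FreeGroup.map fun s ↦ t (some (.inl s))),
    (transvection (t none)).comp (FreeGroup.map fun s ↦ t (some (.inr s))))

lemma conj_transvectionPair (t : ConfigIndex → ι) (q u : FreeGroup Bool) :
    (transvectionPair t).2 q * (transvectionPair t).1 u * ((transvectionPair t).2 q)⁻¹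
      = transvection (t none) (FreeGroup.map (fun s ↦ t (some s)) (conjWord q u)) := by
  simp only [transvectionPair, conjWord, map_mul, map_inv, MonoidHom.comp_apply, FreeGroup.map.comp,
    Function.comp_def]

/-- The pairs of homomorphisms attached to the permutations of a configuration. -/
def transvectionPairs (x : ConfigIndex ↪ ι) :
    Set ((FreeGroup Bool →* MulAut (FreeGroup ι)) × (FreeGroup Bool →* MulAut (FreeGroup ι))) :=
  Set.range fun σ : Equiv.Perm ConfigIndex ↦ transvectionPair (x ∘ σ)

lemma finite_transvectionPairs (x : ConfigIndex ↪ ι) : (transvectionPairs x).Finite :=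
  Set.finite_range _

lemma swap_mem_transvectionPairs (x : ConfigIndex ↪ ι) :
    ∀ p ∈ transvectionPairs x, p.swap ∈ transvectionPairs x := by
  rintro _ ⟨σ, rfl⟩
  exact ⟨(Equiv.optionCongr (Equiv.sumComm Bool Bool)).trans σ, rfl⟩

variable {x y : ConfigIndex ↪ ι} {K L : Subgroup (FreeGroup Bool)}

lemma exists_transvection_mem_conjClosure (x : ConfigIndex ↪ ι) (K : Subgroup (FreeGroup Bool))
    [K.FiniteIndex] : ∃ i j, i ≠ j ∧ ∃ m ≠ 0,
      transvection i (.of j ^ m) ∈ conjClosure (transvectionPairs x) K := by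
  obtain ⟨m, hm, -, hmK⟩ := Subgroup.exists_pow_mem_of_index_ne_zero
    (Subgroup.FiniteIndex.index_ne_zero (H := K)) (.of true)
  refine ⟨x none, x (some (.inl true)), x.injective.ne (by simp), m, hm.ne', ?_⟩
  have hp : transvectionPair x ∈ transvectionPairs x := ⟨1, rfl⟩
  simpa [transvectionPair] using fst_mem_conjClosure hp hmK

lemma commute_of_mem_conjClosure_transvectionPairs (hxy : ∀ s t, x s ≠ y t)
    {a b : MulAut (FreeGroup ι)} (ha : a ∈ conjClosure (transvectionPairs x) K)
    (hb : b ∈ conjClosure (transvectionPairs y) L) : Commute a b := by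
  suffices hle : conjClosure (transvectionPairs x) K
      ≤ Subgroup.centralizer (conjClosure (transvectionPairs y) L) from
    (Subgroup.mem_centralizer_iff.1 (hle ha) b hb).symm
  rw [conjClosure, conjClosure, Subgroup.closure_le, Subgroup.centralizer_closure]
  rintro _ ⟨_, ⟨σ, rfl⟩, q, u, -, rfl⟩
  rw [SetLike.mem_coe, Subgroup.mem_centralizer_iff]
  rintro _ ⟨_, ⟨τ, rfl⟩, r, v, -, rfl⟩
  rw [conj_transvectionPair, conj_transvectionPair]
  exact (commute_transvection (hxy _ _) (deleteGen_map (fun _ ↦ hxy _ _) _)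
    (deleteGen_map (fun _ ↦ (hxy _ _).symm) _)).symm

-- Exchanging the target with the generator `inr s` turns the conjugate into a transvection of
-- that generator by the same word, which is the required element of the group.
lemma isPartialCoboundary_transvectionPair (σ : Equiv.Perm ConfigIndex) {u : FreeGroup Bool}
    (hu : u ∈ K) (s : Bool) (n : ℤ) :
    let p := transvectionPair (x ∘ σ)
    IsPartialCoboundary p.2 (conjClosure (transvectionPairs x) K) (.of !s) (.of s)
      (p.2 (.of (!s) ^ n) * p.1 u * (p.2 (.of (!s) ^ n))⁻¹) := by
  intro p
  have hne {a b : ConfigIndex} (h : a ≠ b) : (x ∘ σ) a ≠ (x ∘ σ) b :=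
    (x.injective.comp σ.injective).ne h
  let τ : Equiv.Perm ConfigIndex := (Equiv.swap none (some (.inr s))).trans σ
  have hτ : transvectionPair (x ∘ τ) ∈ transvectionPairs x := Set.mem_range_self τ
  have hmem := conj_mem_conjClosure hτ (.of (!s) ^ n) hu
  have hword : FreeGroup.map (fun a ↦ (x ∘ τ) (some a)) (conjWord (.of (!s) ^ n) u)
      = FreeGroup.map (fun a ↦ (x ∘ σ) (some a)) (conjWord (.of (!s) ^ n) u) := by
    simp [conjWord, τ, FreeGroup.map.comp, Function.comp_def, Equiv.swap_apply_of_ne_of_ne]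
  have htarget : (x ∘ τ) none = (x ∘ σ) (some (.inr s)) := by simp [τ]
  rw [conj_transvectionPair, hword, htarget] at hmem
  rw [conj_transvectionPair]
  refine isPartialCoboundary_transvection (hne (by simp)) (hne (by simp))
    (deleteGen_map (fun _ ↦ hne (by simp)) _) ?_ hmem
  have hu' := deleteGen_map (i := x (σ (some (.inr s)))) (α := fun a ↦ x (σ (some (.inl a))))
    (fun _ ↦ hne (by simp)) u
  have hq := deleteGen_of_of_ne (i := x (σ (some (.inr s)))) (j := x (σ (some (.inr (!s)))))
    (hne (by simp))
  simp [conjWord, FreeGroup.map.comp, Function.comp_def, hu', hq]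

lemma closure_of_true_false :
    Subgroup.closure {FreeGroup.of true, FreeGroup.of false} = (⊤ : Subgroup (FreeGroup Bool)) := by
  rw [← FreeGroup.closure_range_of, Bool.range_eq, Set.pair_comm]

theorem subsingleton_monoidHom_conjClosure_transvectionPairs (x : ConfigIndex ↪ ι)
    (K : Subgroup (FreeGroup Bool)) [K.FiniteIndex] :
    Subsingleton (conjClosure (transvectionPairs x) K →* Multiplicative ℝ) := by
  refine subsingleton_of_forall_eq 1 fun f ↦ MonoidHom.ext fun a ↦ ?_
  suffices hle : conjClosure (transvectionPairs x) K ≤ f.ker.map (Subgroup.subtype _) by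
    obtain ⟨a', ha', haa'⟩ := hle a.2
    rwa [Subtype.ext haa'] at ha'
  refine (Subgroup.closure_le _).2 ?_
  rintro _ ⟨_, ⟨σ, rfl⟩, q, u, hu, rfl⟩
  set p := transvectionPair (x ∘ σ)
  have hp : p ∈ transvectionPairs x := Set.mem_range_self σ
  have hK : K ≤ (conjClosure (transvectionPairs x) K).comap p.2 := fun k hk ↦
    snd_mem_conjClosure (swap_mem_transvectionPairs x) hp hk
  have hcore : p.1 u ∈ conjCore p.2 (conjClosure (transvectionPairs x) K) :=
    mem_conjCore.2 fun g ↦ conj_mem_conjClosure hp g hu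
  exact ⟨_, map_conj_eq_one_of_isPartialCoboundary closure_of_true_false hK f hcore
    (by simpa using isPartialCoboundary_transvectionPair σ hu false 0)
    (by simpa using isPartialCoboundary_transvectionPair σ hu false 1)
    (by simpa using isPartialCoboundary_transvectionPair σ hu true 0) q, rfl⟩

end TransvectionPairs

section CircleActions

variable {ι : Type*} [DecidableEq ι] {Γ : Subgroup (MulAut (FreeGroup ι))} [MulAction Γ 𝕊]

lemma exists_transvection_smul_eq_of_finiteIndex
    (hΓ : ∀ g : Γ, IsC1Diffeo (MulAction.toPerm g)) {x : ConfigIndex ↪ ι}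
    {K : Subgroup (FreeGroup Bool)} [K.FiniteIndex] (hK : conjClosure (transvectionPairs x) K ≤ Γ)
    {x₀ : 𝕊} (hx₀ : ((MulAction.stabilizer Γ x₀).comap (Subgroup.inclusion hK)).FiniteIndex) :
    ∃ i j, i ≠ j ∧ ∃ m ≠ 0, ∃ h : transvection i (.of j ^ m) ∈ Γ,
      ∀ y : 𝕊, (⟨_, h⟩ : Γ) • y = y := by
  let Λ := (MulAction.stabilizer Γ x₀).map Γ.subtype
  have : Λ.IsFiniteRelIndex (conjClosure (transvectionPairs x) K) :=
    Subgroup.isFiniteRelIndex_iff_finiteIndex.2 <| Subgroup.finiteIndex_of_le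
      (H := (MulAction.stabilizer Γ x₀).comap (Subgroup.inclusion hK)) fun g hg ↦ ⟨_, hg, rfl⟩
  obtain ⟨K', _, hK'⟩ := exists_conjClosure_le (swap_mem_transvectionPairs x)
    (finite_transvectionPairs x) K Λ
  have hΛΓ : Λ ≤ Γ := Subgroup.map_subtype_le _
  let _ : MulAction (conjClosure (transvectionPairs x) K') 𝕊 :=
    .compHom 𝕊 (Subgroup.inclusion (hK'.trans hΛΓ))
  have hfix (g : conjClosure (transvectionPairs x) K') : g • x₀ = x₀ := by
    obtain ⟨g', hg', hgg'⟩ := hK' g.2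
    have hg : Subgroup.inclusion (hK'.trans hΛΓ) g = g' := Subtype.ext hgg'.symm
    exact (congrArg (· • x₀) hg).trans hg'
  have := (Group.fg_iff_subgroup_fg _).2
    (fg_conjClosure (K := K') (swap_mem_transvectionPairs x) (finite_transvectionPairs x))
  have := subsingleton_monoidHom_conjClosure_transvectionPairs x K'
  obtain ⟨i, j, hij, m, hm, hmem⟩ := exists_transvection_mem_conjClosure x K'
  exact ⟨i, j, hij, m, hm, hΛΓ (hK' hmem), smul_eq_of_exists_fixed
    (G := conjClosure (transvectionPairs x) K') (fun g ↦ hΓ _) hfix ⟨_, hmem⟩⟩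

theorem exists_transvection_smul_eq [Γ.FiniteIndex]
    (hΓ : ∀ g : Γ, IsC1Diffeo (MulAction.toPerm g)) {x y : ConfigIndex ↪ ι}
    (hxy : ∀ s t, x s ≠ y t) :
    ∃ i j, i ≠ j ∧ ∃ m ≠ 0, ∃ h : transvection i (.of j ^ m) ∈ Γ,
      ∀ z : 𝕊, (⟨_, h⟩ : Γ) • z = z := by
  have exists_le (x : ConfigIndex ↪ ι) :
      ∃ K : Subgroup (FreeGroup Bool), K.FiniteIndex ∧ conjClosure (transvectionPairs x) K ≤ Γ :=
    have : Γ.IsFiniteRelIndex (conjClosure (transvectionPairs x) ⊤) :=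
      Subgroup.isFiniteRelIndex_of_finiteIndex
    exists_conjClosure_le (swap_mem_transvectionPairs x) (finite_transvectionPairs x) ⊤ Γ
  obtain ⟨K, _, hK⟩ := exists_le x
  obtain ⟨L, _, hL⟩ := exists_le y
  let _ : MulAction (conjClosure (transvectionPairs x) K) 𝕊 := .compHom 𝕊 (Subgroup.inclusion hK)
  let _ : MulAction (conjClosure (transvectionPairs y) L) 𝕊 := .compHom 𝕊 (Subgroup.inclusion hL)
  have : SMulCommClass (conjClosure (transvectionPairs x) K) (conjClosure (transvectionPairs y) L)
      𝕊 := by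
    refine ⟨fun g h z ↦ ?_⟩
    have hcomm : Commute (Subgroup.inclusion hK g) (Subgroup.inclusion hL h) :=
      Subtype.ext (commute_of_mem_conjClosure_transvectionPairs hxy g.2 h.2)
    exact (mul_smul _ _ z).symm.trans ((congrArg (· • z) hcomm.eq).trans (mul_smul _ _ z))
  have := (Group.fg_iff_subgroup_fg _).2
    (fg_conjClosure (K := L) (swap_mem_transvectionPairs y) (finite_transvectionPairs y))
  have := subsingleton_monoidHom_conjClosure_transvectionPairs y L
  obtain ⟨x₀, hx₀⟩ | ⟨x₀, hx₀⟩ := exists_finiteIndex_stabilizer_of_commuting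
    (G := conjClosure (transvectionPairs x) K) (H := conjClosure (transvectionPairs y) L)
    (fun g ↦ (hΓ _).isOPHomeo) (fun h ↦ (hΓ _).isOPHomeo)
  · exact exists_transvection_smul_eq_of_finiteIndex hΓ hK hx₀
  · exact exists_transvection_smul_eq_of_finiteIndex hΓ hL hx₀

end CircleActions

end

/-- For `n ≥ 10`, any orientation preserving `C¹` action of an arbitrary
finite index subgroup `Γ` of `Out(Fₙ)` on the circle cannot be faithful. -/
theorem out_finite_index_action_not_faithful
    (n : ℕ) (hn : 10 ≤ n)
    (Γ : Subgroup (OutF n)) [Γ.FiniteIndex]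
    (ρ : Γ →* Equiv.Perm 𝕊) (hρ : ∀ g : Γ, IsC1Diffeo (ρ g)) :
    ¬ Function.Injective ρ := by
  intro hinj
  let π : AutF n →* OutF n := QuotientGroup.mk' (InnF n)
  let _ : MulAction (Γ.comap π) 𝕊 := .compHom 𝕊 (ρ.comp (π.subgroupComap Γ))
  have : (Γ.comap π).FiniteIndex :=
    ⟨by rw [Γ.index_comap_of_surjective (QuotientGroup.mk'_surjective _)]
        exact Subgroup.FiniteIndex.index_ne_zero⟩
  have hC1 (g : Γ.comap π) : IsC1Diffeo (MulAction.toPerm g) := by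
    convert hρ (π.subgroupComap Γ g)
    ext
    rfl
  obtain ⟨xy⟩ : Nonempty (ConfigIndex ⊕ ConfigIndex ↪ Fin n) :=
    Function.Embedding.nonempty_of_card_le (by simpa using hn)
  obtain ⟨i, j, hij, m, hm, hmem, htrivial⟩ := exists_transvection_smul_eq hC1
    (x := .trans .inl xy) (y := .trans .inr xy) fun s t ↦ xy.injective.ne Sum.inl_ne_inr
  have hker : π.subgroupComap Γ ⟨_, hmem⟩ = 1 :=
    hinj ((Equiv.ext htrivial).trans (map_one ρ).symm)
  exact transvection_notMem_range_conj hij hm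
    ((QuotientGroup.eq_one_iff (N := InnF n) _).1 (congrArg Subtype.val hker))
end
end
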